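/- arXiv:1710.10322 — 7 statements merged into one kernel-verified Lean document; each statement's English description precedes it below -/
import Mathlib

section
/- Let q be a prime power, let d ≥ 1 and g ≥ d+1 be integers, and let X_1, …, X_g be mutually disjoint subsets of the projective space PG(d, q) = ℙ𝔽_q^d, each of size t. If q < (g/d − 1)·t − 4, then there exists a hyperplane H in ℙ𝔽_q^d that intersects at least d+1 distinct sets among X_1, …, X_g. -/
open Classical in
lemma card_annih {F V : Type*} [Field F] [Fintype F] [AddCommGroup V] [Module F V]
    [FiniteDimensional F V] [Fintype (Module.Dual F V)] (s : Set V) :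
    ((((Finset.univ : Finset (Module.Dual F V)).filter
      (fun f => f ≠ 0 ∧ ∀ v ∈ s, f v = 0)).card : ℕ) : ℝ) =
      (Fintype.card F : ℝ) ^ (Module.finrank F V - Module.finrank F (Submodule.span F s)) - 1 := by
  have h1 := Subspace.finrank_add_finrank_dualAnnihilator_eq (Submodule.span F s)
  have h2 : Nat.card (Submodule.span F s).dualAnnihilator =
      Fintype.card F ^ (Module.finrank F V - Module.finrank F (Submodule.span F s)) := by
    rw [Module.natCard_eq_pow_finrank (K := F), Nat.card_eq_fintype_card]
    congr 1
    omega
  have h3 : (Finset.univ : Finset (Module.Dual F V)).filter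
      (fun f => f ≠ 0 ∧ ∀ v ∈ s, f v = 0) =
      (Finset.univ.filter (fun f => f ∈ (Submodule.span F s).dualAnnihilator)).erase 0 := by
    ext f
    simp only [Finset.mem_filter, Finset.mem_univ, true_and, Finset.mem_erase]
    refine and_congr_right fun _ => ?_
    rw [Submodule.mem_dualAnnihilator]
    constructor
    · intro h w hw
      have : Submodule.span F s ≤ LinearMap.ker f := Submodule.span_le.2 h
      exact this hw
    · intro h v hv
      exact h v (Submodule.subset_span hv)
  have h4 : (Finset.univ.filter (fun f => f ∈ (Submodule.span F s).dualAnnihilator)).card =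
      Fintype.card F ^ (Module.finrank F V - Module.finrank F (Submodule.span F s)) := by
    rw [← h2, Nat.card_eq_fintype_card, Fintype.card_subtype]
  have h5 : (0 : Module.Dual F V) ∈
      Finset.univ.filter (fun f => f ∈ (Submodule.span F s).dualAnnihilator) := by
    simp
  rw [h3, ← Finset.card_erase_add_one h5] at *
  have : (((Finset.univ.filter (fun f => f ∈ (Submodule.span F s).dualAnnihilator)).erase 0).card : ℝ) + 1 = (Fintype.card F : ℝ) ^ (Module.finrank F V - Module.finrank F (Submodule.span F s)) := by
    exact_mod_cast h4
  linarith

open Classical in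
lemma second_moment {A P : Type*} (S : Finset A) (X : Finset P) (Z : A → P → Prop) (a c : ℝ)
    (t : ℕ) (ht : 0 < t) (hX : X.card = t)
    (h1 : ∀ p ∈ X, ((S.filter (fun f => Z f p)).card : ℝ) = a)
    (h2 : ∀ p ∈ X, ∀ r ∈ X, p ≠ r → ((S.filter (fun f => Z f p ∧ Z f r)).card : ℝ) = c) :
    t * a ^ 2 ≤ ((S.filter (fun f => ∃ p ∈ X, Z f p)).card : ℝ) * (a + (t - 1) * c) := by
  set N : A → ℝ := fun f => ∑ p ∈ X, if Z f p then 1 else 0 with hN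
  set T := S.filter (fun f => ∃ p ∈ X, Z f p) with hT
  have hz : ∀ f ∈ S, f ∉ T → N f = 0 := by
    intro f hf hfT
    apply Finset.sum_eq_zero
    intro p hp
    rw [if_neg]
    intro hh
    exact hfT (Finset.mem_filter.2 ⟨hf, p, hp, hh⟩)
  have e1 : ∑ f ∈ T, N f = t * a := by
    rw [Finset.sum_subset (Finset.filter_subset _ S) hz, hN, Finset.sum_comm]
    rw [Finset.sum_congr rfl (g := fun _ => a)]
    · simp [hX]
    · intro p hp
      rw [← h1 p hp]; simp
  have e2 : ∑ f ∈ T, N f ^ 2 = t * (a + (t - 1) * c) := by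
    rw [Finset.sum_subset (Finset.filter_subset _ S) (fun f hf h => by rw [hz f hf h]; simp)]
    have : ∀ f, N f ^ 2 = ∑ p ∈ X, ∑ r ∈ X, if Z f p ∧ Z f r then 1 else 0 := by
      intro f
      rw [sq, hN, Finset.sum_mul_sum]
      refine Finset.sum_congr rfl fun p _ => Finset.sum_congr rfl fun r _ => ?_
      by_cases hp : Z f p <;> by_cases hr : Z f r <;> simp [hp, hr]
    simp only [this]
    rw [Finset.sum_comm]
    rw [Finset.sum_congr rfl (g := fun _ => a + (t - 1) * c)]
    · simp [hX]
      try ring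
    · intro p hp
      rw [Finset.sum_comm, ← Finset.add_sum_erase X _ hp]
      rw [Finset.sum_congr rfl (s₁ := X.erase p) (g := fun _ => c)]
      · rw [← h1 p hp]
        have : ((X.erase p).card : ℝ) = t - 1 := by
          rw [Finset.card_erase_of_mem hp, hX, Nat.cast_sub ht]; simp
        simp [this]
      · intro r hr
        rw [← h2 p hp r (Finset.mem_of_mem_erase hr) (Finset.ne_of_mem_erase hr).symm]; simp
  have cs := sq_sum_le_card_mul_sum_sq (s := T) (f := N)
  rw [e1, e2] at cs
  have ht' : (0:ℝ) < t := by exact_mod_cast ht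
  nlinarith [cs]

set_option maxHeartbeats 2000000 in
/-- **Lemma 3.1.** Let `X 1, …, X g` be mutually disjoint subsets of the projective space
`ℙ F_q^d` (one-dimensional subspaces of `F_q^(d+1)`), each of size `t`, with `g ≥ d + 1`.
If `q < (g/d - 1) * t - 4` then there is a hyperplane (the set of projective points whose
line lies in a `d`-dimensional linear subspace `W` of `F_q^(d+1)`) meeting at least `d + 1`
distinct sets among `X 1, …, X g`. -/
theorem exists_hyperplane_meeting_many_sets
    (F : Type) [Field F] [Fintype F] (d g t : ℕ) (hd : 1 ≤ d) (hg : d + 1 ≤ g)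
    (X : Fin g → Finset (Projectivization F (Fin (d + 1) → F)))
    (hcard : ∀ i, (X i).card = t)
    (hdisj : ∀ i j, i ≠ j → Disjoint (X i) (X j))
    (hq : (Fintype.card F : ℝ) < ((g : ℝ) / (d : ℝ) - 1) * (t : ℝ) - 4) :
    ∃ W : Submodule F (Fin (d + 1) → F), Module.finrank F W = d ∧
      d + 1 ≤ Set.ncard {i : Fin g | ∃ p ∈ X i, Projectivization.submodule p ≤ W} := by
  classical
  by_contra hcon
  push Not at hcon
  have : Finite (Module.Dual F (Fin (d + 1) → F)) := Module.finite_of_finite F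
  have := Fintype.ofFinite (Module.Dual F (Fin (d + 1) → F))
  obtain ⟨e, rfl⟩ : ∃ e, d = e + 1 := ⟨d - 1, by omega⟩
  set q : ℝ := (Fintype.card F : ℝ) with hqd
  have hq1 : 1 < q := by
    rw [hqd]; exact_mod_cast Fintype.one_lt_card
  have ht : 0 < t := by
    rcases Nat.eq_zero_or_pos t with h | h
    · subst h; simp at hq; linarith
    · exact h
  set S : Finset (Module.Dual F (Fin (e + 1 + 1) → F)) := Finset.univ.filter (· ≠ 0) with hS
  have hSc : (S.card : ℝ) = q ^ (e + 2) - 1 := by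
    have := card_annih (F := F) (V := Fin (e + 1 + 1) → F) ∅
    rw [Submodule.span_empty, finrank_bot] at this
    simpa [hS] using this
  have key : ∀ i, t * (q ^ (e + 1) - 1) ^ 2 ≤
      ((S.filter (fun f => ∃ p ∈ X i, f p.rep = 0)).card : ℝ) *
        ((q ^ (e + 1) - 1) + (t - 1) * (q ^ e - 1)) := by
    intro i
    apply second_moment S (X i) (fun f p => f p.rep = 0) _ _ t ht (hcard i)
    · intro p hp
      have := card_annih (F := F) (V := Fin (e + 1 + 1) → F) {p.rep}
      rw [finrank_span_singleton p.rep_nonzero] at this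
      simpa [hS, Finset.filter_filter] using this
    · intro p hp r hr hpr
      have := card_annih (F := F) (V := Fin (e + 1 + 1) → F) (Set.range ![p.rep, r.rep])
      have hli : LinearIndependent F ![p.rep, r.rep] := by
        have h := (Projectivization.independent_pair_iff_ne p r).2 hpr
        rw [Projectivization.independent_iff] at h
        have e : Projectivization.rep ∘ ![p, r] = ![p.rep, r.rep] := by
          ext1 j
          fin_cases j <;> simp
        rw [e] at h
        exact h
      rw [finrank_span_eq_card hli] at this
      simpa [hS, Finset.filter_filter, and_comm, and_left_comm] using this
  have hits : ∑ i, ((S.filter (fun f => ∃ p ∈ X i, f p.rep = 0)).card : ℝ) ≤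
      (q ^ (e + 2) - 1) * (e + 1) := by
    have h1 : ∑ i, (S.filter (fun f => ∃ p ∈ X i, f p.rep = 0)).card =
        ∑ f ∈ S, (Finset.univ.filter (fun i => ∃ p ∈ X i, f p.rep = 0)).card := by
      simp only [Finset.card_filter]
      exact Finset.sum_comm
    have h2 : ∑ f ∈ S, (Finset.univ.filter (fun i => ∃ p ∈ X i, f p.rep = 0)).card ≤
        S.card * (e + 1) := by
      apply Finset.sum_le_card_nsmul
      intro f hf
      have hf0 : f ≠ 0 := (Finset.mem_filter.1 hf).2
      have h3 := Module.Dual.finrank_ker_add_one_of_ne_zero hf0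
      have h4 := hcon (LinearMap.ker f) (by simp at h3; omega)
      have h5 : {i : Fin g | ∃ p ∈ X i, Projectivization.submodule p ≤ LinearMap.ker f} =
          ((Finset.univ.filter (fun i => ∃ p ∈ X i, f p.rep = 0) : Finset (Fin g)) : Set (Fin g)) := by
        ext i
        simp [Projectivization.submodule_eq, Submodule.span_singleton_le_iff_mem]
      rw [h5, Set.ncard_coe_finset] at h4
      omega
    rw [← hSc]
    rw [← h1] at h2
    exact_mod_cast h2
  have hsum := Finset.sum_le_sum (s := Finset.univ) (fun i _ => key i)
  simp only [Finset.sum_const, Finset.card_univ, Fintype.card_fin, nsmul_eq_mul] at hsum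
  rw [← Finset.sum_mul] at hsum
  set u := q ^ e with hu
  have hu1 : 1 ≤ u := one_le_pow₀ hq1.le
  have eu1 : q ^ (e + 1) = u * q := pow_succ _ _
  have eu2 : q ^ (e + 2) = u * q * q := by rw [hu]; ring
  rw [eu1] at hsum
  rw [eu2] at hits
  have ht1 : (1 : ℝ) ≤ t := by exact_mod_cast ht
  have huq : q ≤ u * q := by nlinarith
  have hc : 0 ≤ (u * q - 1) + (t - 1) * (u - 1) := by
    have := mul_nonneg (sub_nonneg.2 ht1) (sub_nonneg.2 hu1)
    linarith
  have h6 := hsum.trans (mul_le_mul_of_nonneg_right hits hc)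
  have hq' : (e + 1 : ℝ) * (q + t + 4) < g * t := by
    have he : (0 : ℝ) < e + 1 := by positivity
    have : (e + 1 : ℝ) * q < (e + 1) * (((g : ℝ) / (e + 1) - 1) * t - 4) := by
      apply mul_lt_mul_of_pos_left _ he
      simpa using hq
    have h7 : (e + 1 : ℝ) * (((g : ℝ) / (e + 1) - 1) * t - 4) = g * t - (e + 1) * (t + 4) := by
      field_simp
      ring
    linarith
  have ha : 0 < u * q - 1 := by linarith
  have h8 : (e + 1 : ℝ) * (q + t + 4) * (u * q - 1) ^ 2 < g * t * (u * q - 1) ^ 2 :=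
    mul_lt_mul_of_pos_right hq' (by positivity)
  have h9 : (u * q * q - 1) * ((u * q - 1) + (t - 1) * (u - 1)) ≤
      (q + t + 4) * (u * q - 1) ^ 2 := by
    have i1 : (u * q * q - 1) * (u - 1) ≤ (u * q - 1) ^ 2 := by
      nlinarith [mul_nonneg (by linarith : 0 ≤ u) (sq_nonneg (q - 1))]
    have i2 := mul_le_mul_of_nonneg_left i1 (sub_nonneg.2 ht1)
    have i3 : (u * q * q - 1) ≤ (q + 4) * (u * q - 1) := by nlinarith
    have i4 := mul_le_mul_of_nonneg_right i3 ha.le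
    nlinarith [sq_nonneg (u * q - 1)]
  have he : (0 : ℝ) ≤ e + 1 := by positivity
  have h10 := mul_le_mul_of_nonneg_left h9 he
  nlinarith
end

section
/- Let q be a prime power and let n, r, a, h be integers with r ∣ n, g = n/r, a+2 ≤ h, and h ≤ g. If there exists a maximally recoverable (n,r,h,a,q)-local reconstruction code, then q ≥ ((g/(h−1)) − 1)·binomial(r, a+1) − 4. -/
/-- The parity check matrix of an `(n, r, h, a, q)`-local reconstruction code with `g = n/r`
local groups, given by local-parity matrices `A i` (in block-diagonal position) and
heavy-parity matrices `B i`. Rows are indexed by `(Fin g × Fin a) ⊕ Fin h`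
(local parity rows first, then the `h` heavy rows) and columns by `Fin g × Fin r`
(the `i`-th local group consists of the columns with first coordinate `i`). -/
def lrcParityCheck (F : Type) [Field F] (g r a h : ℕ)
    (A : Fin g → Matrix (Fin a) (Fin r) F)
    (B : Fin g → Matrix (Fin h) (Fin r) F) :
    Matrix ((Fin g × Fin a) ⊕ Fin h) (Fin g × Fin r) F :=
  fun ρ c =>
    Sum.elim (fun p : Fin g × Fin a => if p.1 = c.1 then A p.1 p.2 c.2 else 0)
      (fun j : Fin h => B c.1 j c.2) ρ

/-- `A, B` define a maximally recoverable LRC:  every `a × a` minor of each `A i` is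
nonzero (stated: any `a` columns of `A i` are linearly independent), and for every set `E`
of `a * g + h` columns containing at least `a` columns from each local group, the
corresponding columns of the parity check matrix are linearly independent (equivalently,
the square submatrix of the parity check matrix on the columns of `E` is invertible). -/
def IsMRLRC (F : Type) [Field F] (g r a h : ℕ)
    (A : Fin g → Matrix (Fin a) (Fin r) F)
    (B : Fin g → Matrix (Fin h) (Fin r) F) : Prop :=
  (∀ i : Fin g, ∀ S : Finset (Fin r), S.card = a →
      LinearIndependent F (fun c : {x // x ∈ S} => fun j : Fin a => A i j c.1)) ∧
  (∀ E : Finset (Fin g × Fin r), E.card = a * g + h →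
      (∀ i : Fin g, a ≤ (E.filter (fun x => x.1 = i)).card) →
      LinearIndependent F
        (fun c : {x // x ∈ E} => fun ρ => lrcParityCheck F g r a h A B ρ c.1))

/-- There is a maximally recoverable `(n = g * r, r, h, a, q)`-local reconstruction code
with `g` local groups each of size `r`, over the field with `q` elements. -/
def ExistsMRLRC (g r h a q : ℕ) : Prop :=
  ∃ (F : Type) (_ : Field F) (_ : Fintype F),
    Fintype.card F = q ∧
      ∃ (A : Fin g → Matrix (Fin a) (Fin r) F) (B : Fin g → Matrix (Fin h) (Fin r) F),
        IsMRLRC F g r a h A B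

section helpers
open Finset

lemma mr_card_ker {F : Type} [Field F] [Fintype F] [DecidableEq F] (h k : ℕ)
    (x : Fin k → Fin h → F) (hx : LinearIndependent F x) :
    (univ.filter (fun φ : Fin h → F => ∀ i, x i ⬝ᵥ φ = 0)).card * Fintype.card F ^ k
      = Fintype.card F ^ h := by
  classical
  let M : Matrix (Fin k) (Fin h) F := Matrix.of x
  have hrank : M.rank = k := by
    have := LinearIndependent.rank_matrix (M := M) hx
    simpa using this
  have hrn := LinearMap.finrank_range_add_finrank_ker M.mulVecLin
  have h1 : Module.finrank F (LinearMap.range M.mulVecLin) = k := hrank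
  rw [h1] at hrn
  simp only [Module.finrank_fin_fun] at hrn
  have h2 : (univ.filter (fun φ : Fin h → F => ∀ i, x i ⬝ᵥ φ = 0)).card
      = Fintype.card (LinearMap.ker M.mulVecLin) := by
    rw [Fintype.card_subtype]
    congr 1
    ext φ
    simp only [mem_filter, mem_univ, true_and, LinearMap.mem_ker, Matrix.mulVecLin_apply]
    constructor
    · intro H; funext i; exact H i
    · intro H i; exact congrFun H i
  rw [h2, Module.card_eq_pow_finrank (K := F), ← pow_add, add_comm, hrn]

lemma mr_card_one {F : Type} [Field F] [Fintype F] [DecidableEq F] (h : ℕ)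
    (x : Fin h → F) (hx : x ≠ 0) :
    (univ.filter (fun φ : Fin h → F => x ⬝ᵥ φ = 0)).card * Fintype.card F
      = Fintype.card F ^ h := by
  have := mr_card_ker h 1 ![x] (by
    rw [linearIndependent_unique_iff]; simpa using hx)
  simpa using this

lemma mr_card_two {F : Type} [Field F] [Fintype F] [DecidableEq F] (h : ℕ)
    (x y : Fin h → F) (hx : LinearIndependent F ![x, y]) :
    (univ.filter (fun φ : Fin h → F => x ⬝ᵥ φ = 0 ∧ y ⬝ᵥ φ = 0)).card * Fintype.card F ^ 2
      = Fintype.card F ^ h := by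
  have := mr_card_ker h 2 ![x, y] hx
  simpa [Fin.forall_fin_two] using this

lemma mr_count {F : Type} [Field F] [Fintype F] [DecidableEq F] {ι : Type} [Fintype ι]
    [DecidableEq ι] [Nonempty ι]
    (g m : ℕ) (p : Fin g → ι → Fin (m + 2) → F)
    (h0 : ∀ i s, p i s ≠ 0)
    (hpair : ∀ i s t, s ≠ t → LinearIndependent F ![p i s, p i t])
    (hgen : ∀ φ : Fin (m + 2) → F, φ ≠ 0 →
      (univ.filter (fun i => ∃ s, p i s ⬝ᵥ φ = 0)).card ≤ m + 1) :
    (g : ℝ) * Fintype.card ι ≤ ((m : ℝ) + 1) * (Fintype.card F + Fintype.card ι) := by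
  classical
  set q : ℕ := Fintype.card F with hq
  set t : ℕ := Fintype.card ι with ht
  have hq2 : 2 ≤ q := Fintype.one_lt_card
  have ht1 : 1 ≤ t := Fintype.card_pos
  set K : ℕ := q ^ m with hK
  have hK1 : 1 ≤ K := Nat.one_le_pow _ _ (by omega)
  let Φ : Finset (Fin (m + 2) → F) := univ.erase 0
  have hΦ : (Φ.card : ℝ) = (q : ℝ) ^ 2 * K - 1 := by
    have : Φ.card + 1 = q ^ 2 * K := by
      rw [Finset.card_erase_add_one (mem_univ _), card_univ, Fintype.card_fun, Fintype.card_fin,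
        hK, ← pow_add, add_comm]
    have h' : ((Φ.card + 1 : ℕ) : ℝ) = (q ^ 2 * K : ℕ) := by rw [this]
    push_cast at h'
    linarith
  have hone : ∀ x : Fin (m + 2) → F, x ≠ 0 →
      ((Φ.filter (fun φ => x ⬝ᵥ φ = 0)).card : ℝ) = (q : ℝ) * K - 1 := by
    intro x hx
    have h1 := mr_card_one (m + 2) x hx
    have h2 : Φ.filter (fun φ => x ⬝ᵥ φ = 0) = (univ.filter (fun φ => x ⬝ᵥ φ = 0)).erase 0 := by
      ext φ; simp [Φ]
    have h3 : (Φ.filter (fun φ => x ⬝ᵥ φ = 0)).card + 1 = q * K := by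
      rw [h2, Finset.card_erase_add_one (by simp)]
      apply Nat.eq_of_mul_eq_mul_right (show 0 < q by omega)
      rw [h1, hK]; ring
    have h' : (((Φ.filter (fun φ => x ⬝ᵥ φ = 0)).card + 1 : ℕ) : ℝ) = (q * K : ℕ) := by rw [h3]
    push_cast at h'
    linarith
  have htwo : ∀ x y : Fin (m + 2) → F, LinearIndependent F ![x, y] →
      ((Φ.filter (fun φ => x ⬝ᵥ φ = 0 ∧ y ⬝ᵥ φ = 0)).card : ℝ) = (K : ℝ) - 1 := by
    intro x y hx
    have h1 := mr_card_two (m + 2) x y hx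
    have h2 : Φ.filter (fun φ => x ⬝ᵥ φ = 0 ∧ y ⬝ᵥ φ = 0)
        = (univ.filter (fun φ => x ⬝ᵥ φ = 0 ∧ y ⬝ᵥ φ = 0)).erase 0 := by
      ext φ; simp [Φ]
    have h3 : (Φ.filter (fun φ => x ⬝ᵥ φ = 0 ∧ y ⬝ᵥ φ = 0)).card + 1 = K := by
      rw [h2, Finset.card_erase_add_one (by simp)]
      apply Nat.eq_of_mul_eq_mul_right (show 0 < q ^ 2 by positivity)
      rw [h1, hK]; ring
    have h' : (((Φ.filter (fun φ => x ⬝ᵥ φ = 0 ∧ y ⬝ᵥ φ = 0)).card + 1 : ℕ) : ℝ) = (K : ℕ) := by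
      rw [h3]
    push_cast at h'
    linarith
  let Z : Fin g → (Fin (m + 2) → F) → ℝ := fun i φ => ∑ s, if p i s ⬝ᵥ φ = 0 then (1 : ℝ) else 0
  let N : Fin g → Finset (Fin (m + 2) → F) := fun i => Φ.filter (fun φ => ∃ s, p i s ⬝ᵥ φ = 0)
  have hZ0 : ∀ i, ∀ φ, (¬ ∃ s, p i s ⬝ᵥ φ = 0) → Z i φ = 0 := by
    intro i φ hne
    push Not at hne
    simp [Z, hne]
  have hS1 : ∀ i, ∑ φ ∈ N i, Z i φ = t * ((q : ℝ) * K - 1) := by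
    intro i
    have : ∑ φ ∈ N i, Z i φ = ∑ φ ∈ Φ, Z i φ := by
      rw [Finset.sum_filter]
      apply Finset.sum_congr rfl
      intro φ _
      split_ifs with hh
      · rfl
      · exact (hZ0 i φ hh).symm
    rw [this]
    simp only [Z]
    rw [Finset.sum_comm]
    have : ∀ s, ∑ φ ∈ Φ, (if p i s ⬝ᵥ φ = 0 then (1 : ℝ) else 0) = (q : ℝ) * K - 1 := by
      intro s
      rw [← hone _ (h0 i s), Finset.sum_boole]
    simp only [this, Finset.sum_const, card_univ, nsmul_eq_mul]
    rfl
  have hS2 : ∀ i, ∑ φ ∈ N i, (Z i φ) ^ 2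
      = t * ((q : ℝ) * K - 1) + t * (t - 1) * ((K : ℝ) - 1) := by
    intro i
    have : ∑ φ ∈ N i, (Z i φ) ^ 2 = ∑ φ ∈ Φ, (Z i φ) ^ 2 := by
      rw [Finset.sum_filter]
      apply Finset.sum_congr rfl
      intro φ _
      split_ifs with hh
      · rfl
      · rw [hZ0 i φ hh]; simp
    rw [this]
    have hsq : ∀ φ, (Z i φ) ^ 2 = ∑ s, ∑ u,
        if p i s ⬝ᵥ φ = 0 ∧ p i u ⬝ᵥ φ = 0 then (1 : ℝ) else 0 := by
      intro φ
      simp only [Z]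
      rw [sq, Finset.sum_mul_sum]
      refine Finset.sum_congr rfl fun s _ => Finset.sum_congr rfl fun u _ => ?_
      by_cases h1 : p i s ⬝ᵥ φ = 0 <;> by_cases h2 : p i u ⬝ᵥ φ = 0 <;> simp [h1, h2]
    simp only [hsq]
    rw [Finset.sum_comm]
    have hin : ∀ s, ∑ φ ∈ Φ, ∑ u, (if p i s ⬝ᵥ φ = 0 ∧ p i u ⬝ᵥ φ = 0 then (1 : ℝ) else 0)
        = ((q : ℝ) * K - 1) + (t - 1) * ((K : ℝ) - 1) := by
      intro s
      rw [Finset.sum_comm]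
      rw [← Finset.add_sum_erase _ _ (mem_univ s)]
      congr 1
      · rw [← hone _ (h0 i s), Finset.sum_boole]; simp
      · have : ∀ u ∈ univ.erase s,
            ∑ φ ∈ Φ, (if p i s ⬝ᵥ φ = 0 ∧ p i u ⬝ᵥ φ = 0 then (1 : ℝ) else 0) = (K : ℝ) - 1 := by
          intro u hu
          rw [← htwo _ _ (hpair i s u (Finset.ne_of_mem_erase hu).symm), Finset.sum_boole]
        rw [Finset.sum_congr rfl this, Finset.sum_const, Finset.card_erase_of_mem (mem_univ _),
          card_univ, nsmul_eq_mul, ← ht, Nat.cast_sub ht1, Nat.cast_one]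
    simp only [hin, Finset.sum_const, card_univ, nsmul_eq_mul]
    rw [← ht]; ring
  have hCS : ∀ i, (t * ((q : ℝ) * K - 1)) ^ 2
      ≤ (N i).card * (t * ((q : ℝ) * K - 1) + t * (t - 1) * ((K : ℝ) - 1)) := by
    intro i
    have := sq_sum_le_card_mul_sum_sq (s := N i) (f := Z i)
    rwa [hS1 i, hS2 i] at this
  have hNsum : ∑ i, ((N i).card : ℝ) ≤ ((m : ℝ) + 1) * ((q : ℝ) ^ 2 * K - 1) := by
    have h1 : ∑ i, (N i).card = ∑ φ ∈ Φ, (univ.filter (fun i => ∃ s, p i s ⬝ᵥ φ = 0)).card := by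
      simp only [N, Finset.card_filter]
      rw [Finset.sum_comm]
    have h2 : ∑ i, (N i).card ≤ Φ.card * (m + 1) := by
      rw [h1]
      apply Finset.sum_le_card_nsmul
      intro φ hφ
      exact hgen φ (Finset.ne_of_mem_erase hφ)
    have h3 : ((∑ i, (N i).card : ℕ) : ℝ) ≤ ((Φ.card * (m + 1) : ℕ) : ℝ) := by exact_mod_cast h2
    push_cast at h3
    rw [hΦ] at h3
    linarith
  have hq2' : (2 : ℝ) ≤ q := by exact_mod_cast hq2
  have ht1' : (1 : ℝ) ≤ t := by exact_mod_cast ht1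
  have hK1' : (1 : ℝ) ≤ K := by exact_mod_cast hK1
  generalize (q : ℝ) = q at *
  generalize (t : ℝ) = t at *
  generalize (K : ℝ) = K at *
  have hD : 0 < q * K - 1 := by nlinarith
  have hM : 0 ≤ t * (q * K - 1) + t * (t - 1) * (K - 1) := by
    have : 0 ≤ t * (t - 1) * (K - 1) := by
      apply mul_nonneg (mul_nonneg _ _) _ <;> linarith
    have : 0 ≤ t * (q * K - 1) := by apply mul_nonneg <;> linarith
    linarith
  have hA : (g : ℝ) * (t * (q * K - 1)) ^ 2
      ≤ ((m : ℝ) + 1) * (q ^ 2 * K - 1) * (t * (q * K - 1) + t * (t - 1) * (K - 1)) := by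
    calc (g : ℝ) * (t * (q * K - 1)) ^ 2 = ∑ i : Fin g, (t * (q * K - 1)) ^ 2 := by simp
      _ ≤ ∑ i : Fin g, ((N i).card * (t * (q * K - 1) + t * (t - 1) * (K - 1))) :=
          Finset.sum_le_sum fun i _ => hCS i
      _ = (∑ i : Fin g, ((N i).card : ℝ)) * (t * (q * K - 1) + t * (t - 1) * (K - 1)) := by
          rw [Finset.sum_mul]
      _ ≤ _ := mul_le_mul_of_nonneg_right hNsum hM
  have hB1 : (q ^ 2 * K - 1) ≤ (q + 1) * (q * K - 1) := by nlinarith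
  have hB2 : (K - 1) * (q ^ 2 * K - 1) ≤ (q * K - 1) ^ 2 := by
    nlinarith [mul_nonneg (show 0 ≤ K by linarith) (sq_nonneg (q - 1))]
  have hB : (q ^ 2 * K - 1) * (t * (q * K - 1) + t * (t - 1) * (K - 1))
      ≤ (t * (q * K - 1) ^ 2) * (q + t) := by
    have e1 := mul_le_mul_of_nonneg_left hB1 (show 0 ≤ t * (q * K - 1) by positivity)
    have e2 := mul_le_mul_of_nonneg_left hB2 (show 0 ≤ t * (t - 1) by
      apply mul_nonneg <;> linarith)
    nlinarith
  have hC : (t * (q * K - 1) ^ 2) * (g * t) ≤ (t * (q * K - 1) ^ 2) * ((m + 1) * (q + t)) := by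
    have := mul_le_mul_of_nonneg_left hB (show (0 : ℝ) ≤ (m : ℝ) + 1 by positivity)
    nlinarith
  exact le_of_mul_le_mul_left hC (by positivity)

/-- The main consequence of maximal recoverability. -/
lemma mr_key {F : Type} [Field F] {g r a h : ℕ}
    {A : Fin g → Matrix (Fin a) (Fin r) F} {B : Fin g → Matrix (Fin h) (Fin r) F}
    (hMR : IsMRLRC F g r a h A B) (har : a < r) (hhg : h ≤ g)
    (W : Fin g → Finset (Fin r)) (hWa : ∀ i, a ≤ (W i).card)
    (hWs : ∑ i, (W i).card ≤ a * g + h)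
    (v : Fin g → Fin r → F) (hv : ∀ i c, c ∉ W i → v i c = 0)
    (hA : ∀ i, (A i).mulVec (v i) = 0) (hB : ∑ i, (B i).mulVec (v i) = 0) :
    v = 0 := by
  classical
  let E0 : Finset (Fin g × Fin r) := univ.filter (fun x => x.2 ∈ W x.1)
  have hfib : ∀ i, (E0.filter (fun x => x.1 = i)).card = (W i).card := by
    intro i
    symm
    apply Finset.card_bij (fun c _ => (i, c))
    · intro c hc; simp [E0, hc]
    · intro c _ d _ hcd; simpa using hcd
    · rintro ⟨j, c⟩ hj
      simp only [E0, mem_filter, mem_univ, true_and] at hj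
      obtain ⟨h1, rfl⟩ := hj
      exact ⟨c, h1, rfl⟩
  have hE0 : E0.card ≤ a * g + h := by
    rw [Finset.card_eq_sum_card_fiberwise (f := fun x => x.1) (t := univ) (by simp)]
    simpa [hfib] using hWs
  have hbig : a * g + h ≤ Fintype.card (Fin g × Fin r) := by
    simp only [Fintype.card_prod, Fintype.card_fin]
    nlinarith
  obtain ⟨E, hEsub, hEcard⟩ := Finset.exists_superset_card_eq hE0 hbig
  have hli := hMR.2 E hEcard (fun i => (hWa i).trans ((hfib i).symm.le.trans
    (Finset.card_le_card (Finset.filter_subset_filter _ hEsub))))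
  rw [Fintype.linearIndependent_iff] at hli
  have hv' : ∀ x : Fin g × Fin r, x ∉ E → v x.1 x.2 = 0 := by
    intro x hx
    apply hv
    intro hc
    exact hx (hEsub (by simp [E0, hc]))
  have hsum : ∀ ρ, ∑ x : Fin g × Fin r, v x.1 x.2 * lrcParityCheck F g r a h A B ρ x = 0 := by
    intro ρ
    rw [Fintype.sum_prod_type]
    rcases ρ with ⟨i, j⟩ | j
    · simp only [lrcParityCheck, Sum.elim_inl]
      rw [Finset.sum_eq_single i]
      · have := congrFun (hA i) j
        simp only [Matrix.mulVec, dotProduct, Pi.zero_apply] at this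
        rw [← this]
        exact Finset.sum_congr rfl fun c _ => by simp [mul_comm]
      · intro b _ hb
        apply Finset.sum_eq_zero
        intro c _
        simp [Ne.symm hb]
      · simp
    · simp only [lrcParityCheck, Sum.elim_inr]
      have := congrFun hB j
      simp only [Finset.sum_apply, Matrix.mulVec, dotProduct, Pi.zero_apply] at this
      rw [← this]
      exact Finset.sum_congr rfl fun i _ => Finset.sum_congr rfl fun c _ => by rw [mul_comm]
  have hz := hli (fun c => v c.1.1 c.1.2) (by
    funext ρ
    simp only [Finset.sum_apply, Pi.smul_apply, smul_eq_mul, Pi.zero_apply]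
    rw [← hsum ρ]
    rw [Finset.sum_coe_sort E (fun x => v x.1 x.2 * lrcParityCheck F g r a h A B ρ x)]
    apply Finset.sum_subset (Finset.subset_univ _)
    intro x _ hx
    rw [hv' x hx, zero_mul])
  funext i c
  by_cases hc : (i, c) ∈ E
  · exact hz ⟨(i, c), hc⟩
  · exact hv' (i, c) hc

/-- Each `(a+1)`-subset of the columns carries a dependency with exactly that support. -/
lemma mr_circuit {F : Type} [Field F] {r a : ℕ} (A : Matrix (Fin a) (Fin r) F)
    (hA : ∀ S : Finset (Fin r), S.card = a →
      LinearIndependent F (fun c : {x // x ∈ S} => fun j : Fin a => A j c.1))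
    (S : Finset (Fin r)) (hS : S.card = a + 1) :
    ∃ k : Fin r → F, A.mulVec k = 0 ∧ ∀ c, k c ≠ 0 ↔ c ∈ S := by
  classical
  have hdep : ¬ LinearIndependent F (fun c : {x // x ∈ S} => fun j : Fin a => A j c.1) := by
    intro hli
    have := hli.fintype_card_le_finrank
    simp [hS] at this
  rw [Fintype.not_linearIndependent_iff] at hdep
  obtain ⟨f, hf, c0, hc0⟩ := hdep
  let k : Fin r → F := fun c => if hc : c ∈ S then f ⟨c, hc⟩ else 0
  have hkS : ∀ c, c ∉ S → k c = 0 := fun c hc => by simp [k, hc]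
  have hk : A.mulVec k = 0 := by
    funext j
    have := congrFun hf j
    simp only [Finset.sum_apply, Pi.smul_apply, smul_eq_mul, Pi.zero_apply] at this
    simp only [Matrix.mulVec, dotProduct, Pi.zero_apply]
    rw [← this, ← Finset.sum_subset (Finset.subset_univ S)
      (fun x _ hx => by rw [hkS x hx, mul_zero]), ← Finset.sum_coe_sort S]
    refine Finset.sum_congr rfl fun c _ => ?_
    simp [k, mul_comm]
  refine ⟨k, hk, fun c => ⟨fun h => by_contra fun hc => h (hkS c hc), fun hc hkc => ?_⟩⟩
  have hcard : (S.erase c).card = a := by rw [Finset.card_erase_of_mem hc, hS]; rfl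
  have hli := hA _ hcard
  rw [Fintype.linearIndependent_iff] at hli
  have hz := hli (fun x => k x.1) (by
    funext j
    have := congrFun hk j
    simp only [Matrix.mulVec, dotProduct, Pi.zero_apply] at this
    simp only [Finset.sum_apply, Pi.smul_apply, smul_eq_mul, Pi.zero_apply]
    rw [← this, Finset.sum_coe_sort (S.erase c) (fun x => k x * A j x)]
    rw [← Finset.sum_subset (Finset.subset_univ (S.erase c))]
    · exact Finset.sum_congr rfl fun x _ => mul_comm _ _
    · intro x _ hx
      have : k x = 0 := by
        by_cases hxc : x = c
        · rw [hxc, hkc]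
        · exact hkS x fun hxS => hx (Finset.mem_erase.2 ⟨hxc, hxS⟩)
      rw [this, mul_zero])
  apply hc0
  have hk0 : k c0.1 = f c0 := by simp [k]
  rw [← hk0]
  by_cases hcc : c0.1 = c
  · rw [hcc, hkc]
  · exact hz ⟨c0.1, Finset.mem_erase.2 ⟨hcc, c0.2⟩⟩

lemma mr_main {F : Type} [Field F] [Fintype F] {g r a m : ℕ}
    {A : Fin g → Matrix (Fin a) (Fin r) F} {B : Fin g → Matrix (Fin (m + 2)) (Fin r) F}
    (hMR : IsMRLRC F g r a (m + 2) A B) (har : a < r) (ham : a ≤ m) (hhg : m + 2 ≤ g) :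
    (g : ℝ) * (r.choose (a + 1) : ℕ)
      ≤ ((m : ℝ) + 1) * (Fintype.card F + (r.choose (a + 1) : ℕ)) := by
  classical
  let ι : Type := {S : Finset (Fin r) // S.card = a + 1}
  have hcard : Fintype.card ι = r.choose (a + 1) := by
    simp [ι]
  obtain ⟨S1, hS1⟩ : ∃ S : Finset (Fin r), S.card = a + 1 := by
    obtain ⟨S, _, hS⟩ := Finset.exists_subset_card_eq (s := (univ : Finset (Fin r))) (n := a + 1)
      (by simpa using har)
    exact ⟨S, hS⟩
  obtain ⟨S0, -, hS0⟩ := Finset.exists_subset_card_eq (s := S1) (n := a) (by omega)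
  have : Nonempty ι := ⟨⟨S1, hS1⟩⟩
  choose k hk hks using fun (i : Fin g) (S : ι) => mr_circuit (A i) (hMR.1 i) S.1 S.2
  let p : Fin g → ι → Fin (m + 2) → F := fun i S => (B i).mulVec (k i S)
  -- two circuits in a single group
  have hgroup : ∀ i (S T : ι) (b c : F), b • p i S + c • p i T = 0 →
      b • k i S + c • k i T = 0 := by
    intro i S T b c hbc
    have := mr_key hMR har hhg (fun j => if j = i then S.1 ∪ T.1 else S0)
      (fun j => by
        split_ifs
        · have := Finset.card_le_card (Finset.subset_union_left (s₁ := S.1) (s₂ := T.1))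
          have := S.2
          omega
        · exact hS0.ge)
      (by
        rw [← Finset.add_sum_erase _ _ (mem_univ i)]
        have h1 : ∀ j ∈ univ.erase i, (if j = i then S.1 ∪ T.1 else S0).card = a := by
          intro j hj
          rw [if_neg (Finset.ne_of_mem_erase hj), hS0]
        rw [Finset.sum_congr rfl h1, Finset.sum_const, Finset.card_erase_of_mem (mem_univ _)]
        simp only [card_univ, Fintype.card_fin, if_true, smul_eq_mul]
        have h2 := Finset.card_union_le S.1 T.1
        rw [S.2, T.2] at h2
        have h3 : (g - 1) * a + a = a * g := by
          obtain ⟨g', rfl⟩ : ∃ g', g = g' + 1 := ⟨g - 1, by omega⟩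
          simp; ring
        omega)
      (fun j => if j = i then b • k i S + c • k i T else 0)
      (fun j x hx => by
        split_ifs at hx ⊢ with hj
        · simp only [Finset.mem_union, not_or] at hx
          have e1 : k i S x = 0 := not_not.1 fun hne => hx.1 ((hks i S x).1 hne)
          have e2 : k i T x = 0 := not_not.1 fun hne => hx.2 ((hks i T x).1 hne)
          simp [e1, e2]
        · rfl)
      (fun j => by
        split_ifs with hj
        · subst hj
          simp [Matrix.mulVec_add, Matrix.mulVec_smul, hk]
        · simp)
      (by
        rw [Finset.sum_eq_single i]
        · simpa [Matrix.mulVec_add, Matrix.mulVec_smul, p] using hbc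
        · intro j _ hj
          simp [hj]
        · simp)
    have := congrFun this i
    simpa using this
  have hkne : ∀ i S, k i S ≠ 0 := by
    intro i S h
    obtain ⟨c, hc⟩ : S.1.Nonempty := by
      rw [← Finset.card_pos, S.2]; omega
    exact (hks i S c).2 hc (by rw [h]; rfl)
  rw [← hcard]
  apply mr_count g m p
  · intro i S h
    apply hkne i S
    have := hgroup i S S 1 0 (by simp [h])
    simpa using this
  · intro i S T hST
    rw [LinearIndependent.pair_iff]
    intro b c hbc
    have h := hgroup i S T b c hbc
    have hnot : ∀ (S T : ι), S ≠ T → ∃ x, x ∈ S.1 ∧ x ∉ T.1 := by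
      intro S T hST
      by_contra hcon
      push Not at hcon
      exact hST (Subtype.ext (Finset.eq_of_subset_of_card_le hcon (by rw [S.2, T.2])))
    constructor
    · obtain ⟨x, hx1, hx2⟩ := hnot S T hST
      have e2 : k i T x = 0 := not_not.1 fun hne => hx2 ((hks i T x).1 hne)
      have := congrFun h x
      simpa [e2, (hks i S x).2 hx1] using this
    · obtain ⟨x, hx1, hx2⟩ := hnot T S hST.symm
      have e2 : k i S x = 0 := not_not.1 fun hne => hx2 ((hks i S x).1 hne)
      have := congrFun h x
      simpa [e2, (hks i T x).2 hx1] using this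
  · intro φ hφ
    by_contra hcon
    push Not at hcon
    obtain ⟨I, hI, hIcard⟩ := Finset.exists_subset_card_eq (n := m + 2) hcon
    have hIs : ∀ i : {x // x ∈ I}, ∃ s, p i s ⬝ᵥ φ = 0 := by
      intro i
      have := hI i.2
      simpa using this
    choose s hs using hIs
    have hli : LinearIndependent F (fun i : {x // x ∈ I} => p i.1 (s i)) := by
      rw [Fintype.linearIndependent_iff]
      intro c hc
      have := mr_key hMR har hhg (fun j => if hj : j ∈ I then (s ⟨j, hj⟩).1 else S0)
        (fun j => by
          split_ifs with hj
          · rw [(s ⟨j, hj⟩).2]; omega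
          · exact hS0.ge)
        (by
          have h1 : ∀ j, (if hj : j ∈ I then (s ⟨j, hj⟩).1 else S0).card
              = a + if j ∈ I then 1 else 0 := by
            intro j
            split_ifs with hj
            · exact (s ⟨j, hj⟩).2
            · exact hS0
          simp only [h1, Finset.sum_add_distrib]
          simp [hIcard, mul_comm])
        (fun j => if hj : j ∈ I then c ⟨j, hj⟩ • k j (s ⟨j, hj⟩) else 0)
        (fun j x hx => by
          split_ifs at hx ⊢ with hj
          · have e1 : k j (s ⟨j, hj⟩) x = 0 := not_not.1 fun hne => hx ((hks _ _ x).1 hne)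
            simp [e1]
          · rfl)
        (fun j => by
          split_ifs with hj
          · simp [Matrix.mulVec_smul, hk]
          · simp)
        (by
          rw [← hc, ← Finset.sum_subset (Finset.subset_univ I)
            (fun x _ hx => by simp [hx]), ← Finset.sum_coe_sort I]
          refine Finset.sum_congr rfl fun i _ => ?_
          simp [Matrix.mulVec_smul, p])
      intro i
      have h2 := congrFun this i.1
      simp only [i.2, dif_pos, Pi.zero_apply] at h2
      exact (smul_eq_zero.1 h2).resolve_right (hkne _ _)
    have hspan := hli.span_eq_top_of_card_eq_finrank' (by simp [hIcard])
    apply hφ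
    have hall : ∀ x : Fin (m + 2) → F, x ⬝ᵥ φ = 0 := by
      intro x
      have hx : x ∈ Submodule.span F (Set.range fun i : {x // x ∈ I} => p i.1 (s i)) := by
        rw [hspan]; trivial
      induction hx using Submodule.span_induction with
      | mem x hx => obtain ⟨i, rfl⟩ := hx; exact hs i
      | zero => simp
      | add x y _ _ hx hy => rw [add_dotProduct, hx, hy, add_zero]
      | smul c x _ hx => rw [smul_dotProduct, hx, smul_zero]
    funext j
    have := hall (Pi.single j 1)
    simpa using this

end helpers

/-- **Proposition 3.4.** If `a + 2 ≤ h ≤ g = n/r`, then any maximally recoverable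
`(n, r, h, a, q)`-local reconstruction code satisfies
`q ≥ ((n/r)/(h-1) - 1) * C(r, a+1) - 4`. -/
theorem mrlrc_field_size_lower_bound_h_ge_a_add_two
    (q n r a h : ℕ) (hq : IsPrimePow q) (hr : 0 < r) (hrn : r ∣ n) (har : a < r)
    (hah : a + 2 ≤ h) (hhg : h ≤ n / r)
    (hex : ExistsMRLRC (n / r) r h a q) :
    (((n / r : ℕ) : ℝ) / ((h : ℝ) - 1) - 1) * (Nat.choose r (a + 1) : ℝ) - 4 ≤ (q : ℝ) := by
  obtain ⟨F, hF, hFin, hcard, A, B, hMR⟩ := hex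
  obtain ⟨m, rfl⟩ : ∃ m, h = m + 2 := ⟨h - 2, by omega⟩
  have key := mr_main hMR har (by omega) hhg
  rw [hcard] at key
  have hm : (0 : ℝ) < (m : ℝ) + 1 := by positivity
  have e : ((m + 2 : ℕ) : ℝ) - 1 = (m : ℝ) + 1 := by push_cast; ring
  rw [e, sub_mul, one_mul, div_mul_eq_mul_div]
  have h1 := (div_le_iff₀' hm).2 key
  linarith
end

section
/- Let q be a prime power and let n, r, a, h be integers with r ∣ n, g = n/r, 2 ≤ h < a+2, and h ≤ g. If there exists a maximally recoverable (n,r,h,a,q)-local reconstruction code, then q ≥ ((g/(h−1)) − 1)·binomial(r−a+h−2, h−1) − 4. -/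
open Matrix in
/-- Number of vectors orthogonal to an independent family. -/
lemma card_orth {F : Type} [Field F] [Fintype F] [DecidableEq F] {k h : ℕ}
    (v : Fin k → Fin h → F) (hv : LinearIndependent F v) :
    (Finset.univ.filter (fun f : Fin h → F => ∀ i, v i ⬝ᵥ f = 0)).card * (Fintype.card F) ^ k
      = (Fintype.card F) ^ h := by
  classical
  let M : Matrix (Fin k) (Fin h) F := Matrix.of v
  have hr : M.rank = k := by
    have := LinearIndependent.rank_matrix (M := M) hv
    simpa using this
  have h1 := LinearMap.finrank_range_add_finrank_ker M.mulVecLin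
  have h2 : Module.finrank F (LinearMap.range M.mulVecLin) = k := hr
  rw [h2, Module.finrank_fin_fun] at h1
  have h3 : (Finset.univ.filter (fun f : Fin h → F => ∀ i, v i ⬝ᵥ f = 0)).card
      = Fintype.card F ^ (Module.finrank F (LinearMap.ker M.mulVecLin)) := by
    rw [← Module.card_eq_pow_finrank (K := F) (V := LinearMap.ker M.mulVecLin)]
    rw [← Fintype.card_coe]
    apply Fintype.card_congr
    refine Equiv.subtypeEquivRight ?_
    intro f
    simp only [Finset.mem_filter, Finset.mem_univ, true_and, LinearMap.mem_ker,
      Matrix.mulVecLin_apply, funext_iff]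
    rfl
  rw [h3, ← pow_add]
  congr 1
  omega

/-- Final arithmetic. -/
lemma arith_final (M q t g d m : ℝ) (hq : 2 ≤ q) (hm : 1 ≤ m) (ht : 1 ≤ t) (hd : 1 ≤ d)
    (hM : M = m * q ^ 2) (htM : t * (q - 1) ≤ M)
    (hmain : g * t * (M - q) ≤ d * (M - 1) * (q + t - 1)) :
    g * t ≤ d * (q + t + 4) := by
  have hMq : 0 < M - q := by nlinarith
  have : g * t * (M - q) ≤ d * (q + t + 4) * (M - q) := by
    refine hmain.trans ?_
    have : (M - 1) * (q + t - 1) ≤ (q + t + 4) * (M - q) := by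
      nlinarith
    nlinarith
  exact le_of_mul_le_mul_right this hMq

open Matrix in
/-- Counting lemma. -/
lemma counting {F : Type} [Field F] [Fintype F] {h g : ℕ} (h2 : 2 ≤ h)
    {ι : Type} [Fintype ι] (p : Fin g → ι → Fin h → F)
    (H0 : ∀ i s, p i s ≠ 0)
    (H1 : ∀ i s s', s ≠ s' → LinearIndependent F ![p i s, p i s'])
    (H2 : ∀ e : Fin h → Fin g, Function.Injective e → ∀ s : Fin h → ι,
      LinearIndependent F (fun k => p (e k) (s k))) :
    (g : ℝ) * Fintype.card ι ≤ ((h : ℝ) - 1) * (Fintype.card F + Fintype.card ι + 4) := by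
  classical
  have hdR : (1 : ℝ) ≤ (h : ℝ) - 1 := by
    have : (2 : ℝ) ≤ h := by exact_mod_cast h2
    linarith
  rcases Nat.eq_zero_or_pos (Fintype.card ι) with ht0 | htpos
  · rw [ht0]; simp only [Nat.cast_zero, mul_zero]; positivity
  rcases Nat.eq_zero_or_pos g with hg0 | hgpos
  · subst hg0; simp only [Nat.cast_zero, zero_mul]; positivity
  have hq2 : 2 ≤ Fintype.card F := Fintype.one_lt_card
  set q := Fintype.card F with hq
  set t := Fintype.card ι with ht
  obtain ⟨d, rfl⟩ : ∃ d, h = d + 2 := ⟨h - 2, by omega⟩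
  let V := Fin (d + 2) → F
  -- nonzero functionals
  let Φ : Finset V := Finset.univ.erase 0
  have hV : (Finset.univ : Finset V).card = q ^ (d + 2) := by
    rw [Finset.card_univ]; simp [V, hq]
  have hΦ : (Φ.card : ℝ) = (q : ℝ) ^ (d + 2) - 1 := by
    have : Φ.card + 1 = q ^ (d + 2) := by
      rw [← hV]; exact Finset.card_erase_add_one (Finset.mem_univ _)
    have : (Φ.card : ℝ) + 1 = (q : ℝ) ^ (d + 2) := by exact_mod_cast this
    linarith
  -- count functionals vanishing at a point
  have c1 : ∀ i s, ((Φ.filter (fun f => p i s ⬝ᵥ f = 0)).card : ℝ) = (q : ℝ) ^ (d + 1) - 1 := by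
    intro i s
    have hli : LinearIndependent F ![p i s] := by
      rw [linearIndependent_unique_iff]
      simpa using H0 i s
    have hc := card_orth ![p i s] hli
    have e1 : Φ.filter (fun f => p i s ⬝ᵥ f = 0)
        = (Finset.univ.filter (fun f : V => ∀ j, ![p i s] j ⬝ᵥ f = 0)).erase 0 := by
      ext f
      simp [Φ]
    have h0 : (0 : V) ∈ (Finset.univ.filter (fun f : V => ∀ j, ![p i s] j ⬝ᵥ f = 0)) := by
      simp
    have e2 := Finset.card_erase_add_one h0
    rw [← e1] at e2
    rw [← e2, ← hq, Nat.succ_eq_add_one, zero_add, pow_one, pow_succ] at hc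
    have := Nat.eq_of_mul_eq_mul_right (by omega) hc
    have : ((Φ.filter (fun f => p i s ⬝ᵥ f = 0)).card : ℝ) + 1 = (q : ℝ) ^ (d + 1) := by
      exact_mod_cast this
    linarith
  have c2 : ∀ i s s', s ≠ s' →
      ((Φ.filter (fun f => p i s ⬝ᵥ f = 0 ∧ p i s' ⬝ᵥ f = 0)).card : ℝ) = (q : ℝ) ^ d - 1 := by
    intro i s s' hss
    have hc := card_orth ![p i s, p i s'] (H1 i s s' hss)
    have e1 : Φ.filter (fun f => p i s ⬝ᵥ f = 0 ∧ p i s' ⬝ᵥ f = 0)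
        = (Finset.univ.filter (fun f : V => ∀ j, ![p i s, p i s'] j ⬝ᵥ f = 0)).erase 0 := by
      ext f
      simp [Φ, Fin.forall_fin_two]
    have h0 : (0 : V) ∈ (Finset.univ.filter (fun f : V => ∀ j, ![p i s, p i s'] j ⬝ᵥ f = 0)) := by
      simp
    have e2 := Finset.card_erase_add_one h0
    rw [← e1] at e2
    rw [← e2, ← hq, pow_add] at hc
    have := Nat.eq_of_mul_eq_mul_right (by positivity) hc
    have : ((Φ.filter (fun f => p i s ⬝ᵥ f = 0 ∧ p i s' ⬝ᵥ f = 0)).card : ℝ) + 1 = (q : ℝ) ^ d := by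
      exact_mod_cast this
    linarith
  -- number of points of colour i on f
  let N : Fin g → V → ℝ := fun i f => ∑ s, if p i s ⬝ᵥ f = 0 then 1 else 0
  let hit : Fin g → Finset V := fun i => Φ.filter (fun f => ∃ s, p i s ⬝ᵥ f = 0)
  have sN : ∀ i, ∑ f ∈ Φ, N i f = t * ((q : ℝ) ^ (d + 1) - 1) := by
    intro i
    simp only [N]
    rw [Finset.sum_comm]
    simp only [Finset.sum_boole]
    rw [Finset.sum_congr rfl (fun s _ => c1 i s), Finset.sum_const, Finset.card_univ, nsmul_eq_mul]
  have sN2 : ∀ i, ∑ f ∈ Φ, N i f ^ 2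
      = t * ((q : ℝ) ^ (d + 1) - 1) + t * ((t : ℝ) - 1) * ((q : ℝ) ^ d - 1) := by
    intro i
    have e : ∀ f, N i f ^ 2 = ∑ s, ∑ s', if p i s ⬝ᵥ f = 0 ∧ p i s' ⬝ᵥ f = 0 then (1 : ℝ) else 0 := by
      intro f
      simp only [N]
      rw [sq, Finset.sum_mul_sum]
      refine Finset.sum_congr rfl fun s _ => Finset.sum_congr rfl fun s' _ => ?_
      split_ifs <;> simp_all
    simp only [e]
    rw [Finset.sum_comm]
    have e3 : ∀ s, ∑ f ∈ Φ, ∑ s', (if p i s ⬝ᵥ f = 0 ∧ p i s' ⬝ᵥ f = 0 then (1 : ℝ) else 0)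
        = ((q : ℝ) ^ (d + 1) - 1) + ((t : ℝ) - 1) * ((q : ℝ) ^ d - 1) := by
      intro s
      rw [Finset.sum_comm]
      simp only [Finset.sum_boole]
      rw [← Finset.add_sum_erase _ _ (Finset.mem_univ s)]
      congr 1
      · simpa using c1 i s
      · rw [Finset.sum_congr rfl (fun s' hs' => c2 i s s' (Finset.ne_of_mem_erase hs').symm)]
        rw [Finset.sum_const, Finset.card_erase_of_mem (Finset.mem_univ s), Finset.card_univ,
          nsmul_eq_mul, Nat.cast_sub htpos]
        simp [ht]
    rw [Finset.sum_congr rfl (fun s _ => e3 s), Finset.sum_const, Finset.card_univ, nsmul_eq_mul]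
    ring
  have hqR : (2 : ℝ) ≤ q := by exact_mod_cast hq2
  have htR : (1 : ℝ) ≤ t := by exact_mod_cast htpos
  have hm : (1 : ℝ) ≤ (q : ℝ) ^ d := one_le_pow₀ (by linarith)
  -- Cauchy-Schwarz
  have hhit : ∀ i, (t : ℝ) * ((q : ℝ) ^ (d + 2) - q) ≤ (hit i).card * (q + t - 1) := by
    intro i
    have hs : ∑ f ∈ hit i, N i f = ∑ f ∈ Φ, N i f := by
      apply Finset.sum_subset (Finset.filter_subset _ _)
      intro f hf hf'
      simp only [hit, Finset.mem_filter, not_and, not_exists] at hf'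
      simp only [N]
      exact Finset.sum_eq_zero fun s _ => if_neg (hf' hf s)
    have hs2 : ∑ f ∈ hit i, N i f ^ 2 ≤ ∑ f ∈ Φ, N i f ^ 2 :=
      Finset.sum_le_sum_of_subset_of_nonneg (Finset.filter_subset _ _) (fun _ _ _ => sq_nonneg _)
    have cs := sq_sum_le_card_mul_sum_sq (s := hit i) (f := N i)
    rw [hs, sN] at cs
    rw [sN2] at hs2
    have cs2 := cs.trans (mul_le_mul_of_nonneg_left hs2 (Nat.cast_nonneg _))
    have hpos : 0 < (q : ℝ) ^ (d + 1) - 1 := by rw [pow_succ]; nlinarith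
    have hc0 : (0 : ℝ) ≤ (hit i).card := Nat.cast_nonneg _
    generalize ((hit i).card : ℝ) = c at *
    have k1 : (q : ℝ) * ((q : ℝ) ^ d - 1) ≤ (q : ℝ) ^ (d + 1) - 1 := by
      rw [pow_succ]; nlinarith
    have k2 : (q : ℝ) ^ (d + 2) - q = q * ((q : ℝ) ^ (d + 1) - 1) := by ring
    rw [k2]
    generalize (q : ℝ) ^ (d + 1) - 1 = x at *
    generalize (q : ℝ) ^ d - 1 = y at *
    have k3 : (t * x) * (t * (q * x)) ≤ (t * x) * (c * (q + t - 1)) := by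
      have k4 : c * t * (t - 1) * (q * y) ≤ c * t * (t - 1) * x :=
        mul_le_mul_of_nonneg_left k1 (mul_nonneg (by positivity) (by linarith))
      nlinarith
    exact le_of_mul_le_mul_left k3 (by positivity)
  -- each hyperplane meets at most h-1 colours
  have hcol : ∀ f ∈ Φ, (((Finset.univ.filter (fun i => f ∈ hit i)).card : ℕ) : ℝ) ≤ d + 1 := by
    intro f hf
    by_contra hcon
    push Not at hcon
    have hcon' : d + 2 ≤ (Finset.univ.filter (fun i => f ∈ hit i)).card := by
      have : d + 1 < (Finset.univ.filter (fun i => f ∈ hit i)).card := by exact_mod_cast hcon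
      omega
    obtain ⟨W, hW, hWc⟩ := Finset.exists_subset_card_eq hcon'
    let e := W.orderEmbOfFin hWc
    have he : ∀ k, ∃ s, p (e k) s ⬝ᵥ f = 0 := by
      intro k
      have := hW (W.orderEmbOfFin_mem hWc k)
      simp only [hit, Finset.mem_filter] at this
      exact this.2.2
    choose s hs using he
    have hc := card_orth _ (H2 e e.injective s)
    have := Nat.eq_of_mul_eq_mul_right (by positivity) (hc.trans (one_mul _).symm)
    rw [Finset.card_eq_one] at this
    obtain ⟨z, hz⟩ := this
    have m1 : f ∈ ({z} : Finset V) := by rw [← hz]; simpa using hs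
    have m2 : (0 : V) ∈ ({z} : Finset V) := by rw [← hz]; simp
    rw [Finset.mem_singleton] at m1 m2
    have : f ≠ 0 := Finset.ne_of_mem_erase hf
    exact this (m1.trans m2.symm)
  have hdc : ∑ i, ((hit i).card : ℝ) ≤ (d + 1) * ((q : ℝ) ^ (d + 2) - 1) := by
    have e1 : ∀ i, ((hit i).card : ℝ) = ∑ f ∈ Φ, if f ∈ hit i then (1 : ℝ) else 0 := by
      intro i
      rw [Finset.sum_boole, Finset.filter_mem_eq_inter,
        Finset.inter_eq_right.2 (Finset.filter_subset _ _)]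
    rw [Finset.sum_congr rfl (fun i _ => e1 i), Finset.sum_comm]
    refine (Finset.sum_le_sum (g := fun _ => (d : ℝ) + 1) (fun f hf => ?_)).trans ?_
    · rw [Finset.sum_boole]
      exact hcol f hf
    rw [Finset.sum_const, nsmul_eq_mul, hΦ]
    linarith
  have hmain : (g : ℝ) * t * ((q : ℝ) ^ (d + 2) - q)
      ≤ (d + 1) * ((q : ℝ) ^ (d + 2) - 1) * (q + t - 1) := by
    have : ∑ i : Fin g, (t : ℝ) * ((q : ℝ) ^ (d + 2) - q)
        ≤ ∑ i : Fin g, ((hit i).card : ℝ) * (q + t - 1) :=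
      Finset.sum_le_sum fun i _ => hhit i
    rw [← Finset.sum_mul (f := fun i => ((hit i).card : ℝ))] at this
    have t2 := this.trans (mul_le_mul_of_nonneg_right hdc (by linarith))
    simp only [Finset.sum_const, Finset.card_univ, Fintype.card_fin, nsmul_eq_mul] at t2
    linarith
  -- t (q-1) ≤ q^h
  have htM : (t : ℝ) * (q - 1) ≤ (q : ℝ) ^ (d + 2) := by
    let i0 : Fin g := ⟨0, hgpos⟩
    have hinj : Function.Injective (fun x : ι × Fˣ => (x.2 : F) • p i0 x.1) := by
      rintro ⟨s, c⟩ ⟨s', c'⟩ hx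
      simp only at hx
      by_cases hss : s = s'
      · subst hss
        have := smul_left_injective F (H0 i0 s) hx
        simp [Units.ext_iff, this]
      · have := H1 i0 s s' hss
        rw [LinearIndependent.pair_iff] at this
        have := (this (c : F) (-(c' : F)) (by rw [hx]; simp)).1
        exact absurd this c.ne_zero
    have hc := Fintype.card_le_of_injective _ hinj
    rw [Fintype.card_prod, Fintype.card_units, ← Finset.card_univ (α := Fin (d + 2) → F), hV] at hc
    have : ((t * (q - 1) : ℕ) : ℝ) ≤ ((q ^ (d + 2) : ℕ) : ℝ) := by exact_mod_cast hc
    rw [Nat.cast_mul, Nat.cast_sub (by omega)] at this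
    simpa using this
  have := arith_final ((q : ℝ) ^ (d + 2)) q t g (d + 1) ((q : ℝ) ^ d) hqR hm htR
    (by have : (0 : ℝ) ≤ d := Nat.cast_nonneg _
        linarith) (by ring) htM hmain
  push_cast
  linarith

/-- Kernel vectors of local parity checks with exact support. -/
lemma exists_kernel {F : Type} [Field F] {a r : ℕ} (A : Matrix (Fin a) (Fin r) F)
    (hA : ∀ S : Finset (Fin r), S.card = a →
      LinearIndependent F (fun c : {x // x ∈ S} => fun j : Fin a => A j c.1))
    (S : Finset (Fin r)) (hS : S.card = a + 1) :
    ∃ x : Fin r → F, (∀ k, x k ≠ 0 ↔ k ∈ S) ∧ ∀ j, ∑ k, A j k * x k = 0 := by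
  classical
  have hnot : ¬ LinearIndependent F (fun c : {x // x ∈ S} => fun j : Fin a => A j c.1) := by
    intro hli
    have := hli.fintype_card_le_finrank
    simp [hS] at this
  rw [Fintype.not_linearIndependent_iff] at hnot
  obtain ⟨c, hc, ⟨k0, hk0S⟩, hk0⟩ := hnot
  let x : Fin r → F := fun k => if hk : k ∈ S then c ⟨k, hk⟩ else 0
  have hx0 : ∀ k, k ∉ S → x k = 0 := fun k hk => dif_neg hk
  have hAx : ∀ j, ∑ k, A j k * x k = 0 := by
    intro j
    have := congrFun hc j
    rw [← Finset.sum_subset (Finset.subset_univ S) (fun k _ hk => by rw [hx0 k hk, mul_zero]),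
      ← Finset.sum_coe_sort]
    simp only [Finset.sum_apply, Pi.smul_apply, smul_eq_mul, Pi.zero_apply] at this
    rw [← this]
    refine Finset.sum_congr rfl fun k _ => ?_
    simp only [x, k.2, dif_pos]
    ring
  refine ⟨x, fun k => ⟨fun hk => by_contra fun h => hk (hx0 k h), fun hk hxk => ?_⟩, hAx⟩
  have hli := hA (S.erase k) (by rw [Finset.card_erase_of_mem hk, hS]; rfl)
  rw [Fintype.linearIndependent_iff] at hli
  have hz : ∀ l, l ∉ S.erase k → x l = 0 := by
    intro l hl
    by_cases hlk : l = k
    · rw [hlk, hxk]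
    · exact hx0 l fun h => hl (Finset.mem_erase.2 ⟨hlk, h⟩)
  have key := hli (fun l => x l.1) (by
    ext j
    simp only [Finset.sum_apply, Pi.smul_apply, smul_eq_mul, Pi.zero_apply]
    rw [Finset.sum_coe_sort (S.erase k) (fun l => x l * A j l),
      Finset.sum_subset (Finset.subset_univ _) (fun l _ hl => by rw [hz l hl, zero_mul])]
    rw [← hAx j]
    exact Finset.sum_congr rfl fun _ _ => mul_comm _ _)
  have hk0' : x k0 = c ⟨k0, hk0S⟩ := dif_pos hk0S
  by_cases hm : k0 ∈ S.erase k
  · exact hk0 (hk0' ▸ key ⟨k0, hm⟩)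
  · exact hk0 (hk0' ▸ hz k0 hm)

/-- Codewords with correctable support vanish. -/
lemma codeword_zero {F : Type} [Field F] {g r a h : ℕ}
    {A : Fin g → Matrix (Fin a) (Fin r) F} {B : Fin g → Matrix (Fin h) (Fin r) F}
    (hMR : IsMRLRC F g r a h A B) (har : a < r) (hhg : h ≤ g)
    (U : Fin g → Finset (Fin r)) (hU : ∑ i, ((U i).card - a) ≤ h)
    (y : Fin g → Fin r → F) (hy : ∀ i k, k ∉ U i → y i k = 0)
    (hAy : ∀ i j, ∑ k, A i j k * y i k = 0)
    (hBy : ∀ j, ∑ i, ∑ k, B i j k * y i k = 0) : ∀ i k, y i k = 0 := by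
  classical
  have hW : ∀ i, ∃ W : Finset (Fin r), U i ⊆ W ∧ W.card = max a (U i).card := by
    intro i
    apply Finset.exists_superset_card_eq (le_max_right _ _)
    simp only [Fintype.card_fin]
    exact max_le har.le (by simpa using Finset.card_le_univ (U i))
  choose W hUW hWc using hW
  let E0 : Finset (Fin g × Fin r) := Finset.univ.filter (fun x => x.2 ∈ W x.1)
  have hfib : ∀ i, (E0.filter (fun x => x.1 = i)).card = (W i).card := by
    intro i
    have : E0.filter (fun x => x.1 = i) = (W i).map ⟨fun k => (i, k), fun _ _ hk => by simpa using hk⟩ := by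
      ext ⟨i', k⟩
      simp only [E0, Finset.mem_filter, Finset.mem_univ, true_and, Finset.mem_map,
        Function.Embedding.coeFn_mk, Prod.mk.injEq]
      constructor
      · rintro ⟨h1, rfl⟩; exact ⟨k, h1, rfl⟩
      · rintro ⟨k', h1, h2⟩; cases h2; exact ⟨h1, rfl⟩
    rw [this, Finset.card_map]
  have hE0 : E0.card ≤ a * g + h := by
    have : E0.card = ∑ i, (W i).card := by
      rw [Finset.card_eq_sum_card_fiberwise (f := Prod.fst) (t := Finset.univ) (by simp [Set.MapsTo])]
      exact Finset.sum_congr rfl fun i _ => hfib i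
    rw [this]
    have e : ∀ i, (W i).card = a + ((U i).card - a) := by
      intro i; rw [hWc]; omega
    simp only [e, Finset.sum_add_distrib, Finset.sum_const, Finset.card_univ, Fintype.card_fin,
      smul_eq_mul]
    nlinarith
  obtain ⟨E, hE, hEc⟩ := Finset.exists_superset_card_eq hE0 (by
    simp only [Fintype.card_prod, Fintype.card_fin]
    nlinarith)
  have hli := hMR.2 E hEc (fun i => by
    calc a ≤ (W i).card := by rw [hWc]; exact le_max_left _ _
      _ = _ := (hfib i).symm
      _ ≤ _ := Finset.card_le_card (Finset.filter_subset_filter _ hE))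
  have hz : ∀ c : Fin g × Fin r, c ∉ E → y c.1 c.2 = 0 := by
    intro c hc
    apply hy
    intro hcU
    exact hc (hE (by simp only [E0, Finset.mem_filter, Finset.mem_univ, true_and]; exact hUW _ hcU))
  rw [Fintype.linearIndependent_iff] at hli
  have key := hli (fun c => y c.1.1 c.1.2) (by
    ext ρ
    simp only [Finset.sum_apply, Pi.smul_apply, smul_eq_mul, Pi.zero_apply]
    rw [Finset.sum_coe_sort E (fun c => y c.1 c.2 * lrcParityCheck F g r a h A B ρ c),
      Finset.sum_subset (Finset.subset_univ _) (fun l _ hl => by rw [hz l hl, zero_mul]),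
      Fintype.sum_prod_type]
    rcases ρ with ⟨i, j⟩ | j
    · simp only [lrcParityCheck, Sum.elim_inl]
      rw [Finset.sum_eq_single i]
      · rw [← hAy i j]
        exact Finset.sum_congr rfl fun k _ => by simp [mul_comm]
      · intro b _ hb
        exact Finset.sum_eq_zero fun k _ => by simp [hb.symm]
      · simp
    · simp only [lrcParityCheck, Sum.elim_inr]
      rw [← hBy j]
      exact Finset.sum_congr rfl fun i _ => Finset.sum_congr rfl fun k _ => mul_comm _ _)
  intro i k
  by_cases hm : (i, k) ∈ E
  · exact key ⟨(i, k), hm⟩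
  · exact hz (i, k) hm

/-- **Proposition 3.5.** If `2 ≤ h < a + 2` and `h ≤ g = n/r`, then any maximally recoverable
`(n, r, h, a, q)`-local reconstruction code satisfies
`q ≥ ((n/r)/(h-1) - 1) * C(r-a+h-2, h-1) - 4`. -/
theorem mrlrc_field_size_lower_bound_h_lt_a_add_two
    (q n r a h : ℕ) (hq : IsPrimePow q) (hr : 0 < r) (hrn : r ∣ n) (har : a < r)
    (h2 : 2 ≤ h) (hha : h < a + 2) (hhg : h ≤ n / r)
    (hex : ExistsMRLRC (n / r) r h a q) :
    (((n / r : ℕ) : ℝ) / ((h : ℝ) - 1) - 1) * (Nat.choose (r - a + h - 2) (h - 1) : ℝ) - 4 ≤ (q : ℝ) := by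
  classical
  obtain ⟨F, _, _, hcard, A, B, hMR⟩ := hex
  generalize n / r = g at *
  -- kernel vectors
  have hx : ∀ (i : Fin g) (S : Finset (Fin r)), ∃ x : Fin r → F, S.card = a + 1 →
      (∀ k, x k ≠ 0 ↔ k ∈ S) ∧ ∀ j, ∑ k, A i j k * x k = 0 := by
    intro i S
    by_cases hS : S.card = a + 1
    · obtain ⟨x, hx⟩ := exists_kernel (A i) (hMR.1 i) S hS
      exact ⟨x, fun _ => hx⟩
    · exact ⟨0, fun h => absurd h hS⟩
  choose x hx using hx
  obtain ⟨T, -, hT⟩ := Finset.exists_subset_card_eq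
    (s := (Finset.univ : Finset (Fin r))) (n := a + 2 - h) (by simp; omega)
  let ι := {s // s ∈ Finset.powersetCard (h - 1) Tᶜ}
  let S : ι → Finset (Fin r) := fun s => T ∪ s.1
  have hdisj : ∀ s : ι, Disjoint T s.1 := fun s =>
    Finset.disjoint_left.2 fun k hk hk' =>
      (Finset.mem_compl.1 ((Finset.mem_powersetCard.1 s.2).1 hk')) hk
  have hS : ∀ s, (S s).card = a + 1 := by
    intro s
    simp only [S]
    rw [Finset.card_union_of_disjoint (hdisj s), hT, (Finset.mem_powersetCard.1 s.2).2]
    omega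
  have hSS : ∀ s s', (S s ∪ S s').card ≤ a + h := by
    intro s s'
    have : S s ∪ S s' = T ∪ (s.1 ∪ s'.1) := by
      ext k; simp only [S, Finset.mem_union]; tauto
    rw [this]
    have h1 := Finset.card_union_le T (s.1 ∪ s'.1)
    have h3 := Finset.card_union_le s.1 s'.1
    rw [(Finset.mem_powersetCard.1 s.2).2, (Finset.mem_powersetCard.1 s'.2).2] at h3
    omega
  have hSinj : ∀ s s', S s = S s' → s = s' := by
    intro s s' hss
    apply Subtype.ext
    have e : ∀ u : ι, u.1 = S u \ T := fun u => by
      simp only [S]; rw [Finset.union_sdiff_cancel_left (hdisj u)]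
    rw [e s, e s', hss]
  let p : Fin g → ι → Fin h → F := fun i s j => ∑ k, B i j k * x i (S s) k
  have hιc : Fintype.card ι = Nat.choose (r - a + h - 2) (h - 1) := by
    simp only [ι]
    rw [Fintype.card_coe, Finset.card_powersetCard, Finset.card_compl, hT, Fintype.card_fin]
    congr 1
    omega
  have hne : ∀ s, (S s).Nonempty := fun s => Finset.card_pos.1 (by rw [hS]; omega)
  -- combination inside one group
  have hcomb : ∀ (i0 : Fin g) (s s' : ι) (c c' : F),
      (∀ j, c * p i0 s j + c' * p i0 s' j = 0) →
      ∀ k, c * x i0 (S s) k + c' * x i0 (S s') k = 0 := by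
    intro i0 s s' c c' hz k
    have := codeword_zero hMR har hhg (fun i => if i = i0 then S s ∪ S s' else ∅)
      (by
        rw [Finset.sum_eq_single i0]
        · have := hSS s s'
          simp only [if_true]; omega
        · intro b _ hb; simp [hb]
        · simp)
      (fun i k => if i = i0 then c * x i0 (S s) k + c' * x i0 (S s') k else 0)
      (by
        intro i k hk
        by_cases hi : i = i0
        · simp only [hi, if_true, Finset.mem_union, not_or] at hk ⊢
          have k1 : x i0 (S s) k = 0 := by_contra fun h => hk.1 (((hx i0 _ (hS s)).1 k).1 h)
          have k2 : x i0 (S s') k = 0 := by_contra fun h => hk.2 (((hx i0 _ (hS s')).1 k).1 h)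
          rw [k1, k2]; ring
        · simp [hi])
      (by
        intro i j
        by_cases hi : i = i0
        · subst hi
          have k1 := (hx i _ (hS s)).2 j
          have k2 := (hx i _ (hS s')).2 j
          calc _ = c * ∑ k, A i j k * x i (S s) k + c' * ∑ k, A i j k * x i (S s') k := by
                rw [Finset.mul_sum, Finset.mul_sum, ← Finset.sum_add_distrib]
                refine Finset.sum_congr rfl fun k _ => ?_
                rw [if_pos rfl]; ring
            _ = 0 := by rw [k1, k2]; ring
        · simp [hi])
      (by
        intro j
        rw [Finset.sum_eq_single i0]
        · refine Eq.trans ?_ (hz j)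
          simp only [p]
          rw [Finset.mul_sum, Finset.mul_sum, ← Finset.sum_add_distrib]
          refine Finset.sum_congr rfl fun k _ => ?_
          rw [if_pos trivial]; ring
        · intro b _ hb; simp [hb]
        · simp) i0 k
    simpa using this
  have main := counting h2 p
    (by
      intro i s hp
      obtain ⟨k, hk⟩ := hne s
      have := hcomb i s s 1 0 (by intro j; rw [hp]; simp) k
      exact ((hx i _ (hS s)).1 k).2 hk (by simpa using this))
    (by
      intro i s s' hss
      have hne1 : ∀ u u' : ι, u ≠ u' → ∃ k, k ∈ S u ∧ k ∉ S u' := by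
        intro u u' huu
        by_contra hcon
        push Not at hcon
        exact huu (hSinj u u' (Finset.eq_of_subset_of_card_le hcon (by rw [hS, hS])))
      have hx0 : ∀ u k, k ∉ S u → x i (S u) k = 0 := fun u k hk =>
        by_contra fun h => hk (((hx i _ (hS u)).1 k).1 h)
      rw [LinearIndependent.pair_iff]
      intro c c' hz
      have hz' := hcomb i s s' c c' (fun j => by simpa using congrFun hz j)
      constructor
      · obtain ⟨k, hk, hk'⟩ := hne1 s s' hss
        have := hz' k
        rw [hx0 s' k hk', mul_zero, add_zero] at this
        exact (mul_eq_zero.1 this).resolve_right (((hx i _ (hS s)).1 k).2 hk)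
      · obtain ⟨k, hk, hk'⟩ := hne1 s' s hss.symm
        have := hz' k
        rw [hx0 s k hk', mul_zero, zero_add] at this
        exact (mul_eq_zero.1 this).resolve_right (((hx i _ (hS s')).1 k).2 hk))
    (by
      intro e he s
      rw [Fintype.linearIndependent_iff]
      intro c hc
      have := codeword_zero hMR har hhg
        (fun i => Finset.univ.filter (fun k => ∃ m, e m = i ∧ k ∈ S (s m)))
        (by
          have hle : ∀ i, (Finset.univ.filter (fun k => ∃ m, e m = i ∧ k ∈ S (s m))).card - a
              ≤ if i ∈ Finset.univ.image e then 1 else 0 := by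
            intro i
            by_cases hi : ∃ m, e m = i
            · obtain ⟨m, rfl⟩ := hi
              have : (Finset.univ.filter (fun k => ∃ m', e m' = e m ∧ k ∈ S (s m'))) = S (s m) := by
                ext k
                simp only [Finset.mem_filter, Finset.mem_univ, true_and]
                constructor
                · rintro ⟨m', h1, h3⟩; rw [he h1] at h3; exact h3
                · intro h3; exact ⟨m, rfl, h3⟩
              rw [this, hS, if_pos (Finset.mem_image_of_mem _ (Finset.mem_univ _))]
              omega
            · have : (Finset.univ.filter (fun k => ∃ m', e m' = i ∧ k ∈ S (s m'))) = ∅ := by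
                ext k
                simp only [Finset.mem_filter, Finset.mem_univ, true_and, Finset.notMem_empty, iff_false]
                rintro ⟨m', h1, -⟩
                exact hi ⟨m', h1⟩
              rw [this]; simp
          refine (Finset.sum_le_sum fun i _ => hle i).trans ?_
          rw [Finset.sum_boole, Finset.filter_univ_mem, Finset.card_image_of_injective _ he]
          simp)
        (fun i k => ∑ m, if e m = i then c m * x i (S (s m)) k else 0)
        (by
          intro i k hk
          simp only [Finset.mem_filter, Finset.mem_univ, true_and, not_exists, not_and] at hk
          refine Finset.sum_eq_zero fun m _ => ?_
          split_ifs with hm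
          · have : x i (S (s m)) k = 0 :=
              by_contra fun h => hk m hm (((hx i _ (hS (s m))).1 k).1 h)
            rw [this, mul_zero]
          · rfl)
        (by
          intro i j
          simp only [Finset.mul_sum]
          rw [Finset.sum_comm]
          refine Finset.sum_eq_zero fun m _ => ?_
          split_ifs with hm
          · have k1 := (hx i _ (hS (s m))).2 j
            calc _ = c m * ∑ k, A i j k * x i (S (s m)) k := by
                  rw [Finset.mul_sum]
                  exact Finset.sum_congr rfl fun k _ => by ring
              _ = 0 := by rw [k1, mul_zero]
          · simp)
        (by
          intro j
          have hcj := congrFun hc j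
          simp only [Finset.sum_apply, Pi.smul_apply, smul_eq_mul, Pi.zero_apply] at hcj
          refine Eq.trans ?_ hcj
          simp only [Finset.mul_sum]
          rw [Finset.sum_congr rfl (fun i _ => Finset.sum_comm), Finset.sum_comm]
          refine Finset.sum_congr rfl fun m _ => ?_
          rw [Finset.sum_eq_single (e m)]
          · simp only [p, if_true]
            rw [Finset.mul_sum]
            exact Finset.sum_congr rfl fun k _ => by ring
          · intro b _ hb; simp [hb.symm]
          · simp)
      intro m
      obtain ⟨k, hk⟩ := hne (s m)
      have h1 := this (e m) k
      rw [Finset.sum_eq_single m] at h1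
      · rw [if_pos rfl] at h1
        exact (mul_eq_zero.1 h1).resolve_right (((hx (e m) _ (hS (s m))).1 k).2 hk)
      · intro b _ hb
        exact if_neg fun h => hb (he h)
      · simp)
  rw [hιc, hcard] at main
  have hdR : (1 : ℝ) ≤ (h : ℝ) - 1 := by
    have : (2 : ℝ) ≤ h := by exact_mod_cast h2
    linarith
  generalize (Nat.choose (r - a + h - 2) (h - 1) : ℝ) = t at *
  have key : (g : ℝ) * t / ((h : ℝ) - 1) ≤ q + t + 4 := by
    rw [div_le_iff₀ (by linarith)]
    linarith
  have e : ((g : ℝ) / ((h : ℝ) - 1) - 1) * t = (g : ℝ) * t / ((h : ℝ) - 1) - t := by ring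
  rw [e]
  linarith
end

section
/- Let A_1,…,A_g ∈ 𝔽_q^{a×r} and B_1,…,B_g ∈ 𝔽_q^{h×r} define a maximally recoverable (n,r,h,a,q)-local reconstruction code with g = n/r ≥ h local groups. For i ∈ {1,…,g} and S ⊆ {1,…,r} with |S| = a+1, let A_i(S) be the a×(a+1) submatrix of A_i on the columns in S, let A_i(S)^⊥ ∈ 𝔽_q^{a+1} be a nonzero vector with A_i(S)·A_i(S)^⊥ = 0, and set p_{i,S} = B_i(S)·A_i(S)^⊥ ∈ 𝔽_q^h. Then for every choice of h pairwise distinct indices ℓ_1,…,ℓ_h ∈ {1,…,g} and sets S_1,…,S_h ⊆ {1,…,r} each of size a+1, the h×h matrix with columns p_{ℓ_1,S_1},…,p_{ℓ_h,S_h} is invertible. -/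
/-- **Claim 3.2.** For a maximally recoverable LRC with `g ≥ h` local groups, the vectors
`p (i, S) = B i (S) · (A i (S))^⊥ ∈ F^h` (for `S ⊆ [r]` of size `a+1`, where `(A i (S))^⊥`
is a nonzero vector in the kernel of the submatrix `A i (S)`, here encoded as a vector `v`
on `Fin r` supported on `S`): for any `h` pairwise distinct group indices `ℓ 1, …, ℓ h`
and sets `S 1, …, S h` of size `a+1`, the `h × h` matrix with columns
`p (ℓ 1, S 1), …, p (ℓ h, S h)` is invertible. -/
theorem mrlrc_p_vectors_distinct_groups_full_rank
    (F : Type) [Field F] [Fintype F] (g r a h : ℕ) (hgh : h ≤ g)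
    (A : Fin g → Matrix (Fin a) (Fin r) F) (B : Fin g → Matrix (Fin h) (Fin r) F)
    (hMR : IsMRLRC F g r a h A B)
    (ℓ : Fin h → Fin g) (hℓ : Function.Injective ℓ)
    (S : Fin h → Finset (Fin r)) (hS : ∀ k, (S k).card = a + 1)
    (v : Fin h → Fin r → F)
    (hv0 : ∀ k, v k ≠ 0)
    (hvsupp : ∀ k, ∀ c ∉ S k, v k c = 0)
    (hvker : ∀ k, ∀ j : Fin a, ∑ c ∈ S k, A (ℓ k) j c * v k c = 0) :
    (Matrix.of fun j k : Fin h => ∑ c ∈ S k, B (ℓ k) j c * v k c).det ≠ 0 := by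
  intro hdet
  obtain ⟨w, hw0, hw⟩ := Matrix.exists_mulVec_eq_zero_iff.mpr hdet
  obtain ⟨k0, hk0⟩ := Function.ne_iff.mp hw0
  simp only [Pi.zero_apply] at hk0
  have hT : ∀ i : Fin g, ∃ T : Finset (Fin r), (∀ k, ℓ k = i → T = S k) ∧
      T.card = a + (Finset.univ.filter (fun k => ℓ k = i)).card := by
    intro i
    by_cases hi : ∃ k, ℓ k = i
    · obtain ⟨k, rfl⟩ := hi
      refine ⟨S k, fun k' hk' => by rw [hℓ hk'], ?_⟩
      have : Finset.univ.filter (fun k' => ℓ k' = ℓ k) = {k} := by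
        ext k'
        simp [hℓ.eq_iff]
      rw [this, hS]
      simp
    · obtain ⟨T, -, hTc⟩ := Finset.exists_subset_card_eq (s := S k0) (n := a) (by rw [hS]; omega)
      refine ⟨T, fun k hk => absurd ⟨k, hk⟩ hi, ?_⟩
      have : Finset.univ.filter (fun k' => ℓ k' = i) = ∅ := by
        ext k'
        simp only [Finset.mem_filter, Finset.mem_univ, true_and, Finset.notMem_empty, iff_false]
        exact fun hk => hi ⟨k', hk⟩
      rw [this, hTc]
      simp
  choose T hT1 hT2 using hT
  let E : Finset (Fin g × Fin r) := Finset.univ.filter (fun x => x.2 ∈ T x.1)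
  have hEi : ∀ i, (E.filter (fun x => x.1 = i)).card = (T i).card := by
    intro i
    have : E.filter (fun x => x.1 = i) = (T i).map ⟨fun c => (i, c), fun c d h => by simpa using h⟩ := by
      ext ⟨i', c⟩
      simp only [E, Finset.mem_filter, Finset.mem_univ, true_and, Finset.mem_map]
      constructor
      · rintro ⟨h1, rfl⟩
        exact ⟨c, h1, rfl⟩
      · rintro ⟨d, h1, h2⟩
        cases h2
        exact ⟨h1, rfl⟩
    rw [this, Finset.card_map]
  have hEc : E.card = a * g + h := by
    rw [Finset.card_eq_sum_card_fiberwise (f := fun x => x.1) (t := Finset.univ)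
      (fun _ _ => by simp)]
    simp only [hEi, hT2]
    rw [Finset.sum_add_distrib]
    have := Finset.card_eq_sum_card_fiberwise (s := (Finset.univ : Finset (Fin h))) (f := ℓ)
      (t := Finset.univ) (fun _ _ => by simp)
    rw [← this]
    simp [mul_comm]
  have hli := hMR.2 E hEc (fun i => by rw [hEi, hT2]; omega)
  let f : Fin g × Fin r → F := fun x => ∑ k, if ℓ k = x.1 then w k * v k x.2 else 0
  have hfE : ∀ x, x ∉ E → f x = 0 := by
    intro x hx
    refine Finset.sum_eq_zero fun k _ => ?_
    split_ifs with hk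
    · rw [hvsupp k, mul_zero]
      intro hc
      apply hx
      simp only [E, Finset.mem_filter, Finset.mem_univ, true_and]
      rwa [hT1 _ k hk]
    · rfl
  have hsum : ∀ ρ, ∑ x, f x * lrcParityCheck F g r a h A B ρ x =
      ∑ k, w k * ∑ c ∈ S k, lrcParityCheck F g r a h A B ρ (ℓ k, c) * v k c := by
    intro ρ
    simp only [f, Finset.sum_mul]
    rw [Finset.sum_comm]
    refine Finset.sum_congr rfl fun k _ => ?_
    rw [Fintype.sum_prod_type, Finset.sum_eq_single (ℓ k)]
    · rw [Finset.mul_sum]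
      symm
      rw [Finset.sum_subset (Finset.subset_univ (S k))]
      · refine Finset.sum_congr rfl fun c _ => ?_
        simp only [if_true]
        ring
      · intro c _ hc
        rw [hvsupp k c hc]
        simp
    · intro i _ hi
      simp [hi.symm]
    · simp
  have hzero : ∀ ρ, ∑ x, f x * lrcParityCheck F g r a h A B ρ x = 0 := by
    intro ρ
    rw [hsum]
    rcases ρ with ⟨i, j⟩ | j
    · refine Finset.sum_eq_zero fun k _ => ?_
      by_cases hi : i = ℓ k
      · subst hi
        simp [lrcParityCheck, hvker]
      · simp [lrcParityCheck, hi]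
    · have := congrFun hw j
      simp only [Matrix.mulVec, dotProduct, Matrix.of_apply, Pi.zero_apply] at this
      rw [← this]
      refine Finset.sum_congr rfl fun k _ => ?_
      simp only [lrcParityCheck, Sum.elim_inr]
      ring
  have hf0 := Fintype.linearIndependent_iff.mp hli (fun x => f x.1) (by
    ext ρ
    simp only [Finset.sum_apply, Pi.smul_apply, smul_eq_mul, Pi.zero_apply]
    rw [Finset.sum_coe_sort E (fun x => f x * lrcParityCheck F g r a h A B ρ x), ← hzero ρ]
    refine Finset.sum_subset (Finset.subset_univ E) fun x _ hx => ?_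
    rw [hfE x hx, zero_mul])
  obtain ⟨c, hc⟩ := Function.ne_iff.mp (hv0 k0)
  have hfc : f (ℓ k0, c) = w k0 * v k0 c := by
    simp only [f]
    rw [Finset.sum_eq_single k0]
    · simp
    · intro k _ hk
      simp [hℓ.ne hk]
    · simp
  have : f (ℓ k0, c) = 0 := by
    by_cases hx : (ℓ k0, c) ∈ E
    · exact hf0 ⟨_, hx⟩
    · exact hfE _ hx
  rw [hfc] at this
  exact (mul_ne_zero hk0 hc) this
end

section
/- Fix integers a ≥ 0 and h ≥ g ≥ 2 with a ≤ h − 2⌈h/g⌉. There exists a constant c > 0 (depending only on a, g, h) such that for every prime power q and every n divisible by g, if there exists a maximally recoverable (n, n/g, h, a, q)-local reconstruction code with g local groups each of size r = n/g, then q ≥ c · n^{1 + a/⌈h/g⌉}. -/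
open Finset in
lemma mr_surj {F ι κ : Type} [Field F] [Fintype κ] (v : ι → κ → F) (T : Finset ι)
    (hv : LinearIndependent F (fun c : {x // x ∈ T} => v c.1)) (f : ι → F) :
    ∃ x : κ → F, ∀ c ∈ T, x ⬝ᵥ v c = f c := by
  classical
  obtain ⟨φ, hφ⟩ := LinearMap.exists_extend ((Module.Basis.span hv).constr F (fun c => f c.1))
  refine ⟨fun k => φ (Pi.single k 1), fun c hc => ?_⟩
  have h1 : φ (v c) = f c := by
    have h2 := LinearMap.congr_fun hφ (Module.Basis.span hv ⟨c, hc⟩)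
    rw [Module.Basis.constr_basis] at h2
    rw [← h2]
    simp [Module.Basis.span_apply]
  rw [← h1, LinearMap.pi_apply_eq_sum_univ φ (v c)]
  simp only [dotProduct, smul_eq_mul]
  refine Finset.sum_congr rfl fun k _ => ?_
  rw [mul_comm]
  congr 2
  ext j
  simp [Pi.single_apply, eq_comm]

/-- vectors of the coset whose combined codeword vanishes on `T` -/
def mrK {F : Type} [Field F] {r a h : ℕ} (α : Fin r → Fin a → F) (β : Fin r → Fin h → F)
    (T : Finset (Fin r)) : Submodule F (Fin h → F) where
  carrier := {w | ∃ u : Fin a → F, ∀ c ∈ T, w ⬝ᵥ β c + u ⬝ᵥ α c = 0}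
  zero_mem' := ⟨0, by simp⟩
  add_mem' := by
    rintro w w' ⟨u, hu⟩ ⟨u', hu'⟩
    refine ⟨u + u', fun c hc => ?_⟩
    rw [add_dotProduct, add_dotProduct]
    linear_combination hu c hc + hu' c hc
  smul_mem' := by
    rintro k w ⟨u, hu⟩
    refine ⟨k • u, fun c hc => ?_⟩
    rw [smul_dotProduct, smul_dotProduct, ← smul_add, hu c hc, smul_zero]

lemma mrK_finrank {F : Type} [Field F] {r a h : ℕ} (α : Fin r → Fin a → F) (β : Fin r → Fin h → F)
    (hAinj : ∀ T : Finset (Fin r), a ≤ T.card → ∀ u : Fin a → F, (∀ c ∈ T, u ⬝ᵥ α c = 0) → u = 0)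
    (hAB : ∀ T : Finset (Fin r), T.card ≤ a + h → ∀ f : Fin r → F,
      ∃ (w : Fin h → F) (u : Fin a → F), ∀ c ∈ T, w ⬝ᵥ β c + u ⬝ᵥ α c = f c)
    (T : Finset (Fin r)) (h1 : a ≤ T.card) (h2 : T.card ≤ a + h) :
    Module.finrank F (mrK α β T) + (T.card - a) = h := by
  classical
  let Φ : ((Fin h → F) × (Fin a → F)) →ₗ[F] ({x // x ∈ T} → F) :=
    { toFun := fun p c => p.1 ⬝ᵥ β c.1 + p.2 ⬝ᵥ α c.1
      map_add' := by
        intro p p'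
        ext c
        simp only [Prod.fst_add, Prod.snd_add, add_dotProduct, Pi.add_apply]
        ring
      map_smul' := by
        intro k p
        ext c
        simp [smul_dotProduct, mul_add] }
  have hsurj : Function.Surjective Φ := by
    intro f
    obtain ⟨w, u, hwu⟩ := hAB T h2 (fun c => if hc : c ∈ T then f ⟨c, hc⟩ else 0)
    refine ⟨(w, u), ?_⟩
    ext c
    have := hwu c.1 c.2
    simpa [Φ] using this
  have hrk := LinearMap.finrank_range_add_finrank_ker Φ
  rw [LinearMap.range_eq_top.2 hsurj, finrank_top] at hrk
  simp only [Module.finrank_prod, Module.finrank_pi, Fintype.card_coe, Fintype.card_fin] at hrk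
  let ψ := (LinearMap.fst F (Fin h → F) (Fin a → F)).domRestrict (LinearMap.ker Φ)
  have hψ : Function.Injective ψ := by
    rw [injective_iff_map_eq_zero]
    rintro ⟨⟨w, u⟩, hx⟩ h0
    have hw : w = 0 := h0
    subst hw
    have hu : u = 0 := by
      apply hAinj T h1
      intro c hc
      have := congrFun (LinearMap.mem_ker.1 hx) ⟨c, hc⟩
      simpa [Φ] using this
    subst hu
    rfl
  have hr : LinearMap.range ψ = mrK α β T := by
    ext w
    constructor
    · rintro ⟨⟨⟨w', u⟩, hx⟩, rfl⟩
      refine ⟨u, fun c hc => ?_⟩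
      exact congrFun (LinearMap.mem_ker.1 hx) ⟨c, hc⟩
    · rintro ⟨u, hu⟩
      refine ⟨⟨(w, u), ?_⟩, rfl⟩
      rw [LinearMap.mem_ker]
      ext c
      exact hu c.1 c.2
  have := LinearMap.finrank_range_of_inj hψ
  rw [hr] at this
  omega

lemma mrK_inf_finrank {F : Type} [Field F] {r a h t : ℕ}
    (α : Fin r → Fin a → F) (β : Fin r → Fin h → F) (hat : a + 2 * t ≤ h)
    (hA : ∀ T : Finset (Fin r), T.card ≤ a → ∀ f : Fin r → F,
      ∃ u : Fin a → F, ∀ c ∈ T, u ⬝ᵥ α c = f c)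
    (hAinj : ∀ T : Finset (Fin r), a ≤ T.card → ∀ u : Fin a → F, (∀ c ∈ T, u ⬝ᵥ α c = 0) → u = 0)
    (hAB : ∀ T : Finset (Fin r), T.card ≤ a + h → ∀ f : Fin r → F,
      ∃ (w : Fin h → F) (u : Fin a → F), ∀ c ∈ T, w ⬝ᵥ β c + u ⬝ᵥ α c = f c)
    (S S' : Finset (Fin r)) (hS : S.card = a + t) (hS' : S'.card = a + t) :
    Module.finrank F (mrK α β S ⊓ mrK α β S' : Submodule F (Fin h → F)) + 2 * t
      = h + ((S ∩ S').card - a) := by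
  classical
  have hcard := Finset.card_union_add_card_inter S S'
  rcases le_total a (S ∩ S').card with hle | hle
  · have he : mrK α β S ⊓ mrK α β S' = mrK α β (S ∪ S') := by
      ext w
      constructor
      · rintro ⟨⟨u, hu⟩, ⟨u', hu'⟩⟩
        have h0 : u - u' = 0 := by
          apply hAinj _ hle
          intro c hc
          rw [Finset.mem_inter] at hc
          rw [sub_dotProduct]
          linear_combination hu c hc.1 - hu' c hc.2
        have h0 : u = u' := sub_eq_zero.1 h0
        subst h0
        refine ⟨u, fun c hc => ?_⟩
        rcases Finset.mem_union.1 hc with hc | hc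
        · exact hu c hc
        · exact hu' c hc
      · rintro ⟨u, hu⟩
        exact ⟨⟨u, fun c hc => hu c (Finset.mem_union_left _ hc)⟩,
          ⟨u, fun c hc => hu c (Finset.mem_union_right _ hc)⟩⟩
    rw [he]
    have hi : (S ∩ S').card ≤ S.card := Finset.card_le_card Finset.inter_subset_left
    have := mrK_finrank α β hAinj hAB (S ∪ S') (by omega) (by omega)
    omega
  · have htop : mrK α β S ⊔ mrK α β S' = ⊤ := by
      rw [eq_top_iff]
      intro w _
      obtain ⟨p, hp⟩ := hA (S ∩ S') hle (fun c => w ⬝ᵥ β c)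
      obtain ⟨w1, x, hx⟩ := hAB (S ∪ S') (by omega)
        (fun c => if c ∈ S then p ⬝ᵥ α c else w ⬝ᵥ β c)
      refine Submodule.mem_sup.2 ⟨w1, ⟨x - p, fun c hc => ?_⟩, w - w1, ⟨- x, fun c hc => ?_⟩, by simp⟩
      · have := hx c (Finset.mem_union_left _ hc)
        simp only [hc, if_true] at this
        rw [sub_dotProduct]
        linear_combination this
      · have := hx c (Finset.mem_union_right _ hc)
        rw [sub_dotProduct, neg_dotProduct]
        by_cases hcS : c ∈ S
        · have h3 := hp c (Finset.mem_inter.2 ⟨hcS, hc⟩)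
          simp only [hcS, if_true] at this
          linear_combination -this - h3
        · simp only [hcS, if_false] at this
          linear_combination -this
    have h4 := Submodule.finrank_sup_add_finrank_inf_eq (mrK α β S) (mrK α β S')
    rw [htop, finrank_top] at h4
    simp only [Module.finrank_pi, Fintype.card_fin] at h4
    have h5 := mrK_finrank α β hAinj hAB S (by omega) (by omega)
    have h6 := mrK_finrank α β hAinj hAB S' (by omega) (by omega)
    omega

lemma mr_second_moment {V I : Type} [Fintype V] (s : Finset I) (P : I → V → Prop)
    (p ε : ℝ) (hp : 0 < p) (hs : 0 < s.card) (e : I → I → ℝ)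
    (h1 : ∀ S ∈ s, (Nat.card {w // P S w} : ℝ) = Fintype.card V * p)
    (h2 : ∀ S ∈ s, ∀ S' ∈ s,
      (Nat.card {w // P S w ∧ P S' w} : ℝ) ≤ Fintype.card V * p ^ 2 * (1 + e S S'))
    (h3 : ∑ S ∈ s, ∑ S' ∈ s, e S S' ≤ ε * (s.card : ℝ) ^ 2) :
    (Nat.card {w // ∀ S ∈ s, ¬ P S w} : ℝ) ≤ Fintype.card V * ε := by
  classical
  have hc : ∀ R : V → Prop, (Nat.card {w // R w} : ℝ) = ∑ w, if R w then (1 : ℝ) else 0 := by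
    intro R
    rw [Nat.card_eq_fintype_card, Fintype.card_subtype, Finset.sum_boole]
  set Q : ℝ := ((Fintype.card V : ℕ) : ℝ) with hQ
  set M : ℝ := ((s.card : ℕ) : ℝ) with hM
  have hMpos : 0 < M := Nat.cast_pos.2 hs
  let N : V → ℝ := fun w => ∑ S ∈ s, if P S w then (1 : ℝ) else 0
  have hN1 : ∑ w, N w = M * (Q * p) := by
    simp only [N]
    rw [Finset.sum_comm]
    rw [Finset.sum_congr rfl (fun S hS => (hc (P S)).symm.trans (h1 S hS))]
    simp [hM]
  have hN2 : ∑ w, N w ^ 2 ≤ Q * p ^ 2 * (M ^ 2 + ε * M ^ 2) := by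
    have h4 : ∑ w, N w ^ 2 = ∑ S ∈ s, ∑ S' ∈ s, (Nat.card {w // P S w ∧ P S' w} : ℝ) := by
      simp only [hc, N, sq, Finset.sum_mul_sum]
      rw [Finset.sum_comm]
      refine Finset.sum_congr rfl fun S _ => ?_
      rw [Finset.sum_comm]
      refine Finset.sum_congr rfl fun S' _ => ?_
      refine Finset.sum_congr rfl fun w _ => ?_
      by_cases hA : P S w <;> by_cases hB : P S' w <;> simp [hA, hB]
    rw [h4]
    calc _ ≤ ∑ S ∈ s, ∑ S' ∈ s, Q * p ^ 2 * (1 + e S S') :=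
          Finset.sum_le_sum fun S hS => Finset.sum_le_sum fun S' hS' => h2 S hS S' hS'
      _ = Q * p ^ 2 * (M ^ 2 + ∑ S ∈ s, ∑ S' ∈ s, e S S') := by
          simp only [← Finset.mul_sum, Finset.sum_add_distrib]
          simp [hM, sq]
      _ ≤ _ := by gcongr
  have hvar : ∑ w, (N w - M * p) ^ 2 ≤ Q * p ^ 2 * (ε * M ^ 2) := by
    have : ∑ w, (N w - M * p) ^ 2
        = ∑ w, N w ^ 2 - 2 * (M * p) * ∑ w, N w + Q * (M * p) ^ 2 := by
      rw [Finset.mul_sum, ← Finset.sum_sub_distrib]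
      have : Q * (M * p) ^ 2 = ∑ _w : V, (M * p) ^ 2 := by simp [hQ]
      rw [this, ← Finset.sum_add_distrib]
      refine Finset.sum_congr rfl fun w _ => by ring
    rw [this, hN1]
    nlinarith [hN2]
  have hb : (Nat.card {w // ∀ S ∈ s, ¬ P S w} : ℝ) * (M * p) ^ 2 ≤ ∑ w, (N w - M * p) ^ 2 := by
    rw [hc, Finset.sum_mul]
    refine Finset.sum_le_sum fun w _ => ?_
    split_ifs with hw
    · have : N w = 0 := Finset.sum_eq_zero fun S hS => by simp [hw S hS]
      rw [this]
      apply le_of_eq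
      ring
    · rw [zero_mul]
      positivity
  have hpos : 0 < (M * p) ^ 2 := by positivity
  refine le_of_mul_le_mul_right ?_ hpos
  calc _ ≤ _ := hb
    _ ≤ _ := hvar
    _ = _ := by ring

lemma mr_count_s5 {r a t k : ℕ} (S : Finset (Fin r)) (hS : S.card = a + t) :
    ((Finset.powersetCard (a + t) (Finset.univ : Finset (Fin r))).filter
      (fun S' => (S ∩ S').card = a + k)).card ≤ 2 ^ (a + t) * r ^ (t - k) := by
  classical
  calc _ ≤ (S.powerset ×ˢ Finset.powersetCard (t - k) (Finset.univ : Finset (Fin r))).card := by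
        refine Finset.card_le_card_of_injOn (fun S' => (S ∩ S', S' \ S)) ?_ ?_
        · intro S' hS'
          simp only [Finset.coe_filter, Finset.mem_powersetCard, Set.mem_ofPred_eq] at hS'
          have h1 := Finset.card_sdiff_add_card_inter S' S
          rw [Finset.inter_comm S' S] at h1
          simp only [Finset.coe_product, Set.mem_prod, Finset.mem_coe, Finset.mem_powerset,
            Finset.mem_powersetCard]
          refine ⟨Finset.inter_subset_left, Finset.subset_univ _, ?_⟩
          omega
        · intro S1 _ S2 _ h12
          simp only [Prod.mk.injEq] at h12
          rw [← Finset.sdiff_union_inter S1 S, ← Finset.sdiff_union_inter S2 S, h12.2,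
            Finset.inter_comm S1, Finset.inter_comm S2, h12.1]
    _ ≤ _ := by
        rw [Finset.card_product, Finset.card_powerset, hS, Finset.card_powersetCard,
          Finset.card_univ, Fintype.card_fin]
        exact Nat.mul_le_mul_left _ (Nat.choose_le_pow _ _)

lemma mr_group {F : Type} [Field F] [Fintype F] {r a h t : ℕ}
    (α : Fin r → Fin a → F) (β : Fin r → Fin h → F) (hat : a + 2 * t ≤ h) (hr : a + h ≤ r)
    (hr0 : 0 < r)
    (hA : ∀ T : Finset (Fin r), T.card ≤ a → ∀ f : Fin r → F,
      ∃ u : Fin a → F, ∀ c ∈ T, u ⬝ᵥ α c = f c)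
    (hAinj : ∀ T : Finset (Fin r), a ≤ T.card → ∀ u : Fin a → F, (∀ c ∈ T, u ⬝ᵥ α c = 0) → u = 0)
    (hAB : ∀ T : Finset (Fin r), T.card ≤ a + h → ∀ f : Fin r → F,
      ∃ (w : Fin h → F) (u : Fin a → F), ∀ c ∈ T, w ⬝ᵥ β c + u ⬝ᵥ α c = f c)
    (κ : ℝ)
    (hq : ∀ k, 1 ≤ k → k ≤ t → (Fintype.card F : ℝ) ^ k ≤ κ * (r : ℝ) ^ (k + a)) :
    (Nat.card {w : Fin h → F // ∀ S ∈ Finset.powersetCard (a + t) (Finset.univ : Finset (Fin r)),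
        ¬ w ∈ mrK α β S} : ℝ)
      ≤ (Fintype.card (Fin h → F)) * (κ * (t * 4 ^ (a + t) * (a + t).factorial)) := by
  classical
  set q : ℝ := ((Fintype.card F : ℕ) : ℝ) with hqdef
  have hq1 : 1 < q := by
    rw [hqdef]
    exact_mod_cast Fintype.one_lt_card
  have hq0 : 0 < q := by linarith
  have hV : (Fintype.card (Fin h → F) : ℝ) = q ^ h := by simp [hqdef]
  have hKc : ∀ W : Submodule F (Fin h → F), (Nat.card W : ℝ) = q ^ (Module.finrank F W) := by
    intro W
    rw [Module.natCard_eq_pow_finrank (K := F) (V := W), Nat.card_eq_fintype_card]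
    push_cast
    rfl
  set s := Finset.powersetCard (a + t) (Finset.univ : Finset (Fin r)) with hs
  have hscard : s.card = r.choose (a + t) := by simp [hs]
  have hspos : 0 < s.card := by
    rw [hscard]
    exact Nat.choose_pos (by omega)
  let e : Finset (Fin r) → Finset (Fin r) → ℝ := fun S S' =>
    ∑ k ∈ Finset.Icc 1 t, if (S ∩ S').card = a + k then q ^ k else 0
  have hmem : ∀ S ∈ s, S.card = a + t := fun S hS => (Finset.mem_powersetCard.1 hS).2
  refine mr_second_moment s (fun S w => w ∈ mrK α β S) ((q ^ t)⁻¹) _ (by positivity) hspos e ?_ ?_ ?_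
  · intro S hS
    have h5 := mrK_finrank α β hAinj hAB S (by have := hmem S hS; omega) (by have := hmem S hS; omega)
    rw [hmem S hS, Nat.add_sub_cancel_left] at h5
    have := hKc (mrK α β S)
    rw [hV, eq_mul_inv_iff_mul_eq₀ (by positivity)]
    calc _ = q ^ (Module.finrank F (mrK α β S)) * q ^ t := by rw [← this]
      _ = q ^ h := by rw [← pow_add, h5]
  · intro S hS S' hS'
    have h5 := mrK_inf_finrank α β hat hA hAinj hAB S S' (hmem S hS) (hmem S' hS')
    have := hKc (mrK α β S ⊓ mrK α β S')
    have h6 : (Nat.card {w // w ∈ mrK α β S ∧ w ∈ mrK α β S'} : ℝ) * q ^ (2 * t)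
        = q ^ h * q ^ ((S ∩ S').card - a) := by
      calc _ = q ^ (Module.finrank F (mrK α β S ⊓ mrK α β S' : Submodule F (Fin h → F)))
              * q ^ (2 * t) := by rw [← this]; rfl
        _ = _ := by rw [← pow_add, h5, pow_add]
    have h7 : q ^ ((S ∩ S').card - a) ≤ 1 + e S S' := by
      have hi : (S ∩ S').card ≤ S.card := Finset.card_le_card Finset.inter_subset_left
      rw [hmem S hS] at hi
      have hnn : ∀ k ∈ Finset.Icc 1 t, (0 : ℝ) ≤ if (S ∩ S').card = a + k then q ^ k else 0 := by
        intro k _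
        split_ifs <;> positivity
      rcases Nat.eq_zero_or_pos ((S ∩ S').card - a) with h0 | h0
      · rw [h0, pow_zero]
        have : 0 ≤ e S S' := Finset.sum_nonneg hnn
        linarith
      · have h8 := Finset.single_le_sum hnn
          (Finset.mem_Icc.2 ⟨h0, by omega⟩ : (S ∩ S').card - a ∈ Finset.Icc 1 t)
        rw [if_pos (by omega)] at h8
        change _ ≤ e S S' at h8
        linarith
    rw [hV]
    have h9 : (Nat.card {w // w ∈ mrK α β S ∧ w ∈ mrK α β S'} : ℝ)
        = q ^ h * ((q ^ t)⁻¹) ^ 2 * q ^ ((S ∩ S').card - a) := by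
      have : (((q ^ t)⁻¹) ^ 2) = (q ^ (2 * t))⁻¹ := by rw [inv_pow, ← pow_mul, mul_comm]
      rw [this]
      field_simp
      linarith [h6]
    rw [h9]
    gcongr
  · have hM : (r : ℝ) ^ (a + t) ≤ 2 ^ (a + t) * (a + t).factorial * (s.card : ℝ) := by
      have h1 : ((r + 1 - (a + t) : ℕ) : ℝ) ^ (a + t) ≤ ((a + t).factorial : ℝ) * r.choose (a + t) := by
        have := Nat.pow_sub_le_descFactorial r (a + t)
        rw [Nat.descFactorial_eq_factorial_mul_choose] at this
        exact_mod_cast this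
      have h2 : (r : ℝ) ≤ 2 * ((r + 1 - (a + t) : ℕ) : ℝ) := by
        have : r ≤ 2 * (r + 1 - (a + t)) := by omega
        exact_mod_cast this
      calc (r : ℝ) ^ (a + t) ≤ (2 * ((r + 1 - (a + t) : ℕ) : ℝ)) ^ (a + t) := by gcongr
        _ = 2 ^ (a + t) * ((r + 1 - (a + t) : ℕ) : ℝ) ^ (a + t) := mul_pow _ _ _
        _ ≤ 2 ^ (a + t) * (((a + t).factorial : ℝ) * r.choose (a + t)) := by gcongr
        _ = _ := by rw [hscard]; ring
    have hrow : ∀ S ∈ s, ∑ S' ∈ s, e S S'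
        ≤ κ * (t * 4 ^ (a + t) * (a + t).factorial) * (s.card : ℝ) := by
      intro S hS
      simp only [e]
      rw [Finset.sum_comm]
      have hk : ∀ k ∈ Finset.Icc 1 t,
          (∑ S' ∈ s, if (S ∩ S').card = a + k then q ^ k else 0)
            ≤ κ * (4 ^ (a + t) * (a + t).factorial * s.card) := by
        intro k hk
        rw [Finset.mem_Icc] at hk
        rw [← Finset.sum_filter, Finset.sum_const, nsmul_eq_mul]
        have h1 : ((s.filter (fun S' => (S ∩ S').card = a + k)).card : ℝ)
            ≤ 2 ^ (a + t) * (r : ℝ) ^ (t - k) := by exact_mod_cast mr_count_s5 S (hmem S hS)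
        have hq' := hq k hk.1 hk.2
        have hκ : 0 ≤ κ := by
          by_contra hneg
          have h3 : 0 < q ^ k := by positivity
          have h4 : (0 : ℝ) < (r : ℝ) ^ (k + a) := by positivity
          nlinarith
        calc _ ≤ (2 ^ (a + t) * (r : ℝ) ^ (t - k)) * (κ * (r : ℝ) ^ (k + a)) := by gcongr
          _ = κ * (2 ^ (a + t) * ((r : ℝ) ^ (t - k) * (r : ℝ) ^ (k + a))) := by ring
          _ = κ * (2 ^ (a + t) * (r : ℝ) ^ (a + t)) := by
              rw [← pow_add]
              congr 3
              omega
          _ ≤ κ * (2 ^ (a + t) * (2 ^ (a + t) * (a + t).factorial * (s.card : ℝ))) := by gcongr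
          _ = _ := by
              have : (4 : ℝ) ^ (a + t) = 2 ^ (a + t) * 2 ^ (a + t) := by
                rw [← mul_pow]; norm_num
              rw [this]
              ring
      calc _ ≤ ∑ k ∈ Finset.Icc 1 t, κ * (4 ^ (a + t) * (a + t).factorial * s.card) :=
            Finset.sum_le_sum hk
        _ = _ := by
            rw [Finset.sum_const, Nat.card_Icc, nsmul_eq_mul, Nat.add_sub_cancel]
            ring
    calc _ ≤ ∑ S ∈ s, κ * (t * 4 ^ (a + t) * (a + t).factorial) * (s.card : ℝ) :=
          Finset.sum_le_sum hrow
      _ = _ := by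
          rw [Finset.sum_const, nsmul_eq_mul]
          ring

lemma mr_zero {F ι κ : Type} [Field F] [Fintype κ] (v : ι → κ → F) (T : Finset ι)
    (hv : LinearIndependent F (fun c : {x // x ∈ T} => v c.1)) (hT : T.card = Fintype.card κ)
    (x : κ → F) (hx : ∀ c ∈ T, x ⬝ᵥ v c = 0) : x = 0 := by
  classical
  apply dotProduct_eq_zero
  intro y
  have hy : ∃ y' : κ → F, y' = y := ⟨y, rfl⟩
  have htop := hv.span_eq_top_of_card_eq_finrank' (by simp [hT])
  have hmem : y ∈ Submodule.span F (Set.range (fun c : {x // x ∈ T} => v c.1)) := by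
    rw [htop]; trivial
  induction hmem using Submodule.span_induction with
  | mem z hz =>
    obtain ⟨c, rfl⟩ := hz
    exact hx c.1 c.2
  | zero => simp
  | add p q _ _ hp hq => rw [dotProduct_add, hp ⟨_, rfl⟩, hq ⟨_, rfl⟩, add_zero]
  | smul k p _ hp => rw [dotProduct_smul, hp ⟨_, rfl⟩, smul_zero]

lemma mr_dot {F : Type} [Field F] {g r a h : ℕ}
    (A : Fin g → Matrix (Fin a) (Fin r) F) (B : Fin g → Matrix (Fin h) (Fin r) F)
    (x : (Fin g × Fin a) ⊕ Fin h → F) (p : Fin g × Fin r) :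
    x ⬝ᵥ (fun ρ => lrcParityCheck F g r a h A B ρ p)
      = (fun j => x (Sum.inr j)) ⬝ᵥ (fun j => B p.1 j p.2)
        + (fun j => x (Sum.inl (p.1, j))) ⬝ᵥ (fun j => A p.1 j p.2) := by
  classical
  simp only [dotProduct, Fintype.sum_sum_type, lrcParityCheck, Sum.elim_inl, Sum.elim_inr,
    Fintype.sum_prod_type, mul_ite, mul_zero]
  rw [add_comm]
  congr 1
  rw [Finset.sum_eq_single p.1]
  · simp
  · intro b _ hb
    simp [hb]
  · simp

lemma mr_filter_card {g r : ℕ} (D : Fin g → Finset (Fin r)) (i : Fin g) :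
    (((Finset.univ : Finset (Fin g × Fin r)).filter (fun x => x.2 ∈ D x.1)).filter
      (fun x => x.1 = i)).card = (D i).card := by
  classical
  have : (((Finset.univ : Finset (Fin g × Fin r)).filter (fun x => x.2 ∈ D x.1)).filter
      (fun x => x.1 = i)) = (D i).map ⟨fun c => (i, c), fun c d h => (Prod.mk.inj h).2⟩ := by
    ext ⟨j, c⟩
    simp only [Finset.mem_filter, Finset.mem_univ, true_and, Finset.mem_map,
      Function.Embedding.coeFn_mk, Prod.mk.injEq]
    constructor
    · rintro ⟨h1, rfl⟩
      exact ⟨c, h1, rfl⟩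
    · rintro ⟨c', h1, h2⟩
      obtain ⟨rfl, rfl⟩ := Prod.mk.inj h2
      exact ⟨h1, rfl⟩
  rw [this, Finset.card_map]

lemma mr_card {g r : ℕ} (D : Fin g → Finset (Fin r)) :
    ((Finset.univ : Finset (Fin g × Fin r)).filter (fun x => x.2 ∈ D x.1)).card
      = ∑ i, (D i).card := by
  classical
  rw [Finset.card_eq_sum_card_fiberwise (f := Prod.fst) (t := Finset.univ) (fun _ _ => by simp)]
  exact Finset.sum_congr rfl fun i _ => mr_filter_card D i

lemma mr_hAB {F : Type} [Field F] {g r a h : ℕ}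
    (A : Fin g → Matrix (Fin a) (Fin r) F) (B : Fin g → Matrix (Fin h) (Fin r) F)
    (hMR : IsMRLRC F g r a h A B) (hr : a + h ≤ r) (i : Fin g)
    (T : Finset (Fin r)) (hT : T.card ≤ a + h) (f : Fin r → F) :
    ∃ (w : Fin h → F) (u : Fin a → F), ∀ c ∈ T,
      w ⬝ᵥ (fun j => B i j c) + u ⬝ᵥ (fun j => A i j c) = f c := by
  classical
  obtain ⟨T', hTT', -, hT'⟩ := Finset.exists_subsuperset_card_eq (Finset.subset_univ T) hT
    (by simpa using hr)
  obtain ⟨R, -, hR⟩ := Finset.exists_subset_card_eq (s := (Finset.univ : Finset (Fin r))) (n := a)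
    (by simp; omega)
  let D : Fin g → Finset (Fin r) := fun i' => if i' = i then T' else R
  have hD : ∀ i', (D i').card = a + if i' = i then h else 0 := by
    intro i'
    simp only [D]
    split_ifs <;> simp [hT', hR]
  have hli := hMR.2 (Finset.univ.filter (fun x => x.2 ∈ D x.1))
    (by
      rw [mr_card, Finset.sum_congr rfl (fun i' _ => hD i'), Finset.sum_add_distrib]
      simp [mul_comm])
    (by
      intro i'
      rw [mr_filter_card, hD]
      omega)
  obtain ⟨x, hx⟩ := mr_surj (fun (p : Fin g × Fin r) ρ => lrcParityCheck F g r a h A B ρ p) _ hli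
    (fun p => f p.2)
  refine ⟨fun j => x (Sum.inr j), fun j => x (Sum.inl (i, j)), fun c hc => ?_⟩
  have h1 := hx (i, c) (by simp [D, hTT' hc])
  rw [mr_dot] at h1
  exact h1

lemma mr_final {F : Type} [Field F] {g r a h t : ℕ}
    (A : Fin g → Matrix (Fin a) (Fin r) F) (B : Fin g → Matrix (Fin h) (Fin r) F)
    (hMR : IsMRLRC F g r a h A B) (hgt : h ≤ g * t) (w : Fin h → F)
    (S : Fin g → Finset (Fin r)) (hS : ∀ i, (S i).card = a + t)
    (hw : ∀ i, w ∈ mrK (fun c j => A i j c) (fun c j => B i j c) (S i)) : w = 0 := by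
  classical
  choose u hu using hw
  choose R hRS hR using fun i =>
    Finset.exists_subset_card_eq (s := S i) (n := a) (by rw [hS]; omega)
  have hsub : (Finset.univ : Finset (Fin g × Fin r)).filter (fun x => x.2 ∈ R x.1)
      ⊆ (Finset.univ : Finset (Fin g × Fin r)).filter (fun x => x.2 ∈ S x.1) := by
    intro x hx
    simp only [Finset.mem_filter, Finset.mem_univ, true_and] at hx ⊢
    exact hRS _ hx
  obtain ⟨E, hE1, hE2, hE3⟩ := Finset.exists_subsuperset_card_eq (n := a * g + h) hsub
    (by
      rw [mr_card, Finset.sum_congr rfl (fun i _ => hR i)]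
      simp [mul_comm])
    (by
      rw [mr_card, Finset.sum_congr rfl (fun i _ => hS i)]
      simp only [Finset.sum_const, Finset.card_univ, Fintype.card_fin, smul_eq_mul]
      nlinarith)
  have hli := hMR.2 E hE3 (by
    intro i
    rw [← hR i, ← mr_filter_card R i]
    exact Finset.card_le_card (Finset.filter_subset_filter _ hE1))
  have h0 := mr_zero (fun (p : Fin g × Fin r) ρ => lrcParityCheck F g r a h A B ρ p) E hli
    (by simp [hE3, mul_comm]) (Sum.elim (fun p => u p.1 p.2) w) (by
      rintro ⟨i, c⟩ hc
      rw [mr_dot]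
      have := hE2 hc
      simp only [Finset.mem_filter, Finset.mem_univ, true_and] at this
      exact hu i c this)
  ext j
  exact congrFun h0 (Sum.inr j)

lemma mr_bound {F : Type} [Field F] [Fintype F] {g r a h t : ℕ} (hg : 2 ≤ g) (hgh : g ≤ h)
    (A : Fin g → Matrix (Fin a) (Fin r) F) (B : Fin g → Matrix (Fin h) (Fin r) F)
    (hMR : IsMRLRC F g r a h A B) (hgt : h ≤ g * t) (hat : a + 2 * t ≤ h) (hr : a + h ≤ r)
    (κ : ℝ) (hκ : κ * (t * 4 ^ (a + t) * (a + t).factorial) ≤ 1 / (2 * g))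
    (hq : ∀ k, 1 ≤ k → k ≤ t → (Fintype.card F : ℝ) ^ k ≤ κ * (r : ℝ) ^ (k + a)) : False := by
  classical
  let bad : Fin g → Finset (Fin h → F) := fun i => Finset.univ.filter
    (fun w => ∀ S ∈ Finset.powersetCard (a + t) (Finset.univ : Finset (Fin r)),
        ¬ w ∈ mrK (fun c j => A i j c) (fun c j => B i j c) S)
  have hbad : ∀ i, ((bad i).card : ℝ) ≤ (Fintype.card (Fin h → F)) * (1 / (2 * g)) := by
    intro i
    have := mr_group (fun c j => A i j c) (fun c j => B i j c) hat hr (by omega)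
      (by
        intro T hT f
        obtain ⟨T', hTT', -, hT'⟩ := Finset.exists_subsuperset_card_eq (Finset.subset_univ T) hT
          (by simp; omega)
        obtain ⟨x, hx⟩ := mr_surj (fun c j => A i j c) T' (hMR.1 i T' hT') f
        exact ⟨x, fun c hc => hx c (hTT' hc)⟩)
      (by
        intro T hT u hu
        obtain ⟨T', hTT', hT'⟩ := Finset.exists_subset_card_eq hT
        exact mr_zero (fun c j => A i j c) T' (hMR.1 i T' hT') (by simp [hT']) u
          (fun c hc => hu c (hTT' hc)))
      (fun T hT f => mr_hAB A B hMR hr i T hT f) κ hq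
    rw [Nat.card_eq_fintype_card, Fintype.card_subtype] at this
    refine this.trans ?_
    gcongr
  have hcov : (Finset.univ : Finset (Fin h → F)) ⊆ {0} ∪ Finset.univ.biUnion bad := by
    intro w _
    by_contra hn
    simp only [Finset.mem_union, Finset.mem_singleton, Finset.mem_biUnion, Finset.mem_univ,
      true_and, not_or, not_exists] at hn
    obtain ⟨hw0, hw⟩ := hn
    have : ∀ i, ∃ S : Finset (Fin r), S.card = a + t ∧
        w ∈ mrK (fun c j => A i j c) (fun c j => B i j c) S := by
      intro i
      have h1 := hw i
      simp only [bad, Finset.mem_filter, Finset.mem_univ, true_and, not_forall, not_not] at h1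
      obtain ⟨S, hS, hS'⟩ := h1
      exact ⟨S, (Finset.mem_powersetCard.1 hS).2, hS'⟩
    choose S hS hS' using this
    exact hw0 (mr_final A B hMR hgt w S hS hS')
  have hc1 := (Finset.card_le_card hcov).trans (Finset.card_union_le _ _)
  have hc2 : (Finset.univ.biUnion bad).card ≤ ∑ i, (bad i).card := Finset.card_biUnion_le
  rw [Finset.card_univ, Finset.card_singleton] at hc1
  have hc3 : (Fintype.card (Fin h → F) : ℝ) ≤ 1 + ∑ i, ((bad i).card : ℝ) := by
    exact_mod_cast hc1.trans (Nat.add_le_add_left hc2 1)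
  have hc4 : ∑ i, ((bad i).card : ℝ) ≤ (Fintype.card (Fin h → F) : ℝ) / 2 := by
    calc _ ≤ ∑ _i : Fin g, (Fintype.card (Fin h → F) : ℝ) * (1 / (2 * g)) :=
          Finset.sum_le_sum fun i _ => hbad i
      _ = _ := by
          rw [Finset.sum_const, Finset.card_univ, Fintype.card_fin, nsmul_eq_mul]
          have : (g : ℝ) ≠ 0 := by positivity
          field_simp
  have hc5 : (4 : ℝ) ≤ Fintype.card (Fin h → F) := by
    have h2 : 2 ≤ Fintype.card F := Fintype.one_lt_card
    have : 4 ≤ Fintype.card F ^ h := by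
      calc 4 = 2 ^ 2 := by norm_num
        _ ≤ 2 ^ h := Nat.pow_le_pow_right (by norm_num) (by omega)
        _ ≤ _ := Nat.pow_le_pow_left h2 h
    rw [Fintype.card_fun, Fintype.card_fin]
    exact_mod_cast this
  linarith

/-- **Proposition A.1.** Fix `a ≥ 0` and `h ≥ g ≥ 2` with `a ≤ h - 2⌈h/g⌉`. There is a
constant `c > 0` (depending only on `a, g, h`) such that every maximally recoverable
`(n, n/g, h, a, q)`-LRC with `g` local groups each of size `r = n/g` satisfies
`q ≥ c · n^(1 + a/⌈h/g⌉)`.  (Here `⌈h/g⌉ = (h + g - 1) / g` in natural division.) -/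
theorem mrlrc_field_size_lower_bound_few_groups_small_a
    (a g h : ℕ) (hg : 2 ≤ g) (hgh : g ≤ h)
    (ha : (a : ℤ) ≤ (h : ℤ) - 2 * (((h + g - 1) / g : ℕ) : ℤ)) :
    ∃ c : ℝ, 0 < c ∧
      ∀ q n : ℕ, IsPrimePow q → g ∣ n →
        ExistsMRLRC g (n / g) h a q →
        c * (n : ℝ) ^ ((1 : ℝ) + (a : ℝ) / (((h + g - 1) / g : ℕ) : ℝ)) ≤ (q : ℝ) := by
  have hgt : h ≤ g * ((h + g - 1) / g) := by
    have h1 := Nat.div_add_mod (h + g - 1) g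
    have h2 := Nat.mod_lt (h + g - 1) (by omega : 0 < g)
    omega
  have ht : 1 ≤ (h + g - 1) / g := by
    rw [Nat.le_div_iff_mul_le (by omega)]
    omega
  generalize (h + g - 1) / g = t at *
  have hat : a + 2 * t ≤ h := by omega
  set e : ℝ := (1 : ℝ) + (a : ℝ) / (t : ℝ) with he
  have ht0 : (0 : ℝ) < t := by exact_mod_cast ht
  have hg0 : (0 : ℝ) < g := by positivity
  have he0 : 0 < e := by positivity
  set D : ℝ := t * 4 ^ (a + t) * (a + t).factorial with hD
  have hDpos : 0 < D := by positivity
  set κ : ℝ := min 1 (1 / (2 * g * D)) with hκ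
  have hκ0 : 0 < κ := lt_min one_pos (by positivity)
  have hκ1 : κ ≤ 1 := min_le_left _ _
  have hκD : κ * D ≤ 1 / (2 * g) := by
    calc κ * D ≤ 1 / (2 * g * D) * D := by gcongr; exact min_le_right _ _
      _ = _ := by field_simp
  set n0 : ℝ := g * (a + h) with hn0
  have hn0pos : 0 < n0 := by
    have : (0 : ℝ) < h := by
      have : 0 < h := by omega
      exact_mod_cast this
    positivity
  refine ⟨min (1 / n0 ^ e) (κ / (g : ℝ) ^ e), by positivity, ?_⟩
  rintro q n hq ⟨r, rfl⟩ hex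
  rw [Nat.mul_div_cancel_left r (by omega)] at hex
  obtain ⟨F, _, _, hF, A, B, hMR⟩ := hex
  have hq1 : (1 : ℝ) ≤ q := by exact_mod_cast hq.one_lt.le
  rcases lt_or_ge r (a + h) with hr | hr
  · have : ((g * r : ℕ) : ℝ) ≤ n0 := by
      have : g * r ≤ g * (a + h) := Nat.mul_le_mul_left _ hr.le
      rw [hn0]
      exact_mod_cast this
    calc _ ≤ 1 / n0 ^ e * n0 ^ e := by
          gcongr
          exact min_le_left _ _
      _ = 1 := by field_simp
      _ ≤ q := hq1
  · by_contra hlt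
    push Not at hlt
    have hlt' : (q : ℝ) ≤ κ * (r : ℝ) ^ e := by
      refine hlt.le.trans ?_
      calc _ ≤ κ / (g : ℝ) ^ e * ((g * r : ℕ) : ℝ) ^ e := by
            gcongr
            exact min_le_right _ _
        _ = _ := by
            push_cast
            rw [Real.mul_rpow hg0.le (by positivity)]
            field_simp
    have hr1 : (1 : ℝ) ≤ r := by
      have : 1 ≤ r := by omega
      exact_mod_cast this
    refine mr_bound hg hgh A B hMR hgt hat hr κ hκD ?_
    intro k hk1 hkt
    rw [hF]
    calc (q : ℝ) ^ k ≤ (κ * (r : ℝ) ^ e) ^ k := by gcongr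
      _ = κ ^ k * (r : ℝ) ^ (e * k) := by
          rw [mul_pow, Real.rpow_mul_natCast (by positivity)]
      _ ≤ κ * (r : ℝ) ^ (((k + a : ℕ)) : ℝ) := by
          gcongr ?_ * ?_
          · exact pow_le_of_le_one hκ0.le hκ1 (by omega)
          · apply Real.rpow_le_rpow_of_exponent_le hr1
            push_cast
            have : (k : ℝ) ≤ t := by exact_mod_cast hkt
            have h1 : (a : ℝ) / t * k ≤ a := by
              rw [div_mul_eq_mul_div, div_le_iff₀ ht0]
              gcongr
            rw [he]
            linarith
      _ = _ := by rw [Real.rpow_natCast]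
end

section
/- Fix integers a ≥ 0 and h ≥ g ≥ 2 with a ≥ h − 2⌈h/g⌉. There exists a constant c > 0 (depending only on a, g, h) such that for every prime power q and every n divisible by g, if there exists a maximally recoverable (n, n/g, h, a, q)-local reconstruction code with g local groups each of size r = n/g, then q ≥ c · n^{h/⌈h/g⌉ − 1}. -/
open Finset

lemma surj_of_inj {F V : Type} [Field F] [AddCommGroup V] [Module F V] [FiniteDimensional F V]
    {r k : ℕ} (φ : V →ₗ[F] (Fin r → F)) (hk : Module.finrank F V = k) (hkr : k ≤ r)
    (hinj : ∀ T : Finset (Fin r), T.card = k → ∀ v, (∀ c ∈ T, φ v c = 0) → v = 0)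
    (T : Finset (Fin r)) (hT : T.card ≤ k) (y : Fin r → F) :
    ∃ v, ∀ c ∈ T, φ v c = y c := by
  obtain ⟨T', hTT', -, hT'⟩ := Finset.exists_subsuperset_card_eq (Finset.subset_univ T) hT
    (by simpa using hkr)
  let ψ : V →ₗ[F] ({x // x ∈ T'} → F) := (LinearMap.funLeft F F Subtype.val).comp φ
  have hψ : Function.Injective ψ := by
    rw [← LinearMap.ker_eq_bot, LinearMap.ker_eq_bot']
    intro v hv
    apply hinj T' hT'
    intro c hc
    have := congrFun hv ⟨c, hc⟩
    simpa [ψ, LinearMap.funLeft] using this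
  have hs : Function.Surjective ψ :=
    (LinearMap.injective_iff_surjective_of_finrank_eq_finrank (by simp [hk, hT'])).1 hψ
  obtain ⟨v, hv⟩ := hs (fun c => y c.1)
  refine ⟨v, fun c hc => ?_⟩
  have := congrFun hv ⟨c, hTT' hc⟩
  simpa [ψ, LinearMap.funLeft] using this

lemma card_ker_mul {F V W : Type} [Field F] [Fintype F] [AddCommGroup V] [Module F V]
    [FiniteDimensional F V] [AddCommGroup W] [Module F W] [FiniteDimensional F W]
    (f : V →ₗ[F] W) (hf : Function.Surjective f) :
    Nat.card (LinearMap.ker f) * Fintype.card F ^ Module.finrank F W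
      = Fintype.card F ^ Module.finrank F V := by
  rw [Module.natCard_eq_pow_finrank (K := F), Nat.card_eq_fintype_card, ← pow_add]
  congr 1
  have := LinearMap.finrank_range_add_finrank_ker f
  rw [LinearMap.range_eq_top.2 hf, finrank_top] at this
  omega

lemma card_agree {m b : ℕ} (J : Finset (Fin m)) (f : Fin m → Fin b) :
    (univ.filter (fun f' : Fin m → Fin b => ∀ i ∈ J, f i = f' i)).card = b ^ (m - J.card) := by
  classical
  have : (univ.filter (fun f' : Fin m → Fin b => ∀ i ∈ J, f i = f' i))
      = Fintype.piFinset (fun i => if i ∈ J then {f i} else univ) := by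
    ext f'
    simp only [mem_filter, mem_univ, true_and, Fintype.mem_piFinset]
    refine forall_congr' fun i => ?_
    by_cases hi : i ∈ J <;> simp [hi, eq_comm]
  rw [this, Fintype.card_piFinset]
  have : ∀ i, (if i ∈ J then ({f i} : Finset (Fin b)) else univ).card = if i ∈ J then 1 else b := by
    intro i; split_ifs <;> simp
  simp only [this]
  rw [Finset.prod_ite]
  simp only [prod_const, one_pow, one_mul]
  congr 1
  rw [Finset.filter_not, Finset.card_sdiff]
  simp

lemma second_moment_s6 {Λ : Type} [Fintype Λ] [DecidableEq Λ] {m t b : ℕ} (q δ : ℝ) (hq : 0 < q)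
    (hb : 0 < b) (htm : t ≤ m)
    (Ev : (Fin m → Fin b) → Finset Λ)
    (h1 : ∀ f, ((Ev f).card : ℝ) * q ^ t = Fintype.card Λ)
    (h2 : ∀ f f', ((Ev f ∩ Ev f').card : ℝ) * q ^ (2 * t) ≤
      Fintype.card Λ * q ^ ((univ.filter (fun i => f i = f' i)).card - (m - t)))
    (hδ : ∀ s, 1 ≤ s → s ≤ t → q ^ s ≤ δ * (b : ℝ) ^ (m - t + s)) (hΛ : 0 < Fintype.card Λ)
    (hδ0 : 0 ≤ δ) :
    (Fintype.card Λ : ℝ) ≤ ((univ.biUnion Ev).card : ℝ) * (1 + 2 ^ m * δ) := by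
  classical
  set Q : ℝ := (Fintype.card Λ : ℝ) with hQ
  have hQ0 : 0 < Q := by rw [hQ]; exact_mod_cast hΛ
  have hb' : (0:ℝ) < b := by exact_mod_cast hb
  -- pair sum
  have hpt : ∀ f f' : Fin m → Fin b,
      q ^ ((univ.filter (fun i => f i = f' i)).card - (m - t)) ≤
      1 + ∑ J ∈ (univ : Finset (Finset (Fin m))).filter (fun J => m - t < J.card),
        if ∀ i ∈ J, f i = f' i then q ^ (J.card - (m - t)) else 0 := by
    intro f f'
    have hnn : ∀ J ∈ (univ : Finset (Finset (Fin m))).filter (fun J => m - t < J.card),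
        (0:ℝ) ≤ if ∀ i ∈ J, f i = f' i then q ^ (J.card - (m - t)) else 0 := by
      intro J _; split_ifs <;> positivity
    by_cases hc : m - t < (univ.filter (fun i => f i = f' i)).card
    · have := Finset.single_le_sum hnn (a := univ.filter (fun i => f i = f' i)) (by simpa using hc)
      rw [if_pos (by simp)] at this
      linarith
    · rw [Nat.sub_eq_zero_of_le (by omega), pow_zero]
      have := Finset.sum_nonneg hnn
      linarith
  have hin : ∀ f : Fin m → Fin b, ∑ f' : Fin m → Fin b,
      q ^ ((univ.filter (fun i => f i = f' i)).card - (m - t)) ≤ (b:ℝ) ^ m * (1 + 2 ^ m * δ) := by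
    intro f
    calc _ ≤ ∑ f' : Fin m → Fin b, (1 + ∑ J ∈ (univ : Finset (Finset (Fin m))).filter (fun J => m - t < J.card),
        if ∀ i ∈ J, f i = f' i then q ^ (J.card - (m - t)) else 0) :=
          Finset.sum_le_sum fun f' _ => hpt f f'
      _ = (b:ℝ) ^ m + ∑ J ∈ (univ : Finset (Finset (Fin m))).filter (fun J => m - t < J.card),
          (b:ℝ) ^ (m - J.card) * q ^ (J.card - (m - t)) := by
          rw [Finset.sum_add_distrib, Finset.sum_comm]
          congr 1
          · simp
          · refine Finset.sum_congr rfl fun J _ => ?_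
            rw [← Finset.sum_filter, Finset.sum_const, card_agree]
            simp
      _ ≤ (b:ℝ) ^ m + ∑ J ∈ (univ : Finset (Finset (Fin m))).filter (fun J => m - t < J.card),
          (b:ℝ) ^ m * δ := by
          refine add_le_add le_rfl (Finset.sum_le_sum fun J hJ => ?_)
          have hJ1 : m - t < J.card := by simpa using hJ
          have hJ2 : J.card ≤ m := by simpa using Finset.card_le_univ J
          calc _ ≤ (b:ℝ) ^ (m - J.card) * (δ * (b : ℝ) ^ (m - t + (J.card - (m - t)))) := by
                gcongr
                exact hδ _ (by omega) (by omega)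
            _ = (b:ℝ) ^ (m - J.card + (m - t + (J.card - (m - t)))) * δ := by rw [pow_add _ (m - J.card)]; ring
            _ = _ := by congr 2; omega
      _ ≤ (b:ℝ) ^ m + 2 ^ m * ((b:ℝ) ^ m * δ) := by
          rw [Finset.sum_const, nsmul_eq_mul]
          gcongr
          have : ((univ : Finset (Finset (Fin m))).filter (fun J => m - t < J.card)).card ≤ 2 ^ m := by
            refine (Finset.card_le_univ _).trans ?_
            simp
          exact_mod_cast this
      _ = _ := by ring
  -- the counting function
  let X : Λ → ℝ := fun l => ∑ f : Fin m → Fin b, if l ∈ Ev f then 1 else 0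
  have hX1 : (∑ l ∈ univ.biUnion Ev, X l) * q ^ t = (b:ℝ) ^ m * Q := by
    simp only [X]
    rw [Finset.sum_comm, Finset.sum_mul]
    have : ∀ f : Fin m → Fin b, (∑ l ∈ univ.biUnion Ev, if l ∈ Ev f then (1:ℝ) else 0) * q ^ t = Q := by
      intro f
      rw [← h1 f, ← Finset.sum_filter, Finset.sum_const, nsmul_eq_mul, mul_one]
      congr 3
      ext l
      simp only [mem_filter, mem_biUnion, mem_univ, true_and, and_iff_right_iff_imp]
      exact fun h => ⟨f, h⟩
    rw [Finset.sum_congr rfl fun f _ => this f]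
    simp
  have hX2 : (∑ l ∈ univ.biUnion Ev, X l ^ 2) * q ^ (2 * t) ≤ (b:ℝ) ^ m * ((b:ℝ) ^ m * (1 + 2 ^ m * δ)) * Q := by
    have e : ∑ l ∈ univ.biUnion Ev, X l ^ 2 = ∑ f, ∑ f', ((Ev f ∩ Ev f').card : ℝ) := by
      simp only [X, sq, Finset.sum_mul_sum]
      rw [Finset.sum_comm]
      refine Finset.sum_congr rfl fun f _ => ?_
      rw [Finset.sum_comm]
      refine Finset.sum_congr rfl fun f' _ => ?_
      have : ∀ l, (if l ∈ Ev f then (1:ℝ) else 0) * (if l ∈ Ev f' then 1 else 0) = if l ∈ Ev f ∩ Ev f' then 1 else 0 := by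
        intro l; by_cases h : l ∈ Ev f <;> by_cases h' : l ∈ Ev f' <;> simp [h, h']
      simp only [this]
      rw [← Finset.sum_filter, Finset.sum_const, nsmul_eq_mul, mul_one]
      congr 2
      ext l
      simp only [mem_filter, mem_biUnion, mem_univ, true_and, and_iff_right_iff_imp]
      exact fun h => ⟨f, (Finset.mem_inter.1 h).1⟩
    rw [e, Finset.sum_mul]
    calc _ ≤ ∑ f : Fin m → Fin b, ((b:ℝ) ^ m * (1 + 2 ^ m * δ)) * Q := by
          refine Finset.sum_le_sum fun f _ => ?_
          rw [Finset.sum_mul]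
          refine (Finset.sum_le_sum fun f' _ => h2 f f').trans ?_
          rw [← Finset.mul_sum, mul_comm]
          gcongr
          exact hin f
      _ = _ := by simp; ring
  have cs := sq_sum_le_card_mul_sum_sq (s := univ.biUnion Ev) (f := X)
  have hP : 0 < (b:ℝ) ^ m * (b:ℝ) ^ m * Q := by positivity
  have key : ((b:ℝ) ^ m * (b:ℝ) ^ m * Q) * Q ≤ ((b:ℝ) ^ m * (b:ℝ) ^ m * Q) * (((univ.biUnion Ev).card : ℝ) * (1 + 2 ^ m * δ)) := by
    calc _ = ((∑ l ∈ univ.biUnion Ev, X l) * q ^ t) ^ 2 := by rw [hX1]; ring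
      _ = (∑ l ∈ univ.biUnion Ev, X l) ^ 2 * q ^ (2 * t) := by rw [mul_pow, ← pow_mul, mul_comm t 2]
      _ ≤ ((univ.biUnion Ev).card * ∑ l ∈ univ.biUnion Ev, X l ^ 2) * q ^ (2 * t) := by gcongr
      _ = (univ.biUnion Ev).card * ((∑ l ∈ univ.biUnion Ev, X l ^ 2) * q ^ (2 * t)) := by ring
      _ ≤ (univ.biUnion Ev).card * ((b:ℝ) ^ m * ((b:ℝ) ^ m * (1 + 2 ^ m * δ)) * Q) := by gcongr
      _ = _ := by ring
  exact le_of_mul_le_mul_left key hP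

/-- the word associated with a functional -/
def cw {F : Type} [Field F] {r a h : ℕ} (A : Matrix (Fin a) (Fin r) F)
    (B : Matrix (Fin h) (Fin r) F) : ((Fin h → F) × (Fin a → F)) →ₗ[F] (Fin r → F) :=
  (Matrix.vecMulLinear B).coprod (Matrix.vecMulLinear A)

lemma cw_apply {F : Type} [Field F] {r a h : ℕ} (A : Matrix (Fin a) (Fin r) F)
    (B : Matrix (Fin h) (Fin r) F) (l : Fin h → F) (u : Fin a → F) (c : Fin r) :
    cw A B (l, u) c = Matrix.vecMul l B c + Matrix.vecMul u A c := by
  simp [cw]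

/-- functionals whose word can be made zero on `S` -/
noncomputable def evS {F : Type} [Field F] [Fintype F] {r a h : ℕ} (A : Matrix (Fin a) (Fin r) F)
    (B : Matrix (Fin h) (Fin r) F) (S : Finset (Fin r)) : Finset (Fin h → F) := by
  classical exact univ.filter (fun l => ∃ u, ∀ c ∈ S, cw A B (l, u) c = 0)

lemma mem_evS {F : Type} [Field F] [Fintype F] {r a h : ℕ} (A : Matrix (Fin a) (Fin r) F)
    (B : Matrix (Fin h) (Fin r) F) (S : Finset (Fin r)) (l : Fin h → F) :
    l ∈ evS A B S ↔ ∃ u, ∀ c ∈ S, cw A B (l, u) c = 0 := by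
  classical
  simp [evS]

structure GoodPair {F : Type} [Field F] {r a h : ℕ} (A : Matrix (Fin a) (Fin r) F)
    (B : Matrix (Fin h) (Fin r) F) : Prop where
  hr : a + h ≤ r
  inj : ∀ T : Finset (Fin r), T.card = a + h → ∀ v, (∀ c ∈ T, cw A B v c = 0) → v = 0
  injA : ∀ T : Finset (Fin r), T.card = a → ∀ u, (∀ c ∈ T, Matrix.vecMulLinear A u c = 0) → u = 0

section
variable {F : Type} [Field F] {r a h : ℕ} {A : Matrix (Fin a) (Fin r) F}
    {B : Matrix (Fin h) (Fin r) F}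

lemma GoodPair.surj (G : GoodPair A B) (T : Finset (Fin r)) (hT : T.card ≤ a + h) (y : Fin r → F) :
    ∃ v, ∀ c ∈ T, cw A B v c = y c :=
  surj_of_inj (cw A B) (by simp; omega) G.hr G.inj T hT y

lemma GoodPair.surjA (G : GoodPair A B) (T : Finset (Fin r)) (hT : T.card ≤ a) (y : Fin r → F) :
    ∃ u, ∀ c ∈ T, Matrix.vecMulLinear A u c = y c :=
  surj_of_inj (Matrix.vecMulLinear A) (by simp) (by have := G.hr; omega) G.injA T hT y

lemma GoodPair.injA' (G : GoodPair A B) (T : Finset (Fin r)) (hT : a ≤ T.card) (u u' : Fin a → F)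
    (l : Fin h → F) (h1 : ∀ c ∈ T, cw A B (l, u) c = 0) (h2 : ∀ c ∈ T, cw A B (l, u') c = 0) :
    u = u' := by
  obtain ⟨T', hT', hc⟩ := Finset.exists_subset_card_eq hT
  rw [← sub_eq_zero]
  apply G.injA T' hc
  intro c hcT
  have e1 := h1 c (hT' hcT)
  have e2 := h2 c (hT' hcT)
  rw [cw_apply] at e1 e2
  rw [map_sub, Pi.sub_apply]
  simp only [Matrix.vecMulLinear_apply]
  linear_combination e1 - e2

/-- restriction map -/
def resMap (A : Matrix (Fin a) (Fin r) F) (B : Matrix (Fin h) (Fin r) F) (S : Finset (Fin r)) :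
    ((Fin h → F) × (Fin a → F)) →ₗ[F] ({x // x ∈ S} → F) :=
  (LinearMap.funLeft F F Subtype.val).comp (cw A B)

lemma mem_ker_resMap (S : Finset (Fin r)) (v : (Fin h → F) × (Fin a → F)) :
    v ∈ LinearMap.ker (resMap A B S) ↔ ∀ c ∈ S, cw A B v c = 0 := by
  rw [LinearMap.mem_ker, funext_iff]
  simp [resMap, LinearMap.funLeft]

lemma GoodPair.card_ker [Fintype F] (G : GoodPair A B) (S : Finset (Fin r)) (hS : S.card ≤ a + h) :
    Nat.card (LinearMap.ker (resMap A B S)) * Fintype.card F ^ S.card = Fintype.card F ^ (h + a) := by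
  have := card_ker_mul (resMap A B S) (by
    classical
    intro y
    obtain ⟨v, hv⟩ := G.surj S hS (fun c => if hc : c ∈ S then y ⟨c, hc⟩ else 0)
    refine ⟨v, ?_⟩
    ext ⟨c, hc⟩
    simpa [resMap, LinearMap.funLeft, hc] using hv c hc)
  simpa using this

lemma GoodPair.card_evS [Fintype F] (G : GoodPair A B) (S : Finset (Fin r)) (d : ℕ)
    (hd : d ≤ h) (hS : S.card = a + d) :
    (evS A B S).card * Fintype.card F ^ d = Fintype.card F ^ h := by
  have hk := G.card_ker S (by omega)
  have e : (evS A B S).card = Nat.card (LinearMap.ker (resMap A B S)) := by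
    rw [show (evS A B S).card = Nat.card {x // x ∈ evS A B S} by simp]
    symm
    refine Nat.card_congr (Equiv.ofBijective
      (fun v => ⟨v.1.1, (mem_evS A B S _).2 ⟨v.1.2, (mem_ker_resMap S v.1).1 v.2⟩⟩) ⟨?_, ?_⟩)
    · rintro ⟨⟨l, u⟩, hv⟩ ⟨⟨l', u'⟩, hv'⟩ hh
      have hl : l = l' := by simpa using hh
      subst hl
      have := G.injA' S (by omega) u u' l ((mem_ker_resMap S _).1 hv) ((mem_ker_resMap S _).1 hv')
      subst this
      rfl
    · rintro ⟨l, hl⟩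
      obtain ⟨u, hu⟩ := (mem_evS A B S l).1 hl
      exact ⟨⟨(l, u), (mem_ker_resMap S _).2 hu⟩, rfl⟩
  rw [e]
  have hq : 0 < Fintype.card F ^ a := pow_pos Fintype.card_pos _
  apply Nat.eq_of_mul_eq_mul_right hq
  rw [mul_assoc, ← pow_add, ← pow_add, ← hk, hS, add_comm d a]

lemma GoodPair.inter_big [Fintype F] [DecidableEq F] (G : GoodPair A B) (S T : Finset (Fin r)) (d : ℕ)
    (hd : d ≤ h) (hST : (S ∪ T).card = a + d) (hI : a ≤ (S ∩ T).card) :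
    (evS A B S ∩ evS A B T).card * Fintype.card F ^ d ≤ Fintype.card F ^ h := by
  rw [← G.card_evS (S ∪ T) d hd hST]
  gcongr
  intro l hl
  rw [Finset.mem_inter, mem_evS, mem_evS] at hl
  obtain ⟨⟨u, hu⟩, ⟨u', hu'⟩⟩ := hl
  have := G.injA' (S ∩ T) hI u u' l (fun c hc => hu c (Finset.mem_inter.1 hc).1)
    (fun c hc => hu' c (Finset.mem_inter.1 hc).2)
  subst this
  rw [mem_evS]
  refine ⟨u, fun c hc => ?_⟩
  rcases Finset.mem_union.1 hc with hc | hc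
  · exact hu c hc
  · exact hu' c hc

lemma GoodPair.inter_small [Fintype F] [DecidableEq F] (G : GoodPair A B) (S T : Finset (Fin r)) (t : ℕ)
    (hS : S.card = a + t) (hT : T.card = a + t)
    (hST : (S ∪ T).card ≤ a + h) (hI : (S ∩ T).card ≤ a) :
    (evS A B S ∩ evS A B T).card * Fintype.card F ^ (2 * t) ≤ Fintype.card F ^ h := by
  classical
  let p1 : ((Fin h → F) × (Fin a → F) × (Fin a → F)) →ₗ[F] (Fin h → F) × (Fin a → F) :=
    (LinearMap.fst F _ _).prod ((LinearMap.fst F _ _).comp (LinearMap.snd F _ _))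
  let p2 : ((Fin h → F) × (Fin a → F) × (Fin a → F)) →ₗ[F] (Fin h → F) × (Fin a → F) :=
    (LinearMap.fst F _ _).prod ((LinearMap.snd F _ _).comp (LinearMap.snd F _ _))
  let M : ((Fin h → F) × (Fin a → F) × (Fin a → F)) →ₗ[F]
      ({x // x ∈ S} → F) × ({x // x ∈ T} → F) :=
    ((resMap A B S).comp p1).prod ((resMap A B T).comp p2)
  have hM : Function.Surjective M := by
    rintro ⟨x, y⟩
    let x' : Fin r → F := fun c => if hc : c ∈ S then x ⟨c, hc⟩ else 0
    let y' : Fin r → F := fun c => if hc : c ∈ T then y ⟨c, hc⟩ else 0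
    obtain ⟨e, he⟩ := G.surjA (S ∩ T) hI (y' - x')
    obtain ⟨⟨l, u⟩, hv⟩ := G.surj (S ∪ T) hST
      (fun c => if c ∈ S then x' c else y' c - Matrix.vecMulLinear A e c)
    refine ⟨(l, u, u + e), ?_⟩
    refine Prod.ext ?_ ?_
    · ext ⟨c, hc⟩
      have := hv c (Finset.mem_union_left _ hc)
      rw [if_pos hc] at this
      simpa [M, p1, resMap, LinearMap.funLeft, x', hc] using this
    · ext ⟨c, hc⟩
      have h1 := hv c (Finset.mem_union_right _ hc)
      have h2 : cw A B (l, u + e) c = y' c := by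
        rw [cw_apply] at h1 ⊢
        rw [Matrix.add_vecMul, Pi.add_apply]
        by_cases hcS : c ∈ S
        · rw [if_pos hcS] at h1
          have h3 := he c (Finset.mem_inter.2 ⟨hcS, hc⟩)
          rw [Pi.sub_apply, Matrix.vecMulLinear_apply] at h3
          linear_combination h1 + h3
        · rw [if_neg hcS, Matrix.vecMulLinear_apply] at h1
          linear_combination h1
      simpa [M, p2, resMap, LinearMap.funLeft, y', hc] using h2
  have hk := card_ker_mul M hM
  have e : (evS A B S ∩ evS A B T).card ≤ Nat.card (LinearMap.ker M) := by
    rw [show (evS A B S ∩ evS A B T).card = Nat.card {x // x ∈ evS A B S ∩ evS A B T} by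
      rw [Nat.card_eq_fintype_card, Fintype.card_coe]]
    refine Nat.card_le_card_of_surjective (α := {v // v ∈ LinearMap.ker M ∧ v.1 ∈ evS A B S ∩ evS A B T})
      (fun v => ⟨v.1.1, v.2.2⟩) ?_ |>.trans ?_
    · rintro ⟨l, hl⟩
      have hl' := hl
      rw [Finset.mem_inter, mem_evS, mem_evS] at hl
      obtain ⟨⟨u, hu⟩, ⟨u', hu'⟩⟩ := hl
      refine ⟨⟨(l, u, u'), ?_, hl'⟩, rfl⟩
      rw [LinearMap.mem_ker]
      exact Prod.ext ((mem_ker_resMap S (l, u)).2 hu) ((mem_ker_resMap T (l, u')).2 hu')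
    · exact Nat.card_le_card_of_injective
        (fun v => (⟨v.1, v.2.1⟩ : LinearMap.ker M)) (fun v v' hh => by
          apply Subtype.ext; simpa using hh)
  have hq : 0 < Fintype.card F ^ (2 * a) := pow_pos Fintype.card_pos _
  apply Nat.le_of_mul_le_mul_right _ hq
  have hfr : Module.finrank F (({x // x ∈ S} → F) × ({x // x ∈ T} → F)) = 2 * t + 2 * a := by
    simp [hS, hT]; omega
  have hfr2 : Module.finrank F ((Fin h → F) × (Fin a → F) × (Fin a → F)) = h + 2 * a := by
    simp; omega
  rw [hfr, hfr2] at hk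
  rw [mul_assoc, ← pow_add, ← pow_add, ← hk]
  gcongr

lemma GoodPair.mds [Fintype F] (G : GoodPair A B) (hh : 2 ≤ h) :
    r ≤ Fintype.card F + (a + h) := by
  classical
  have hr := G.hr
  obtain ⟨T, -, hT⟩ := Finset.exists_subset_card_eq (s := (univ : Finset (Fin r))) (n := a + h)
    (by simpa using hr)
  obtain ⟨x, hx, y, hy, hxy⟩ := (Finset.one_lt_card (s := T)).1 (by omega)
  obtain ⟨u, hu⟩ := G.surj T hT.le (Pi.single y 1)
  obtain ⟨v, hv⟩ := G.surj T hT.le (Pi.single x 1)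
  have hu0 : ∀ z ∉ T, cw A B u z ≠ 0 := by
    intro z hz h0
    have hne : u = 0 := by
      apply G.inj (insert z (T.erase y))
      · rw [Finset.card_insert_of_notMem (by simp [hz]), Finset.card_erase_of_mem hy]; omega
      · intro c hc
        rcases Finset.mem_insert.1 hc with rfl | hc
        · exact h0
        · rw [hu c (Finset.mem_of_mem_erase hc), Pi.single_eq_of_ne (Finset.ne_of_mem_erase hc)]
    have := hu y hy
    simp [hne] at this
  have hinj : Set.InjOn (fun z => cw A B v z / cw A B u z) (↑(univ \ T) : Set (Fin r)) := by
    intro z hz z' hz' heq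
    by_contra hzz
    have hz : z ∉ T := by simpa using hz
    have hz' : z' ∉ T := by simpa using hz'
    simp only at heq
    have hw : v - (cw A B v z / cw A B u z) • u = 0 := by
      apply G.inj (insert z (insert z' ((T.erase y).erase x)))
      · rw [Finset.card_insert_of_notMem (by simp [hz, hzz]),
          Finset.card_insert_of_notMem (by simp [hz']),
          Finset.card_erase_of_mem (by simp [hxy, hx]), Finset.card_erase_of_mem hy]; omega
      · intro c hc
        rw [map_sub, map_smul, Pi.sub_apply, Pi.smul_apply, smul_eq_mul]
        rcases Finset.mem_insert.1 hc with rfl | hc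
        · rw [div_mul_cancel₀ _ (hu0 _ hz), sub_self]
        rcases Finset.mem_insert.1 hc with rfl | hc
        · rw [heq, div_mul_cancel₀ _ (hu0 _ hz'), sub_self]
        · have hcx := Finset.ne_of_mem_erase hc
          have hc := Finset.mem_of_mem_erase hc
          rw [hu c (Finset.mem_of_mem_erase hc), hv c (Finset.mem_of_mem_erase hc),
            Pi.single_eq_of_ne (Finset.ne_of_mem_erase hc), Pi.single_eq_of_ne hcx]
          simp
    have h1 : cw A B (v - (cw A B v z / cw A B u z) • u) x = 0 := by rw [hw]; simp
    rw [map_sub, map_smul, Pi.sub_apply, Pi.smul_apply, hu x hx, hv x hx,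
      Pi.single_eq_of_ne hxy] at h1
    simp at h1
  have := Finset.card_le_card_of_injOn (t := (univ : Finset F)) _ (by simp) hinj
  rw [Finset.card_sdiff] at this
  simp [hT] at this
  omega

/-- transversal sets -/
def trS {c0 m b : ℕ} (e : Fin c0 ⊕ (Fin m × Fin b) ↪ Fin r) (f : Fin m → Fin b) :
    Finset (Fin r) :=
  (univ.disjSum (univ.map ⟨fun i => (i, f i), fun _ _ hij => (Prod.mk.inj hij).1⟩)).map e

lemma trS_card {c0 m b : ℕ} (e : Fin c0 ⊕ (Fin m × Fin b) ↪ Fin r) (f : Fin m → Fin b) :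
    (trS e f).card = c0 + m := by
  simp [trS]

lemma trS_inter {c0 m b : ℕ} (e : Fin c0 ⊕ (Fin m × Fin b) ↪ Fin r) (f f' : Fin m → Fin b) :
    (trS e f ∩ trS e f').card = c0 + (univ.filter (fun i => f i = f' i)).card := by
  classical
  have : trS e f ∩ trS e f' = ((univ : Finset (Fin c0)).disjSum
    ((univ.filter (fun i => f i = f' i)).map
      ⟨fun i => (i, f i), fun _ _ hij => (Prod.mk.inj hij).1⟩)).map e := by
    rw [trS, trS, ← Finset.map_inter]
    congr 1
    ext (i | ⟨i, j⟩)
    · simp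
    · simp only [mem_inter, Finset.inr_mem_disjSum, mem_map, mem_univ, true_and,
        mem_filter]
      change ((∃ x, (x, f x) = (i, j)) ∧ ∃ x, (x, f' x) = (i, j)) ↔
        ∃ x, f x = f' x ∧ (x, f x) = (i, j)
      simp only [Prod.mk.injEq]
      constructor
      · rintro ⟨⟨x, rfl, rfl⟩, ⟨y, rfl, hy⟩⟩
        exact ⟨y, hy.symm, rfl, rfl⟩
      · rintro ⟨x, hx, rfl, rfl⟩
        exact ⟨⟨x, rfl, rfl⟩, ⟨x, rfl, hx.symm⟩⟩
  rw [this]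
  simp

lemma GoodPair.main [Fintype F] (G : GoodPair A B) (t b : ℕ) (hb : 0 < b) (ht : 2 * t ≤ h)
    (ha : h ≤ a + 2 * t) (hbr : (a + h) * b ≤ r) (δ : ℝ) (hδ0 : 0 ≤ δ)
    (hδ : ∀ s, 1 ≤ s → s ≤ t →
      (Fintype.card F : ℝ) ^ s ≤ δ * (b : ℝ) ^ (h - t - t + s)) :
    ∃ P : Finset (Fin h → F), (∀ l ∈ P, ∃ S : Finset (Fin r), S.card = a + t ∧ l ∈ evS A B S) ∧
      (Fintype.card F : ℝ) ^ h ≤ (P.card : ℝ) * (1 + 2 ^ (h - t) * δ) := by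
  classical
  set c0 := a + 2 * t - h with hc0
  set m := h - t with hm
  have hle : c0 + m * b ≤ r := by
    refine le_trans ?_ hbr
    have h1 : c0 ≤ a * b := by nlinarith [show c0 ≤ a by omega]
    have h2 : m * b ≤ h * b := Nat.mul_le_mul_right _ (by omega)
    nlinarith
  have hne : Nonempty (Fin c0 ⊕ (Fin m × Fin b) ↪ Fin r) := by
    apply Function.Embedding.nonempty_of_card_le
    simpa using hle
  obtain ⟨e⟩ := hne
  have hS : ∀ f, (trS e f).card = a + t := by intro f; rw [trS_card]; omega
  refine ⟨univ.biUnion (fun f => evS A B (trS e f)), ?_, ?_⟩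
  · intro l hl
    simp only [mem_biUnion, mem_univ, true_and] at hl
    obtain ⟨f, hf⟩ := hl
    exact ⟨_, hS f, hf⟩
  have hcard : Fintype.card (Fin h → F) = Fintype.card F ^ h := by simp
  have hq0 : 0 < Fintype.card F := Fintype.card_pos
  have := second_moment_s6 (Λ := Fin h → F) (t := t) (Fintype.card F : ℝ) δ (by exact_mod_cast hq0) hb
    (by omega : t ≤ m) (fun f => evS A B (trS e f)) ?_ ?_ hδ (by rw [hcard]; positivity) hδ0
  · rw [hcard] at this
    push_cast at this
    exact this
  · intro f
    rw [hcard]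
    exact_mod_cast G.card_evS (trS e f) t (by omega) (hS f)
  · intro f f'
    rw [hcard]
    have hI := trS_inter e f f'
    have hU := Finset.card_union_add_card_inter (trS e f) (trS e f')
    rw [hS, hS, hI] at hU
    set k := (univ.filter (fun i => f i = f' i)).card with hk
    have hkm : k ≤ m := by simpa using Finset.card_le_univ (univ.filter (fun i => f i = f' i))
    by_cases hc : m - t ≤ k
    · have := G.inter_big (trS e f) (trS e f') (2 * t - (k - (m - t))) (by omega) (by omega) (by omega)
      have h2 : 2 * t = (2 * t - (k - (m - t))) + (k - (m - t)) := by omega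
      rw [h2, pow_add, ← mul_assoc]
      gcongr
      exact_mod_cast this
    · have := G.inter_small (trS e f) (trS e f') t (hS f) (hS f') (by omega) (by omega)
      rw [Nat.sub_eq_zero_of_le (by omega), pow_zero, mul_one]
      exact_mod_cast this

end

lemma mr_key_s6 {F : Type} [Field F] {g r a h : ℕ}
    {A : Fin g → Matrix (Fin a) (Fin r) F} {B : Fin g → Matrix (Fin h) (Fin r) F}
    (H : IsMRLRC F g r a h A B) (E : Finset (Fin g × Fin r)) (hE : E.card = a * g + h)
    (hE' : ∀ i : Fin g, a ≤ (E.filter (fun x => x.1 = i)).card)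
    (l : Fin h → F) (u : Fin g → Fin a → F)
    (hz : ∀ x ∈ E, cw (A x.1) (B x.1) (l, u x.1) x.2 = 0) : l = 0 ∧ u = 0 := by
  classical
  have hli := H.2 E hE hE'
  have hsp := hli.span_eq_top_of_card_eq_finrank' (by
    simp [hE, mul_comm])
  let z : (Fin g × Fin a) ⊕ Fin h → F := Sum.elim (fun p => u p.1 p.2) l
  let φ : ((Fin g × Fin a) ⊕ Fin h → F) →ₗ[F] F := Fintype.linearCombination F z
  have hφ : φ = 0 := by
    apply LinearMap.ext_on_range hsp
    rintro ⟨⟨i, c⟩, hc⟩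
    have := hz _ hc
    rw [cw_apply] at this
    simp only [φ, z, Fintype.linearCombination_apply, lrcParityCheck, Fintype.sum_sum_type,
      Fintype.sum_prod_type, Sum.elim_inl, Sum.elim_inr, LinearMap.zero_apply, smul_eq_mul]
    refine Eq.trans ?_ this
    rw [Finset.sum_eq_single i (fun j _ hj => by simp [hj]) (by simp), add_comm]
    simp [Matrix.vecMul, dotProduct, mul_comm]
  have hzz : ∀ ρ, z ρ = 0 := by
    intro ρ
    have := congrArg (fun f => f (Pi.single ρ 1)) hφ
    simpa [φ] using this
  constructor
  · ext j; exact hzz (Sum.inr j)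
  · ext i k; exact hzz (Sum.inl (i, k))

lemma exists_solve {F : Type} [Field F] {r a : ℕ} {A : Matrix (Fin a) (Fin r) F}
    (S : Finset (Fin r)) (hS : S.card = a)
    (hA : LinearIndependent F (fun c : {x // x ∈ S} => fun j : Fin a => A j c.1)) :
    (∀ u : Fin a → F, (∀ c ∈ S, Matrix.vecMulLinear A u c = 0) → u = 0) := by
  classical
  have hsp := hA.span_eq_top_of_card_eq_finrank' (by simp [hS])
  intro u hu
  have hφ : (Fintype.linearCombination F u : (Fin a → F) →ₗ[F] F) = 0 := by
    apply LinearMap.ext_on_range hsp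
    rintro ⟨c, hc⟩
    have := hu c hc
    simpa [Fintype.linearCombination_apply, Matrix.vecMul, dotProduct, mul_comm] using this
  ext j
  have := congrArg (fun f => f (Pi.single j 1)) hφ
  simpa using this

/-- the set of columns with `S i` in group `i` -/
def colSet {g r : ℕ} (S : Fin g → Finset (Fin r)) : Finset (Fin g × Fin r) :=
  univ.filter (fun x => x.2 ∈ S x.1)

lemma colSet_filter {g r : ℕ} (S : Fin g → Finset (Fin r)) (i : Fin g) :
    ((colSet S).filter (fun x => x.1 = i)).card = (S i).card := by
  classical
  have : (colSet S).filter (fun x => x.1 = i) = (S i).map ⟨fun c => (i, c), fun _ _ hij => (Prod.mk.inj hij).2⟩ := by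
    ext ⟨j, c⟩
    simp only [colSet, mem_filter, mem_univ, true_and, mem_map]
    change _ ↔ ∃ x, x ∈ S i ∧ (i, x) = (j, c)
    simp only [Prod.mk.injEq]
    constructor
    · rintro ⟨h1, rfl⟩; exact ⟨c, h1, rfl, rfl⟩
    · rintro ⟨x, h1, rfl, rfl⟩; exact ⟨h1, rfl⟩
  rw [this, Finset.card_map]

lemma colSet_card {g r : ℕ} (S : Fin g → Finset (Fin r)) :
    (colSet S).card = ∑ i, (S i).card := by
  classical
  rw [Finset.card_eq_sum_card_fiberwise (f := Prod.fst) (t := univ) (by simp)]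
  exact Finset.sum_congr rfl fun i _ => colSet_filter S i

lemma mr_good {F : Type} [Field F] {g r a h : ℕ}
    {A : Fin g → Matrix (Fin a) (Fin r) F} {B : Fin g → Matrix (Fin h) (Fin r) F}
    (H : IsMRLRC F g r a h A B) (hr : a + h ≤ r) (i : Fin g) : GoodPair (A i) (B i) := by
  classical
  have hAi : ∀ j, ∀ T : Finset (Fin r), T.card = a → ∀ u,
      (∀ c ∈ T, Matrix.vecMulLinear (A j) u c = 0) → u = 0 :=
    fun j T hT => exists_solve T hT (H.1 j T hT)
  refine ⟨hr, ?_, hAi i⟩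
  rintro T hT ⟨l, v⟩ hv
  obtain ⟨S0, -, hS0⟩ := Finset.exists_subset_card_eq (s := (univ : Finset (Fin r))) (n := a)
    (by simp; omega)
  have hsol : ∀ j, ∃ u, ∀ c ∈ S0, cw (A j) (B j) (l, u) c = 0 := by
    intro j
    obtain ⟨u, hu⟩ := surj_of_inj (Matrix.vecMulLinear (A j)) (by simp) (by omega : a ≤ r) (hAi j) S0
      hS0.le (fun c => - Matrix.vecMul l (B j) c)
    refine ⟨u, fun c hc => ?_⟩
    have := hu c hc
    rw [Matrix.vecMulLinear_apply] at this
    rw [cw_apply, this, add_neg_cancel]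
  choose u hu using hsol
  have hkey := mr_key_s6 H (colSet (fun j => if j = i then T else S0)) ?_ ?_ l (Function.update u i v) ?_
  · have := congrFun hkey.2 i
    simp at this
    rw [hkey.1, this]; rfl
  · rw [colSet_card]
    have : ∀ j, (if j = i then T else S0).card = a + if j = i then h else 0 := by
      intro j; split_ifs <;> simp [hT, hS0]
    simp [this, Finset.sum_add_distrib, mul_comm]
  · intro j
    rw [colSet_filter]
    split_ifs <;> omega
  · rintro ⟨j, c⟩ hx
    simp only [colSet, mem_filter, mem_univ, true_and] at hx
    by_cases hj : j = i
    · subst hj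
      simpa using hv c (by simpa using hx)
    · simp only [Function.update_of_ne hj]
      exact hu j c (by simpa [hj] using hx)

lemma exists_parts (g h t : ℕ) (hgt : h ≤ g * t) :
    ∃ d : Fin g → ℕ, (∀ i, d i ≤ t) ∧ ∑ i, d i = h := by
  induction g generalizing h with
  | zero => exact ⟨fun _ => 0, by simp, by simp at hgt ⊢; omega⟩
  | succ g ih =>
    obtain ⟨d, hd, hs⟩ := ih (h - min h t) (by
      rw [add_mul, one_mul] at hgt; omega)
    refine ⟨Fin.cons (min h t) d, ?_, ?_⟩
    · intro i
      refine Fin.cases ?_ ?_ i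
      · simp
      · intro j; simpa using hd j
    · rw [Fin.sum_univ_succ]; simp [hs]

lemma mr_no_hyper {F : Type} [Field F] [Fintype F] {g r a h t : ℕ}
    {A : Fin g → Matrix (Fin a) (Fin r) F} {B : Fin g → Matrix (Fin h) (Fin r) F}
    (H : IsMRLRC F g r a h A B) (hgt : h ≤ g * t) (l : Fin h → F)
    (hl : ∀ i, ∃ S : Finset (Fin r), S.card = a + t ∧ l ∈ evS (A i) (B i) S) : l = 0 := by
  classical
  obtain ⟨d, hd, hs⟩ := exists_parts g h t hgt
  choose S hS hlS using hl
  have : ∀ i, ∃ S' ⊆ S i, S'.card = a + d i := fun i =>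
    Finset.exists_subset_card_eq (by rw [hS]; have := hd i; omega)
  choose S' hS' hc using this
  simp only [mem_evS] at hlS
  choose u hu using hlS
  refine (mr_key_s6 H (colSet S') ?_ ?_ l u ?_).1
  · rw [colSet_card]
    simp [hc, Finset.sum_add_distrib, hs, mul_comm]
  · intro i
    rw [colSet_filter, hc]; omega
  · rintro ⟨i, c⟩ hx
    simp only [colSet, mem_filter, mem_univ, true_and] at hx
    exact hu i c (hS' i hx)

lemma union_bound {Λ : Type} [Fintype Λ] [DecidableEq Λ] {g : ℕ} (P : Fin g → Finset Λ)
    (l0 : Λ) (η : ℝ) (hη : 0 ≤ η) (hη' : g * η < 1 / 2) (hΛ : 2 ≤ Fintype.card Λ)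
    (hP : ∀ i, (Fintype.card Λ : ℝ) ≤ (P i).card * (1 + η)) :
    ∃ l, l ≠ l0 ∧ ∀ i, l ∈ P i := by
  by_contra hcon
  push Not at hcon
  have hsub : (univ : Finset Λ) ⊆ insert l0 (univ.biUnion fun i => (P i)ᶜ) := by
    intro l _
    by_cases h : l = l0
    · simp [h]
    · obtain ⟨i, hi⟩ := hcon l h
      simp only [mem_insert, mem_biUnion, mem_univ, true_and, mem_compl]
      exact Or.inr ⟨i, hi⟩
  have h1 : Fintype.card Λ ≤ (∑ i, (P i)ᶜ.card) + 1 := by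
    refine (Finset.card_le_card hsub).trans ((Finset.card_insert_le _ _).trans ?_)
    gcongr
    exact Finset.card_biUnion_le
  have h2 : ∀ i, ((P i)ᶜ.card : ℝ) ≤ η * Fintype.card Λ := by
    intro i
    have e : ((P i)ᶜ.card : ℝ) + (P i).card = Fintype.card Λ := by
      exact_mod_cast Finset.card_compl_add_card (P i)
    have := hP i
    have : ((P i).card : ℝ) ≤ Fintype.card Λ := by exact_mod_cast Finset.card_le_univ _
    nlinarith
  have h3 : (Fintype.card Λ : ℝ) ≤ (∑ i, ((P i)ᶜ.card : ℝ)) + 1 := by exact_mod_cast h1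
  have h4 : (∑ i, ((P i)ᶜ.card : ℝ)) ≤ g * (η * Fintype.card Λ) := by
    refine (Finset.sum_le_sum fun i _ => h2 i).trans ?_
    simp
  have h5 : (2 : ℝ) ≤ Fintype.card Λ := by exact_mod_cast hΛ
  nlinarith

/-- **Proposition A.2.** Fix `a ≥ 0` and `h ≥ g ≥ 2` with `a ≥ h - 2⌈h/g⌉`. There is a
constant `c > 0` (depending only on `a, g, h`) such that every maximally recoverable
`(n, n/g, h, a, q)`-LRC with `g` local groups each of size `r = n/g` satisfies
`q ≥ c · n^(h/⌈h/g⌉ - 1)`.  (Here `⌈h/g⌉ = (h + g - 1) / g` in natural division.) -/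
theorem mrlrc_field_size_lower_bound_few_groups_large_a
    (a g h : ℕ) (hg : 2 ≤ g) (hgh : g ≤ h)
    (ha : (h : ℤ) - 2 * (((h + g - 1) / g : ℕ) : ℤ) ≤ (a : ℤ)) :
    ∃ c : ℝ, 0 < c ∧
      ∀ q n : ℕ, IsPrimePow q → g ∣ n →
        ExistsMRLRC g (n / g) h a q →
        c * (n : ℝ) ^ ((h : ℝ) / (((h + g - 1) / g : ℕ) : ℝ) - 1) ≤ (q : ℝ) := by
  classical
  set t := (h + g - 1) / g with ht
  have ht1 : 1 ≤ t := by
    rw [ht, Nat.le_div_iff_mul_le (by omega)]; omega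
  have hgt : h ≤ g * t := by
    have h1 := Nat.div_add_mod (h + g - 1) g
    have h2 := Nat.mod_lt (h + g - 1) (show 0 < g by omega)
    rw [← ht] at h1
    omega
  have hth : t ≤ h := by
    have h1 : g * t ≤ h + g - 1 := Nat.mul_div_le _ _
    by_contra hc
    have : h + 1 ≤ t := by omega
    nlinarith [show h + g - 1 + 1 = h + g by omega]
  have ha' : h ≤ a + 2 * t := by omega
  set β : ℝ := (h : ℝ) / (t : ℝ) - 1 with hβ
  have htR : (0:ℝ) < t := by exact_mod_cast ht1
  have hβt : β * t = h - t := by rw [hβ]; field_simp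
  have hβ0 : 0 ≤ β := by
    have : (t:ℝ) ≤ h := by exact_mod_cast hth
    rw [hβ, sub_nonneg, le_div_iff₀ htR]; linarith
  set δ : ℝ := 1 / (4 * g * 2 ^ (h - t)) with hδ
  have hgR : (2:ℝ) ≤ g := by exact_mod_cast hg
  have hδ0 : 0 < δ := by positivity
  have hpow : (1:ℝ) ≤ 2 ^ (h - t) := one_le_pow₀ (by norm_num)
  have hδ1 : δ ≤ 1 / 4 := by
    rw [hδ]
    apply one_div_le_one_div_of_le (by norm_num)
    nlinarith
  set K : ℝ := 2 * g * (a + h) with hK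
  have hhR : (2:ℝ) ≤ h := by exact_mod_cast hg.trans hgh
  have haR : (0:ℝ) ≤ a := by positivity
  have hK0 : 0 < K := by positivity
  refine ⟨δ / K ^ β, by positivity, ?_⟩
  rintro q n hq ⟨r, rfl⟩ hex
  rw [Nat.mul_div_cancel_left r (by omega)] at hex
  obtain ⟨F, _, _, hFq, A, B, H⟩ := hex
  have hq2 : 2 ≤ q := hq.two_le
  have hq1 : (1:ℝ) ≤ q := by exact_mod_cast (by omega : 1 ≤ q)
  have hred : ∀ b : ℝ, 0 ≤ b → ((g * r : ℕ) : ℝ) ≤ K * b →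
      δ / K ^ β * ((g * r : ℕ) : ℝ) ^ β ≤ δ * b ^ β := by
    intro b hb hle
    calc _ ≤ δ / K ^ β * (K * b) ^ β := by gcongr
      _ = _ := by rw [Real.mul_rpow hK0.le hb]; field_simp
  by_cases hr : a + h ≤ r
  swap
  · refine (hred 1 zero_le_one ?_).trans ?_
    · push_cast
      have : (r:ℝ) ≤ a + h := by exact_mod_cast (by omega : r ≤ a + h)
      rw [hK]; nlinarith
    · rw [Real.one_rpow]; linarith
  set b := r / (a + h) with hb
  have hb1 : 1 ≤ b := by rw [hb, Nat.le_div_iff_mul_le (by omega)]; omega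
  have hbr : (a + h) * b ≤ r := Nat.mul_div_le _ _
  have hb1R : (1:ℝ) ≤ b := by exact_mod_cast hb1
  have hrb : r ≤ 2 * ((a + h) * b) := by
    have h1 := Nat.div_add_mod r (a + h)
    have h2 := Nat.mod_lt r (show 0 < a + h by omega)
    rw [← hb] at h1
    nlinarith
  refine (hred b (by positivity) ?_).trans ?_
  · have : (r:ℝ) ≤ 2 * ((a + h) * b) := by exact_mod_cast hrb
    push_cast
    rw [hK]; nlinarith
  by_contra! hlt
  by_cases h2t : 2 * t ≤ h
  swap
  · -- MDS bound
    have hm := (mr_good H hr ⟨0, by omega⟩).mds (by omega)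
    rw [hFq] at hm
    have hβ1 : β ≤ 1 := by
      have : (h:ℝ) ≤ 2 * t := by exact_mod_cast (by omega : h ≤ 2 * t)
      rw [hβ, sub_le_iff_le_add, div_le_iff₀ htR]; linarith
    have h1 : (b:ℝ) ^ β ≤ b := by
      calc (b:ℝ) ^ β ≤ (b:ℝ) ^ (1:ℝ) := Real.rpow_le_rpow_of_exponent_le hb1R hβ1
        _ = b := Real.rpow_one _
    have h2 : (q:ℝ) < 1 / 4 * b := by
      calc (q:ℝ) < δ * (b:ℝ) ^ β := hlt
        _ ≤ 1 / 4 * b := by gcongr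
    have h3 : 4 * q < b := by
      have : (4 * q : ℝ) < b := by linarith
      exact_mod_cast this
    nlinarith
  · have hpw : ∀ s, 1 ≤ s → s ≤ t →
        (Fintype.card F : ℝ) ^ s ≤ δ * (b : ℝ) ^ (h - t - t + s) := by
      intro s hs1 hst
      rw [hFq]
      calc (q:ℝ) ^ s ≤ (δ * (b:ℝ) ^ β) ^ s := by gcongr
        _ = δ ^ s * (b:ℝ) ^ (β * s) := by rw [mul_pow, Real.rpow_mul_natCast (by positivity)]
        _ ≤ δ * (b:ℝ) ^ (((h - t - t + s : ℕ)) : ℝ) := by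
          gcongr
          · exact pow_le_of_le_one hδ0.le (by linarith) (by omega)
          · have hst' : (s:ℝ) ≤ t := by exact_mod_cast hst
            have h2t' : (2:ℝ) * t ≤ h := by exact_mod_cast h2t
            have hβ1 : 1 ≤ β := by
              rw [hβ, le_sub_iff_add_le, le_div_iff₀ htR]; linarith
            rw [show h - t - t + s = h - 2 * t + s by omega]
            rw [Nat.cast_add, Nat.cast_sub h2t]
            push_cast
            nlinarith
        _ = _ := by rw [Real.rpow_natCast]
    have hmain := fun i => (mr_good H hr i).main t b (by omega) h2t ha' hbr δ hδ0.le hpw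
    choose P hP1 hP2 using hmain
    have hcard : Fintype.card (Fin h → F) = q ^ h := by simp [hFq]
    obtain ⟨l, hl0, hl⟩ := union_bound P 0 (2 ^ (h - t) * δ) (by positivity) (by
        rw [hδ]; field_simp; norm_num) (by
        rw [hcard]
        calc 2 ≤ q := hq2
          _ ≤ q ^ h := Nat.le_self_pow (by omega) q) (by
        intro i
        have := hP2 i
        rw [hFq] at this
        rw [hcard]
        push_cast
        exact this)
    exact hl0 (mr_no_hyper H hgt l fun i => hP1 i l (hl i))
end

section
/- Let F be a field, let a ≥ 0 and h ≥ 1 be integers, let C_1,…,C_h be a×(a+1) matrices over F, and let D_1,…,D_h be h×(a+1) matrices over F, with D_i^{(j)} denoting the j-th row of D_i. Then the determinant of the (ah+h)×(ah+h) block matrix whose first ah rows contain C_1,…,C_h in block-diagonal position and whose last h rows are [D_1 | D_2 | ⋯ | D_h] equals (−1)^{ah(h−1)/2} times the determinant of the h×h matrix whose (j, i) entry is det of the (a+1)×(a+1) matrix obtained by appending the row D_i^{(j)} below C_i. -/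
namespace HeavyRows

open Matrix

/-- The block matrix on its natural index types. -/
def bigM {F : Type} [Field F] {a h : ℕ}
    (C : Fin h → Matrix (Fin a) (Fin (a + 1)) F)
    (D : Fin h → Matrix (Fin h) (Fin (a + 1)) F) :
    Matrix ((Fin h × Fin a) ⊕ Fin h) (Fin h × Fin (a + 1)) F :=
  Matrix.of fun (ρ : (Fin h × Fin a) ⊕ Fin h) (c : Fin h × Fin (a + 1)) =>
          Sum.elim (fun p : Fin h × Fin a => if p.1 = c.1 then C p.1 p.2 c.2 else 0)
            (fun j : Fin h => D c.1 j c.2) ρ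

/-- Row `inl (i,k)` goes to `(i, k)`, row `inr j` to `(j, last)`. -/
def eFun (a h : ℕ) : (Fin h × Fin a) ⊕ Fin h → Fin h × Fin (a + 1) :=
  Sum.elim (fun p => (p.1, p.2.castSucc)) (fun j => (j, Fin.last a))

theorem eFun_bij (a h : ℕ) : Function.Bijective (eFun a h) := by
  constructor
  · rintro (⟨i, k⟩ | j) (⟨i', k'⟩ | j') hx
    · simpa [eFun] using hx
    · exact absurd (congrArg Prod.snd hx) (Fin.castSucc_lt_last k).ne
    · exact absurd (congrArg Prod.snd hx) (Fin.castSucc_lt_last k').ne'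
    · simpa [eFun] using hx
  · rintro ⟨i, k⟩
    induction k using Fin.lastCases with
    | last => exact ⟨Sum.inr i, rfl⟩
    | cast k => exact ⟨Sum.inl (i, k), rfl⟩

noncomputable def eEq (a h : ℕ) : (Fin h × Fin a) ⊕ Fin h ≃ Fin h × Fin (a + 1) :=
  Equiv.ofBijective _ (eFun_bij a h)

@[simp] theorem eEq_inl (a h : ℕ) (i : Fin h) (k : Fin a) :
    eEq a h (Sum.inl (i, k)) = (i, k.castSucc) := rfl

@[simp] theorem eEq_inr (a h : ℕ) (i : Fin h) :
    eEq a h (Sum.inr i) = (i, Fin.last a) := rfl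

/-- `C` with the row `d` appended. -/
abbrev app {F : Type} [Field F] {a : ℕ} (C : Matrix (Fin a) (Fin (a + 1)) F)
    (d : Fin (a + 1) → F) : Matrix (Fin (a + 1)) (Fin (a + 1)) F :=
  Matrix.of (Fin.snoc (fun k : Fin a => C k) d : Fin (a + 1) → Fin (a + 1) → F)

theorem app_castSucc {F : Type} [Field F] {a : ℕ} (C : Matrix (Fin a) (Fin (a + 1)) F)
    (d : Fin (a + 1) → F) (k : Fin a) (l) : app C d k.castSucc l = C k l := by
  simp [app]

theorem app_last {F : Type} [Field F] {a : ℕ} (C : Matrix (Fin a) (Fin (a + 1)) F)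
    (d : Fin (a + 1) → F) (l) : app C d (Fin.last a) l = d l := by
  simp [app]

theorem app_update {F : Type} [Field F] {a : ℕ} (C : Matrix (Fin a) (Fin (a + 1)) F)
    (d b : Fin (a + 1) → F) : (app C d).updateRow (Fin.last a) b = app C b := by
  ext k l
  induction k using Fin.lastCases with
  | last => rw [app_last, updateRow_self]
  | cast k => rw [updateRow_ne (Fin.castSucc_lt_last k).ne, app_castSucc, app_castSucc]

theorem sum_adj {F : Type} [Field F] {a : ℕ} (C : Matrix (Fin a) (Fin (a + 1)) F)
    (d b : Fin (a + 1) → F) :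
    ∑ m, b m * (app C d).adjugate m (Fin.last a) = (app C b).det := by
  rw [← app_update C d b, ← cramer_transpose_apply, cramer_eq_adjugate_mulVec,
    ← adjugate_transpose]
  simp [mulVec, dotProduct, mul_comm]

theorem C_mul_inv {F : Type} [Field F] {a : ℕ} (C : Matrix (Fin a) (Fin (a + 1)) F)
    (d : Fin (a + 1) → F) (hd : (app C d).det ≠ 0) (k : Fin a) (l : Fin (a + 1)) :
    ∑ m, C k m * (app C d)⁻¹ m l = if k.castSucc = l then 1 else 0 := by
  have := congrFun (congrFun (mul_nonsing_inv (app C d) (isUnit_iff_ne_zero.2 hd)) k.castSucc) l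
  rw [mul_apply, one_apply] at this
  simpa only [app_castSucc] using this

theorem row_mul_inv {F : Type} [Field F] {a : ℕ} (C : Matrix (Fin a) (Fin (a + 1)) F)
    (d b : Fin (a + 1) → F) :
    ∑ m, b m * (app C d)⁻¹ m (Fin.last a) = (app C d).det⁻¹ * (app C b).det := by
  rw [← sum_adj C d b, Finset.mul_sum, inv_def]
  refine Finset.sum_congr rfl fun m _ => ?_
  rw [Matrix.smul_apply, Ring.inverse_eq_inv', smul_eq_mul]
  ring

theorem sum_delta {F : Type} [Field F] {a h : ℕ} (f : Fin h → Fin (a+1) → F) (i : Fin h)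
    (g : Fin h → Fin (a+1) → F) :
    ∑ x : Fin h × Fin (a + 1), f x.1 x.2 * (if x.1 = i then g x.1 x.2 else 0)
      = ∑ m, f i m * g i m := by
  rw [Fintype.sum_prod_type, Finset.sum_eq_single i]
  · simp
  · intro j _ hj
    simp [hj]
  · simp

theorem core_nondeg {F : Type} [Field F] {a h : ℕ}
    (C : Fin h → Matrix (Fin a) (Fin (a + 1)) F)
    (D : Fin h → Matrix (Fin h) (Fin (a + 1)) F)
    (d : Fin h → Fin (a + 1) → F) (hd : ∀ i, (app (C i) (d i)).det ≠ 0) :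
    ((bigM C D).submatrix id (eEq a h)).det =
      (Matrix.of fun j i : Fin h => (app (C i) (D i j)).det).det := by
  set Q : Matrix (Fin h × Fin (a + 1)) (Fin h × Fin (a + 1)) F :=
    (blockDiagonal fun i => (app (C i) (d i))⁻¹).submatrix (Equiv.prodComm _ _)
      (Equiv.prodComm _ _) with hQ
  have hQa : ∀ x y, Q x y = if x.1 = y.1 then (app (C x.1) (d x.1))⁻¹ x.2 y.2 else 0 := by
    rintro ⟨i, k⟩ ⟨i', k'⟩
    simp [hQ, blockDiagonal_apply]
  have hQdet : Q.det = ∏ i, (app (C i) (d i)).det⁻¹ := by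
    rw [hQ, det_submatrix_equiv_self, det_blockDiagonal]
    simp [det_nonsing_inv]
  have hprod : ((bigM C D) * Q).submatrix id (eEq a h) =
      fromBlocks 1 0
        (of fun j p => ((bigM C D) * Q) (Sum.inr j) (eEq a h (Sum.inl p)))
        (of fun j i => (app (C i) (d i)).det⁻¹ * (of fun j i : Fin h => (app (C i) (D i j)).det) j i) := by
    have hl : ∀ i k i' l, ((bigM C D) * Q) (Sum.inl (i, k)) (i', l) =
        if i = i' then (if k.castSucc = l then 1 else 0) else 0 := by
      intro i k i' l
      rw [mul_apply]
      simp only [hQa]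
      rw [sum_delta (fun x y => bigM C D (Sum.inl (i, k)) (x, y)) i'
        (fun x y => (app (C x) (d x))⁻¹ y l)]
      by_cases hi : i = i'
      · subst hi
        simp only [bigM, of_apply, Sum.elim_inl, if_true]
        exact C_mul_inv _ _ (hd i) k l
      · simp [bigM, hi]
    ext (⟨i, k⟩ | j) (⟨i', k'⟩ | j')
    · simp only [submatrix_apply, id, eEq_inl, hl, fromBlocks_apply₁₁, one_apply, Prod.mk.injEq,
        Fin.castSucc_inj]
      split_ifs <;> simp_all
    · simp only [submatrix_apply, id, eEq_inr, hl, fromBlocks_apply₁₂, Matrix.zero_apply]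
      simp [(Fin.castSucc_lt_last k).ne]
    · rfl
    · simp only [submatrix_apply, id, eEq_inr, fromBlocks_apply₂₂, of_apply]
      rw [mul_apply]
      simp only [hQa]
      rw [sum_delta (fun x y => bigM C D (Sum.inr j) (x, y)) j'
        (fun x y => (app (C x) (d x))⁻¹ y (Fin.last a))]
      exact row_mul_inv _ _ _
  have h1 : (((bigM C D) * Q).submatrix id (eEq a h)).det =
      ((bigM C D).submatrix id (eEq a h)).det * Q.det := by
    rw [← det_submatrix_equiv_self (eEq a h) Q, ← det_mul, submatrix_mul_equiv]
  rw [hprod, det_fromBlocks_zero₁₂, det_one, one_mul, det_mul_row, hQdet, mul_comm] at h1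
  have hne : (∏ i, (app (C i) (d i)).det⁻¹) ≠ 0 :=
    Finset.prod_ne_zero_iff.2 fun i _ => inv_ne_zero (hd i)
  exact (mul_right_cancel₀ hne h1).symm

theorem core {F : Type} [Field F] {a h : ℕ}
    (C : Fin h → Matrix (Fin a) (Fin (a + 1)) F)
    (D : Fin h → Matrix (Fin h) (Fin (a + 1)) F) :
    ((bigM C D).submatrix id (eEq a h)).det =
      (Matrix.of fun j i : Fin h => (app (C i) (D i j)).det).det := by
  by_cases hd : ∀ i, ∃ d, (app (C i) d).det ≠ 0
  · choose d hd using hd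
    exact core_nondeg C D d hd
  · push Not at hd
    obtain ⟨i, hi⟩ := hd
    rw [det_eq_zero_of_column_eq_zero (A := of fun j i : Fin h => (app (C i) (D i j)).det) i
      (fun j => hi _)]
    have hdep : ¬ LinearIndependent F (fun k => C i k) := by
      intro hli
      obtain ⟨x, hx⟩ := exists_linearIndependent_snoc_of_lt_finrank (R := F) hli (by simp)
      have : LinearIndependent F (app (C i) x).row := hx
      rw [linearIndependent_rows_iff_isUnit, isUnit_iff_isUnit_det] at this
      exact this.ne_zero (hi x)
    rw [Fintype.linearIndependent_iff] at hdep
    push Not at hdep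
    obtain ⟨g, hg, k, hk⟩ := hdep
    refine exists_vecMul_eq_zero_iff.1
      ⟨Sum.elim (fun p => if p.1 = i then g p.2 else 0) (fun _ => 0), ?_, ?_⟩
    · intro h0
      have := congrFun h0 (Sum.inl (i, k))
      simp at this
      exact hk this
    · ext y
      simp only [vecMul, dotProduct, Fintype.sum_sum_type, Sum.elim_inl, Sum.elim_inr, zero_mul,
        Finset.sum_const_zero, add_zero, Fintype.sum_prod_type, submatrix_apply, id, Pi.zero_apply]
      rw [Finset.sum_eq_single i]
      · have h2 := congrFun hg (eEq a h y).2
        simp only [Finset.sum_apply, Pi.smul_apply, smul_eq_mul, Pi.zero_apply] at h2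
        by_cases hy : i = (eEq a h y).1
        · simpa [bigM, ← hy] using h2
        · simp [bigM, hy]
      · intro j _ hj
        simp [hj]
      · simp

theorem sign_lemma {a h N : ℕ} (r s : (Fin h × Fin a) ⊕ Fin h ≃ Fin N)
    (r1 : ∀ i k, (r (Sum.inl (i, k)) : ℕ) = k + a * i)
    (r2 : ∀ j, (r (Sum.inr j) : ℕ) = h * a + j)
    (s1 : ∀ i k, (s (Sum.inl (i, k)) : ℕ) = k + (a + 1) * i)
    (s2 : ∀ j, (s (Sum.inr j) : ℕ) = a + (a + 1) * j) :
    Equiv.Perm.sign (r.symm.trans s) = (-1) ^ (a * h * (h - 1) / 2) := by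
  have hkey : ∀ (n : ℕ) (i i' : Fin h) (k k' : ℕ), k < n → k' < n →
      (k + n * i < k' + n * i' ↔ (i < i' ∨ i = i' ∧ k < k')) := by
    intro n i i' k k' hk hk'
    rcases lt_trichotomy i i' with hlt | rfl | hlt
    · have : n * ((i : ℕ) + 1) ≤ n * i' := Nat.mul_le_mul_left _ hlt
      simp only [hlt, true_or, iff_true]
      rw [mul_add] at this; omega
    · simp
    · have : n * ((i' : ℕ) + 1) ≤ n * i := Nat.mul_le_mul_left _ hlt
      simp only [hlt.not_gt, hlt.ne', false_and, or_false, iff_false]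
      rw [mul_add] at this; omega
  have hr : ∀ (i : Fin h) (k : Fin a) (j : Fin h), (k : ℕ) + a * i < h * a + j := by
    intro i k j
    have : a * ((i : ℕ) + 1) ≤ a * h := Nat.mul_le_mul_left _ i.2
    rw [mul_add, mul_comm a h] at this
    have := k.2
    omega
  rw [Equiv.Perm.sign_eq_prod_prod_Ioi]
  have e1 : ∀ x : Fin N, ∏ y ∈ Finset.Ioi x,
        (if (r.symm.trans s) x < (r.symm.trans s) y then (1 : ℤˣ) else -1)
      = ∏ y : Fin N, if x < y then (if s (r.symm x) < s (r.symm y) then 1 else -1) else 1 := by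
    intro x
    rw [← Finset.prod_filter]
    refine Finset.prod_congr ?_ fun _ _ => rfl
    ext; simp
  simp only [e1]
  rw [← Equiv.prod_comp r]
  have e2 : ∀ x, (∏ y : Fin N, if r x < y then
      (if s (r.symm (r x)) < s (r.symm y) then (1 : ℤˣ) else -1) else 1)
      = ∏ y, if r x < r y then (if s x < s y then 1 else -1) else 1 := by
    intro x
    rw [← Equiv.prod_comp r]
    simp
  simp only [e2, Fintype.prod_sum_type, Fintype.prod_prod_type]
  have f1 : ∀ i k i' k', (if r (Sum.inl (i, k)) < r (Sum.inl (i', k')) then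
      (if s (Sum.inl (i, k)) < s (Sum.inl (i', k')) then (1 : ℤˣ) else -1) else 1) = 1 := by
    intro i k i' k'
    simp only [Fin.lt_def, r1, s1]
    have A := hkey a i i' k k' k.2 k'.2
    have B := hkey (a + 1) i i' k k' (by omega) (by omega)
    simp only [A.trans B.symm]
    split_ifs <;> rfl
  have f2 : ∀ j j', (if r (Sum.inr j) < r (Sum.inr j') then
      (if s (Sum.inr j) < s (Sum.inr j') then (1 : ℤˣ) else -1) else 1) = 1 := by
    intro j j'
    have B := hkey (a + 1) j j' a a (by omega) (by omega)
    simp only [Fin.lt_def, r2, s2]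
    simp only [B]
    simp only [add_lt_add_iff_left, lt_irrefl, and_false, or_false, Fin.lt_def]
    split_ifs <;> rfl
  have f3 : ∀ j i k, (if r (Sum.inr j) < r (Sum.inl (i, k)) then
      (if s (Sum.inr j) < s (Sum.inl (i, k)) then (1 : ℤˣ) else -1) else 1) = 1 := by
    intro j i k
    rw [if_neg]
    simp only [Fin.lt_def, r1, r2]
    exact (hr i k j).not_gt
  have f4 : ∀ i k j, (if r (Sum.inl (i, k)) < r (Sum.inr j) then
      (if s (Sum.inl (i, k)) < s (Sum.inr j) then (1 : ℤˣ) else -1) else 1)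
      = if j < i then -1 else 1 := by
    intro i k j
    rw [if_pos (by simp only [Fin.lt_def, r1, r2]; exact hr i k j)]
    have B := hkey (a + 1) i j k a (by omega) (by omega)
    simp only [Fin.lt_def (a := s _), s1, s2, B, k.2, and_true]
    simp only [← Fin.lt_def, ← le_iff_lt_or_eq, ← not_lt]
    split_ifs <;> rfl
  simp only [f1, f2, f3, f4, Finset.prod_const_one, mul_one, one_mul]
  have g : ∀ i : Fin h, (∏ j : Fin h, if j < i then (-1 : ℤˣ) else 1) = (-1) ^ (i : ℕ) := by
    intro i
    rw [← Finset.prod_filter, Finset.prod_const]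
    congr 1
    have : Finset.univ.filter (fun j => j < i) = Finset.Iio i := by ext; simp
    rw [this, Fin.card_Iio]
  simp only [g, Finset.prod_const, Finset.card_univ, Fintype.card_fin]
  rw [Finset.prod_pow, Finset.prod_pow_eq_pow_sum, ← pow_mul, Fin.sum_univ_eq_sum_range (fun i => i),
    Finset.sum_range_id, mul_assoc, Nat.mul_div_assoc _ (Nat.even_mul_pred_self h).two_dvd, mul_comm]

end HeavyRows

/-- **Lemma 4.1 (determinantal identity).** For `a × (a+1)` matrices `C 1, …, C h` and
`h × (a+1)` matrices `D 1, …, D h`, the determinant of the `(ah+h) × (ah+h)` block matrix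
with `C 1, …, C h` in block-diagonal position (row block `i` of height `a`, column block
`i` of width `a+1`) and last `h` rows `[D 1 | ⋯ | D h]` equals `(-1)^(ah(h-1)/2)` times the
determinant of the `h × h` matrix whose `(j, i)` entry is `det [C i; (D i)^(j)]`, the
determinant of `C i` with the `j`-th row of `D i` appended at the bottom. -/
theorem det_blockdiag_with_heavy_rows
    (F : Type) [Field F] (a h : ℕ) (hh : 1 ≤ h)
    (C : Fin h → Matrix (Fin a) (Fin (a + 1)) F)
    (D : Fin h → Matrix (Fin h) (Fin (a + 1)) F) :
    (((Matrix.of fun (ρ : (Fin h × Fin a) ⊕ Fin h) (c : Fin h × Fin (a + 1)) =>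
          Sum.elim (fun p : Fin h × Fin a => if p.1 = c.1 then C p.1 p.2 c.2 else 0)
            (fun j : Fin h => D c.1 j c.2) ρ)).submatrix
        (((Equiv.sumCongr finProdFinEquiv (Equiv.refl (Fin h))).trans
            (finSumFinEquiv.trans (finCongr (by ring)))).symm :
          Fin (a * h + h) ≃ (Fin h × Fin a) ⊕ Fin h)
        ((finProdFinEquiv.trans (finCongr (by ring))).symm :
          Fin (a * h + h) ≃ Fin h × Fin (a + 1))).det
      = (-1 : F) ^ (a * h * (h - 1) / 2) *
        (Matrix.of fun j i : Fin h =>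
          (Matrix.of (Fin.snoc (fun k : Fin a => C i k) (D i j)) :
            Matrix (Fin (a + 1)) (Fin (a + 1)) F).det).det := by
  set r0 : (Fin h × Fin a) ⊕ Fin h ≃ Fin (a * h + h) :=
    (Equiv.sumCongr finProdFinEquiv (Equiv.refl (Fin h))).trans
            (finSumFinEquiv.trans (finCongr (by ring))) with hr0
  set c0 : Fin h × Fin (a + 1) ≃ Fin (a * h + h) :=
    finProdFinEquiv.trans (finCongr (by ring)) with hc0
  have hs := HeavyRows.sign_lemma r0 ((HeavyRows.eEq a h).trans c0)
    (by intro i k; simp [hr0]) (by intro j; simp [hr0, mul_comm])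
    (by intro i k; simp [hc0]) (by intro j; simp [hc0])
  have hM : (HeavyRows.bigM C D).submatrix r0.symm c0.symm =
      (((HeavyRows.bigM C D).submatrix id (HeavyRows.eEq a h)).submatrix
        ((HeavyRows.eEq a h).trans c0).symm ((HeavyRows.eEq a h).trans c0).symm).submatrix
        (r0.symm.trans ((HeavyRows.eEq a h).trans c0)) id := by
    ext x y
    simp
  change ((HeavyRows.bigM C D).submatrix r0.symm c0.symm).det = _
  rw [hM, Matrix.det_permute, Matrix.det_submatrix_equiv_self, HeavyRows.core, hs]
  simp
end
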